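/- arXiv:1301.7215 — 4 statements merged into one kernel-verified Lean document; each statement's English description precedes it below -/
import Mathlib

section
/- Let n ≥ 2 and 0 ≤ k ≤ n−1. For every polynomial f ∈ MvPolynomial (Fin n × Fin n) ℂ, if f vanishes at every orthogonally diagonalizable symmetric matrix A ∈ Matrix (Fin n) (Fin n) ℂ that is k-degenerate, then f vanishes at every k-degenerate symmetric matrix A ∈ Matrix (Fin n) (Fin n) ℂ. (I.e., the orthogonally diagonalizable matrices form a Zariski dense subset of the variety of k-degenerate complex symmetric n×n matrices.) -/
open Matrix

/-!
A symmetric matrix `A` is self-adjoint for the dot product, so `Kⁿ` is an orthogonal sum of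
Jordan chains `v₀, …, v_d` of `A` whose Gram matrices are antidiagonal. Let `E` act on such a chain
as multiplication by `d`, and let `F v_j = j (d + 1 - j) v_{j-1}` be the lowering operator of the
`(d + 1)`-dimensional representation of `sl₂`. Both are symmetric, and on a chain with eigenvalue
`c` the matrix `A + t E + t² F` is a Kac matrix, with eigenvalues `c + 2 t l` for `l = 0, …, d`.
Hence along this curve the degree of the minimal polynomial does not increase, and for all but
finitely many `t` the minimal polynomial is squarefree, which for a symmetric matrix means
orthogonal diagonalizability. A polynomial restricted to the curve is a polynomial in `t`; if it
has infinitely many zeros, it vanishes at `t = 0`.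
-/

section

open Module Polynomial

section SelfAdjoint

variable {R V : Type*} [CommRing R] [AddCommGroup V] [Module R V]
  {b : LinearMap.BilinForm R V} {A : End R V}

theorem isSelfAdjoint_pow (hA : b.IsSelfAdjoint A) (n : ℕ) : b.IsSelfAdjoint ⇑(A ^ n) := by
  induction n with
  | zero => exact LinearMap.isAdjointPair_id
  | succ n ih =>
    have h := hA.mul ih
    rwa [← pow_succ, ← pow_succ'] at h

theorem isSelfAdjoint_aeval (hA : b.IsSelfAdjoint A) (p : R[X]) :
    b.IsSelfAdjoint ⇑(aeval A p) := by
  induction p using Polynomial.induction_on' with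
  | add p q hp hq => rw [map_add]; exact hp.add hq
  | monomial n a =>
    rw [← smul_X_eq_monomial, map_smul, map_pow, aeval_X]
    exact (isSelfAdjoint_pow hA n).smul a

theorem form_pow_pow (hA : b.IsSelfAdjoint A) (i j : ℕ) (x y : V) :
    b ((A ^ i) x) ((A ^ j) y) = b ((A ^ (i + j)) x) y := by
  rw [← isSelfAdjoint_pow hA j, add_comm, pow_add, End.mul_apply]

theorem form_pow_add_smul_pow (hA : b.IsSelfAdjoint A) (a : R) (k m : ℕ) (u : V) :
    b ((A ^ k) (u + a • (A ^ m) u)) (u + a • (A ^ m) u) =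
      b ((A ^ k) u) u + 2 * a * b ((A ^ (k + m)) u) u + a ^ 2 * b ((A ^ (k + m + m)) u) u := by
  have hcross : b ((A ^ k) ((A ^ m) u)) u = b ((A ^ (k + m)) u) u := by
    rw [← End.mul_apply, ← pow_add]
  have hright : b ((A ^ k) u) ((A ^ m) u) = b ((A ^ (k + m)) u) u := form_pow_pow hA ..
  have hboth : b ((A ^ k) ((A ^ m) u)) ((A ^ m) u) = b ((A ^ (k + m + m)) u) u := by
    rw [← End.mul_apply, ← pow_add, form_pow_pow hA]
  simp only [map_add, map_smul, LinearMap.add_apply, LinearMap.smul_apply, smul_eq_mul,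
    hcross, hright, hboth]
  ring

theorem eq_zero_of_pow_apply_eq_zero {A : End R V} {u : V} {m k : ℕ} (h : (A ^ m) u = 0)
    (hmk : m ≤ k) : (A ^ k) u = 0 := by
  obtain ⟨l, rfl⟩ := Nat.exists_eq_add_of_le' hmk
  rw [pow_add, End.mul_apply, h, map_zero]

end SelfAdjoint

section Restrict

variable {R V : Type*} [CommRing R] [AddCommGroup V] [Module R V]
  {b : LinearMap.BilinForm R V} {A : End R V} {W : Submodule R V}

theorem coe_aeval_restrict_apply (hW : ∀ x ∈ W, A x ∈ W) (p : R[X]) (x : W) :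
    (aeval (A.restrict hW) p x : V) = aeval A p x := by
  induction p using Polynomial.induction_on' with
  | add p q hp hq =>
    simp only [map_add, LinearMap.add_apply, Submodule.coe_add, hp, hq]
  | monomial n a =>
    have hn : ∀ x ∈ W, (A ^ n) x ∈ W := End.pow_apply_mem_of_forall_mem n hW
    simp only [aeval_monomial, End.mul_apply, algebraMap_end_apply, Submodule.coe_smul,
      End.pow_restrict n hW hn, LinearMap.coe_restrict_apply]

theorem apply_mem_orthogonal (hA : b.IsSelfAdjoint A) (hW : ∀ x ∈ W, A x ∈ W) :
    ∀ x ∈ b.orthogonal W, A x ∈ b.orthogonal W :=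
  fun x hx y hy ↦ (hA y x).symm.trans (hx _ (hW y hy))

theorem minpoly_restrict_dvd {K V : Type*} [Field K] [AddCommGroup V] [Module K V]
    {A : End K V} {W : Submodule K V} (hW : ∀ x ∈ W, A x ∈ W) :
    minpoly K (A.restrict hW) ∣ minpoly K A := by
  refine minpoly.dvd K _ (LinearMap.ext fun x ↦ Subtype.ext ?_)
  rw [coe_aeval_restrict_apply, minpoly.aeval, LinearMap.zero_apply, LinearMap.zero_apply,
    Submodule.coe_zero]

end Restrict

section SelfDualChain

variable {R V : Type*} [CommRing R] [AddCommGroup V] [Module R V]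
  {b : LinearMap.BilinForm R V} {A : End R V}

/-- A Jordan chain `v 0, …, v d` of `A` for the eigenvalue `c` on which `b` is the antidiagonal
identity matrix. The sequence is continued by zero beyond `d`. -/
structure IsSelfDualChain (b : LinearMap.BilinForm R V) (A : End R V) (c : R) (d : ℕ)
    (v : ℕ → V) : Prop where
  apply_eq (j : ℕ) : A (v j) = c • v j + v (j + 1)
  eq_zero (j : ℕ) : d < j → v j = 0
  form_eq (j l : ℕ) : b (v j) (v l) = if j + l = d then 1 else 0

namespace IsSelfDualChain

variable {c : R} {d : ℕ} {v : ℕ → V}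

theorem of_restrict {W : Submodule R V} {hW : ∀ x ∈ W, A x ∈ W} {v : ℕ → W}
    (h : IsSelfDualChain (b.restrict W) (A.restrict hW) c d v) :
    IsSelfDualChain b A c d (fun j ↦ (v j : V)) where
  apply_eq j := congrArg Subtype.val (h.apply_eq j)
  eq_zero j hj := congrArg Subtype.val (h.eq_zero j hj)
  form_eq := h.form_eq

theorem apply_mem_span (h : IsSelfDualChain b A c d v) :
    ∀ x ∈ Submodule.span R (Set.range v), A x ∈ Submodule.span R (Set.range v) := by
  have hv (j : ℕ) : v j ∈ Submodule.span R (Set.range v) :=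
    Submodule.subset_span (Set.mem_range_self j)
  suffices Submodule.span R (Set.range v) ≤ (Submodule.span R (Set.range v)).comap A from this
  rw [Submodule.span_le]
  rintro _ ⟨j, rfl⟩
  rw [SetLike.mem_coe, Submodule.mem_comap, h.apply_eq]
  exact add_mem (Submodule.smul_mem _ _ (hv j)) (hv (j + 1))

theorem sum_form_smul_self (h : IsSelfDualChain b A c d v) {E : Type*} [AddCommGroup E]
    [Module R E] {w : ℕ → E} (hw : ∀ j, d < j → w j = 0) (l : ℕ) :
    ∑ j ∈ Finset.range (d + 1), b (v (d - j)) (v l) • w j = w l := by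
  rcases le_or_gt l d with hl | hl
  · rw [Finset.sum_eq_single_of_mem l (Finset.mem_range.2 (by lia)), h.form_eq,
      if_pos (by lia), one_smul]
    intro j hj hjl
    rw [h.form_eq, if_neg (by have := Finset.mem_range.1 hj; lia), zero_smul]
  · simp only [h.eq_zero l hl, hw l hl, map_zero, zero_smul, Finset.sum_const_zero]

theorem disjoint_orthogonal (h : IsSelfDualChain b A c d v) :
    Disjoint (Submodule.span R (Set.range v)) (b.orthogonal (Submodule.span R (Set.range v))) := by
  have hexpand : Set.EqOn
      (∑ j ∈ Finset.range (d + 1), (b (v (d - j))).smulRight (v j) : V →ₗ[R] V)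
      (LinearMap.id : V →ₗ[R] V) (Submodule.span R (Set.range v)) := by
    refine LinearMap.eqOn_span' ?_
    rintro _ ⟨l, rfl⟩
    simpa using h.sum_form_smul_self h.eq_zero l
  refine Submodule.disjoint_def.2 fun x hx hx' ↦ ?_
  rw [← LinearMap.id_apply (R := R) (M := V) x, ← hexpand hx, LinearMap.sum_apply]
  refine Finset.sum_eq_zero fun j _ ↦ ?_
  have hpair : b (v (d - j)) x = 0 := hx' _ (Submodule.subset_span (Set.mem_range_self _))
  rw [LinearMap.smulRight_apply, hpair, zero_smul]

end IsSelfDualChain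

end SelfDualChain

section ExistsSelfDualChain

variable {K V : Type*} [Field K] [AddCommGroup V] [Module K V]
  {b : LinearMap.BilinForm K V} {A : End K V}

theorem exists_form_apply_self_ne_zero [NeZero (2 : K)] (hb : b.IsSymm) (hnd : b.Nondegenerate)
    (hA : b.IsSelfAdjoint A) (h : A ≠ 0) : ∃ x, b (A x) x ≠ 0 := by
  have : Invertible (2 : K) := invertibleOfNonzero two_ne_zero
  refine LinearMap.BilinForm.exists_bilinForm_self_ne_zero (B := b ∘ₗ A) (fun h0 ↦ h ?_) ⟨?_⟩
  · ext x
    exact hnd.1 _ fun y ↦ LinearMap.congr_fun₂ h0 x y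
  · intro x y
    exact (hA x y).trans (hb.eq ..).symm

theorem exists_chain_generator [IsAlgClosed K] [NeZero (2 : K)] [FiniteDimensional K V]
    [Nontrivial V] (hb : b.IsSymm) (hnd : b.Nondegenerate) (hA : b.IsSelfAdjoint A) :
    ∃ (c : K) (d : ℕ) (u : V), (X - C c) ^ (d + 1) ∣ minpoly K A ∧
      ((A - algebraMap K (End K V) c) ^ (d + 1)) u = 0 ∧
      b (((A - algebraMap K (End K V) c) ^ d) u) u ≠ 0 := by
  have hint : IsIntegral K A := Algebra.IsIntegral.isIntegral A
  have hne : minpoly K A ≠ 0 := minpoly.ne_zero hint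
  obtain ⟨c, hc⟩ := IsAlgClosed.exists_root (minpoly K A) (minpoly.degree_pos hint).ne'
  obtain ⟨r, hr, hrd⟩ := exists_eq_pow_rootMultiplicity_mul_and_not_dvd _ hne c
  obtain ⟨d, hd⟩ := Nat.exists_eq_succ_of_ne_zero ((rootMultiplicity_pos hne).2 hc).ne'
  rw [hd, Nat.succ_eq_add_one] at hr
  have hr0 : r ≠ 0 := by rintro rfl; exact hrd (dvd_zero _)
  have haeval (k : ℕ) : (A - algebraMap K (End K V) c) ^ k = aeval A ((X - C c) ^ k) := by
    rw [map_pow, map_sub, aeval_X, aeval_C]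
  have hg : aeval A (r * (X - C c) ^ d * r) ≠ 0 := by
    intro h
    have hdvd : (X - C c) ^ d * r * (X - C c) ∣ (X - C c) ^ d * r * r := by
      convert minpoly.dvd K A h using 1
      · rw [hr]; ring
      · ring
    exact hrd ((mul_dvd_mul_iff_left
      (mul_ne_zero (pow_ne_zero _ (X_sub_C_ne_zero c)) hr0)).1 hdvd)
  obtain ⟨x, hx⟩ := exists_form_apply_self_ne_zero hb hnd (isSelfAdjoint_aeval hA _) hg
  refine ⟨c, d, aeval A r x, Dvd.intro _ hr.symm, ?_, ?_⟩
  · rw [haeval, ← End.mul_apply, ← map_mul, ← hr, minpoly.aeval, LinearMap.zero_apply]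
  · rwa [← isSelfAdjoint_aeval hA r, haeval, ← End.mul_apply, ← End.mul_apply, ← map_mul,
      ← map_mul]

theorem exists_form_pow_eq_ite_of_le [IsAlgClosed K] [NeZero (2 : K)]
    (hA : b.IsSelfAdjoint A) {d : ℕ} {u : V} (hzero : (A ^ (d + 1)) u = 0)
    (hne : b ((A ^ d) u) u ≠ 0) (j : ℕ) :
    ∃ w, (A ^ (d + 1)) w = 0 ∧ ∀ k, d ≤ k + j → b ((A ^ k) w) w = if k = d then 1 else 0 := by
  induction j with
  | zero =>
    obtain ⟨z, hz⟩ := IsAlgClosed.exists_pow_nat_eq (b ((A ^ d) u) u)⁻¹ two_pos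
    refine ⟨z • u, by rw [map_smul, hzero, smul_zero], fun k hk ↦ ?_⟩
    rcases (show d ≤ k from hk).eq_or_lt with rfl | hlt
    · simp only [map_smul, LinearMap.smul_apply, smul_eq_mul, if_true]
      rw [← mul_assoc, ← sq, hz, inv_mul_cancel₀ hne]
    · have hk0 : (A ^ k) u = 0 := eq_zero_of_pow_apply_eq_zero hzero hlt
      rw [if_neg hlt.ne', map_smul (A ^ k), hk0, smul_zero, map_zero, LinearMap.zero_apply]
  | succ j ih =>
    obtain ⟨w, hw, hpair⟩ := ih
    have hpair_gt (k : ℕ) (hk : d < k) : b ((A ^ k) w) w = 0 := by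
      rw [hpair k (by lia), if_neg hk.ne']
    rcases lt_or_ge d (j + 1) with hj | hj
    · exact ⟨w, hw, fun k _ ↦ hpair k (by lia)⟩
    -- Adding `a • A ^ (j + 1) w` leaves the pairings already normalised unchanged.
    set a : K := -b ((A ^ (d - (j + 1))) w) w / 2 with ha
    refine ⟨w + a • (A ^ (j + 1)) w, ?_, fun k hk ↦ ?_⟩
    · rw [map_add, map_smul, ← End.mul_apply, ← pow_add,
        eq_zero_of_pow_apply_eq_zero hw (show d + 1 ≤ d + 1 + (j + 1) by lia), hw,
        smul_zero, add_zero]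
    · rw [form_pow_add_smul_pow hA, hpair_gt (k + (j + 1) + (j + 1)) (by lia)]
      rcases hk.eq_or_lt with heq | hlt
      · rw [hpair (k + (j + 1)) (by lia), if_pos heq.symm, if_neg (by lia), ha,
          show d - (j + 1) = k by lia]
        field_simp
        ring
      · rw [hpair_gt _ hlt, hpair k (by lia)]
        ring

theorem exists_form_pow_eq_ite [IsAlgClosed K] [NeZero (2 : K)]
    (hA : b.IsSelfAdjoint A) {d : ℕ} {u : V} (hzero : (A ^ (d + 1)) u = 0)
    (hne : b ((A ^ d) u) u ≠ 0) :
    ∃ w, (A ^ (d + 1)) w = 0 ∧ ∀ k, b ((A ^ k) w) w = if k = d then 1 else 0 := by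
  obtain ⟨w, hw, h⟩ := exists_form_pow_eq_ite_of_le hA hzero hne d
  exact ⟨w, hw, fun k ↦ h k (by lia)⟩

theorem exists_isSelfDualChain [IsAlgClosed K] [NeZero (2 : K)] [FiniteDimensional K V]
    [Nontrivial V] (hb : b.IsSymm) (hnd : b.Nondegenerate) (hA : b.IsSelfAdjoint A) :
    ∃ c d v, IsSelfDualChain b A c d v ∧ (X - C c) ^ (d + 1) ∣ minpoly K A := by
  obtain ⟨c, d, u, hdvd, hzero, hne⟩ := exists_chain_generator hb hnd hA
  set N : End K V := A - algebraMap K (End K V) c with hN_def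
  have hN : b.IsSelfAdjoint N := by
    have h := isSelfAdjoint_aeval hA (X - C c)
    rwa [map_sub, aeval_X, aeval_C] at h
  obtain ⟨w, hw, hpair⟩ := exists_form_pow_eq_ite hN hzero hne
  refine ⟨c, d, fun j ↦ (N ^ j) w, ⟨fun j ↦ ?_, fun j hj ↦ ?_, fun j l ↦ ?_⟩, hdvd⟩
  · rw [pow_succ', End.mul_apply, hN_def, LinearMap.sub_apply, algebraMap_end_apply,
      add_sub_cancel]
  · exact eq_zero_of_pow_apply_eq_zero hw hj
  · rw [form_pow_pow hN, hpair]

end ExistsSelfDualChain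

section OrthogonalChainFamily

variable {R V : Type*} [CommRing R] [AddCommGroup V] [Module R V]
  {b : LinearMap.BilinForm R V} {A : End R V}

/-- A decomposition of `V` into a `b`-orthogonal sum of self-dual Jordan chains of `A`, that is,
the canonical form of a self-adjoint endomorphism: the chain `v i` belongs to the eigenvalue
`c i` and has length `d i + 1`. -/
structure IsOrthogonalChainFamily (b : LinearMap.BilinForm R V) (A : End R V) {ι : Type*}
    (c : ι → R) (d : ι → ℕ) (v : ι → ℕ → V) : Prop where
  chain (i : ι) : IsSelfDualChain b A (c i) (d i) (v i)
  orthogonal {i k : ι} (hik : i ≠ k) (j l : ℕ) : b (v i j) (v k l) = 0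
  span_eq_top : Submodule.span R (Set.range fun p : ι × ℕ ↦ v p.1 p.2) = ⊤

theorem IsSelfDualChain.isOrthogonalChainFamily_option (hb : b.IsSymm) {c₀ : R} {d₀ : ℕ}
    {v₀ : ℕ → V} (h₀ : IsSelfDualChain b A c₀ d₀ v₀) {W : Submodule R V}
    (hortho : W ≤ b.orthogonal (Submodule.span R (Set.range v₀)))
    (hsup : Submodule.span R (Set.range v₀) ⊔ W = ⊤) {hW : ∀ x ∈ W, A x ∈ W}
    {ι : Type*} {c : ι → R} {d : ι → ℕ} {v : ι → ℕ → W}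
    (h : IsOrthogonalChainFamily (b.restrict W) (A.restrict hW) c d v) :
    IsOrthogonalChainFamily b A (fun i : Option ι ↦ i.elim c₀ c) (fun i ↦ i.elim d₀ d)
      (fun i ↦ i.elim v₀ fun i j ↦ (v i j : V)) where
  chain
    | none => h₀
    | some i => (h.chain i).of_restrict
  orthogonal {i k} hik j l := by
    have hpair (i : ι) (j l : ℕ) : b (v₀ j) (v i l) = 0 :=
      hortho (v i l).2 _ (Submodule.subset_span (Set.mem_range_self j))
    match i, k with
    | none, none => exact (hik rfl).elim
    | none, some k => exact hpair k j l
    | some i, none => exact (hb.eq ..).trans (hpair i l j)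
    | some i, some k => exact h.orthogonal (fun hne ↦ hik (congrArg some hne)) j l
  span_eq_top := by
    refine top_unique (hsup.ge.trans (sup_le (Submodule.span_mono ?_) ?_))
    · rintro _ ⟨j, rfl⟩
      exact ⟨(none, j), rfl⟩
    · have hspan := Submodule.map_span W.subtype (Set.range fun p : ι × ℕ ↦ v p.1 p.2)
      rw [h.span_eq_top, Submodule.map_subtype_top] at hspan
      refine hspan.trans_le (Submodule.span_mono ?_)
      rintro _ ⟨_, ⟨p, rfl⟩, rfl⟩
      exact ⟨(some p.1, p.2), rfl⟩

end OrthogonalChainFamily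

section ExistsOrthogonalChainFamily

variable {K V : Type*} [Field K] [AddCommGroup V] [Module K V]
  {b : LinearMap.BilinForm K V} {A : End K V}

theorem IsSelfDualChain.finrank_orthogonal_lt [FiniteDimensional K V] {c : K}
    {d : ℕ} {v : ℕ → V} (h : IsSelfDualChain b A c d v) :
    finrank K (b.orthogonal (Submodule.span K (Set.range v))) < finrank K V := by
  refine Submodule.finrank_lt fun htop ↦ ?_
  have hzero : b (v 0) (v d) = 0 :=
    Submodule.eq_top_iff'.1 htop (v d) _ (Submodule.subset_span (Set.mem_range_self 0))
  rw [h.form_eq, if_pos (zero_add d)] at hzero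
  exact one_ne_zero hzero

theorem exists_isOrthogonalChainFamily [IsAlgClosed K] [NeZero (2 : K)] [FiniteDimensional K V]
    (hb : b.IsSymm) (hnd : b.Nondegenerate) (hA : b.IsSelfAdjoint A) :
    ∃ (ι : Type) (_ : Finite ι) (c : ι → K) (d : ι → ℕ) (v : ι → ℕ → V),
      IsOrthogonalChainFamily b A c d v ∧ ∀ i, (X - C (c i)) ^ (d i + 1) ∣ minpoly K A := by
  induction hn : finrank K V using Nat.strong_induction_on generalizing V with
  | h n ih =>
    rcases subsingleton_or_nontrivial V with hV | hV
    · exact ⟨Empty, inferInstance, Empty.elim, Empty.elim, Empty.elim,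
        ⟨isEmptyElim, fun {i} ↦ isEmptyElim i, Subsingleton.elim _ _⟩, isEmptyElim⟩
    obtain ⟨c₀, d₀, v₀, h₀, hdvd₀⟩ := exists_isSelfDualChain hb hnd hA
    set U : Submodule K V := Submodule.span K (Set.range v₀)
    have hcompl : IsCompl U (b.orthogonal U) :=
      (LinearMap.BilinForm.isCompl_orthogonal_iff_disjoint hb.isRefl).2 h₀.disjoint_orthogonal
    have hW : ∀ x ∈ b.orthogonal U, A x ∈ b.orthogonal U :=
      apply_mem_orthogonal hA h₀.apply_mem_span
    have hnd' : (b.restrict (b.orthogonal U)).Nondegenerate := by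
      refine b.nondegenerate_restrict_of_disjoint_orthogonal hb.isRefl ?_
      rw [LinearMap.BilinForm.orthogonal_orthogonal hnd hb.isRefl]
      exact hcompl.disjoint.symm
    obtain ⟨ι, _, c, d, v, h, hdvd⟩ := ih _ (hn ▸ h₀.finrank_orthogonal_lt) (hb.restrict _) hnd'
      (A := A.restrict hW) (fun x y ↦ hA x y) rfl
    refine ⟨Option ι, inferInstance, _, _, _, h₀.isOrthogonalChainFamily_option hb le_rfl
      hcompl.sup_eq_top h, ?_⟩
    rintro (_ | i)
    · exact hdvd₀
    · exact (hdvd i).trans (minpoly_restrict_dvd hW)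

end ExistsOrthogonalChainFamily

section KacChain

variable {R V : Type*} [CommRing R] [AddCommGroup V] [Module R V] {T : End R V}

theorem aeval_X_sub_C_apply (T : End R V) (a : R) (x : V) :
    aeval T (X - C a) x = T x - a • x := by
  rw [map_sub, aeval_X, aeval_C, LinearMap.sub_apply, algebraMap_end_apply]

theorem aeval_prod_X_sub_C_apply_of_ladder {x : ℕ → V} {a β : ℕ → R} {n : ℕ}
    (h : ∀ j < n, T (x j) = a j • x j + β j • x (j + 1)) :
    aeval T (∏ l ∈ Finset.range n, (X - C (a l))) (x 0) =
      (∏ l ∈ Finset.range n, β l) • x n := by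
  induction n with
  | zero => simp
  | succ n ih =>
    rw [Finset.prod_range_succ_comm, Finset.prod_range_succ, map_mul, End.mul_apply,
      ih fun j hj ↦ h j (by lia), map_smul, aeval_X_sub_C_apply, h n n.lt_succ_self,
      add_sub_cancel_left, smul_smul]

/-- The endomorphism `T` acts on `v 0, …, v d` through the Kac matrix, which is tridiagonal with
diagonal entries `c + t * d`, subdiagonal entries `1` and superdiagonal entries
`t ^ 2 * j * (d + 1 - j)`. The sequence is continued by zero beyond `d`. -/
structure IsKacChain (T : End R V) (c t : R) (d : ℕ) (v : ℕ → V) : Prop where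
  eq_zero (j : ℕ) : d < j → v j = 0
  apply_eq (j : ℕ) : j ≤ d →
    T (v j) = (c + t * d) • v j + v (j + 1) + (t ^ 2 * (j * (d + 1 - j))) • v (j - 1)

/-- The linear map sending `X ^ m` to `(d - m)! • v m`. It intertwines the Kac
matrix with a first order differential operator on polynomials of degree at most `d`. -/
noncomputable def chainMap (d : ℕ) (v : ℕ → V) : R[X] →ₗ[R] V :=
  (basisMonomials R).constr R fun m ↦ ((d - m).factorial : R) • v m

theorem chainMap_X_pow (d : ℕ) (v : ℕ → V) (m : ℕ) :
    chainMap d v (X ^ m : R[X]) = ((d - m).factorial : R) • v m := by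
  rw [chainMap, ← monomial_one_right_eq_X_pow, ← congrFun (coe_basisMonomials R) m,
    Basis.constr_basis]

variable {c t : R} {d : ℕ} {v : ℕ → V}

theorem IsKacChain.apply_chainMap_X_pow (h : IsKacChain T c t d v)
    {m : ℕ} (hm : m ≤ d) :
    T (chainMap d v (X ^ m : R[X])) = (c + t * d) • chainMap d v (X ^ m : R[X]) +
      (d - m : R) • chainMap d v (X ^ (m + 1) : R[X]) +
      (t ^ 2 * m) • chainMap d v (X ^ (m - 1) : R[X]) := by
  obtain ⟨e, rfl⟩ := Nat.exists_eq_add_of_le hm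
  have hup : ((m + e : ℕ) - m : R) • chainMap (m + e) v (X ^ (m + 1) : R[X]) =
      (e.factorial : R) • v (m + 1) := by
    rw [chainMap_X_pow, smul_smul]
    rcases e with _ | e
    · rw [h.eq_zero (m + 1) (by lia), smul_zero, smul_zero]
    · rw [show m + (e + 1) - (m + 1) = e by lia, Nat.factorial_succ]
      push_cast
      ring_nf
  have hdown : (m : R) • chainMap (m + e) v (X ^ (m - 1) : R[X]) =
      (m * (e + 1) * e.factorial : R) • v (m - 1) := by
    rw [chainMap_X_pow, smul_smul]
    rcases m with _ | m
    · simp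
    · rw [show m + 1 + e - (m + 1 - 1) = e + 1 by lia, Nat.factorial_succ]
      push_cast
      ring_nf
  rw [hup, mul_smul, hdown, chainMap_X_pow, show m + e - m = e by lia, map_smul, h.apply_eq m hm]
  push_cast
  module

theorem IsKacChain.apply_chainMap (h : IsKacChain T c t d v)
    {p : R[X]} (hp : p.natDegree ≤ d) :
    T (chainMap d v p) = chainMap d v
      (C (c + t * d) * p + C (d : R) * X * p + (C (t ^ 2) - X ^ 2) * derivative p) := by
  refine induction_with_natDegree_le (fun p ↦ T (chainMap d v p) = chainMap d v
    (C (c + t * d) * p + C (d : R) * X * p + (C (t ^ 2) - X ^ 2) * derivative p)) d (by simp)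
    (fun m r _ hm ↦ ?_) (fun p q _ _ hp hq ↦ ?_) p hp
  · have hX : X ^ 2 * (C (m : R) * X ^ (m - 1)) = C (m : R) * X ^ (m + 1) := by
      rcases m with _ | m
      · simp
      · rw [Nat.add_sub_cancel]; ring
    have hpoly : C (c + t * d) * (C r * X ^ m) + C (d : R) * X * (C r * X ^ m) +
        (C (t ^ 2) - X ^ 2) * derivative (C r * X ^ m) =
        r • ((c + t * d) • X ^ m + (d - m : R) • X ^ (m + 1) + (t ^ 2 * m) • X ^ (m - 1)) := by
      rw [derivative_C_mul_X_pow]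
      simp only [smul_eq_C_mul, map_sub, map_mul]
      linear_combination (-C r) * hX
    rw [hpoly, ← smul_eq_C_mul, map_smul, map_smul, h.apply_chainMap_X_pow hm]
    simp only [map_smul, map_add]
  · rw [map_add, map_add, hp, hq, ← map_add, derivative_add]
    ring_nf

theorem IsKacChain.apply_chainMap_X_add_C_pow (h : IsKacChain T c t d v)
    {j : ℕ} (hj : j ≤ d) :
    T (chainMap d v ((X + C t) ^ j)) = (c + 2 * t * j) • chainMap d v ((X + C t) ^ j) +
      (d - j : R) • chainMap d v ((X + C t) ^ (j + 1)) := by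
  have hdeg : ((X + C t) ^ j).natDegree ≤ d := by compute_degree; exact hj
  rw [h.apply_chainMap hdeg, ← map_smul, ← map_smul, ← map_add]
  have hder : (X + C t) * derivative ((X + C t) ^ j) = C (j : R) * (X + C t) ^ j := by
    rw [derivative_X_add_C_pow]
    rcases j with _ | j
    · simp
    · rw [Nat.add_sub_cancel, map_natCast]; ring
  congr 1
  simp only [smul_eq_C_mul, map_add, map_sub, map_mul, map_pow, map_natCast, map_ofNat] at hder ⊢
  linear_combination (C t - X) * hder

theorem IsKacChain.aeval_prod_X_sub_C_apply [IsDomain R] [CharZero R] [IsTorsionFree R V]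
    (h : IsKacChain T c t d v) (j : ℕ) :
    aeval T (∏ l ∈ Finset.range (d + 1), (X - C (c + 2 * t * l))) (v j) = 0 := by
  set Q : R[X] := ∏ l ∈ Finset.range (d + 1), (X - C (c + 2 * t * l))
  have hzero : aeval T Q (v 0) = 0 := by
    have hlad := aeval_prod_X_sub_C_apply_of_ladder (n := d + 1)
      (x := fun j ↦ chainMap d v ((X + C t) ^ j))
      (fun j hj ↦ h.apply_chainMap_X_add_C_pow (Nat.lt_succ_iff.1 hj))
    rw [Finset.prod_range_succ (fun l : ℕ ↦ (d - l : R)), sub_self, mul_zero, zero_smul,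
      pow_zero, ← pow_zero X, chainMap_X_pow, map_smul] at hlad
    exact (smul_eq_zero.1 hlad).resolve_left (Nat.cast_ne_zero.2 (Nat.factorial_ne_zero _))
  suffices aeval T Q (v j) = 0 ∧ aeval T Q (v (j - 1)) = 0 from this.1
  induction j with
  | zero => exact ⟨hzero, hzero⟩
  | succ j ih =>
    refine ⟨?_, ih.1⟩
    rcases le_or_gt j d with hj | hj
    · have hcomm : aeval T Q (T (v j)) = 0 := by
        have hTQ := ((Commute.all Q X).map (aeval T)).eq
        rw [aeval_X] at hTQ
        rw [← End.mul_apply, hTQ, End.mul_apply, ih.1, map_zero]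
      rwa [h.apply_eq j hj, map_add, map_add, map_smul, map_smul, ih.1, ih.2, smul_zero, smul_zero,
        add_zero, zero_add] at hcomm
    · rw [h.eq_zero (j + 1) (by lia), map_zero]

end KacChain

section SplitRoots

variable {R : Type*} [CommRing R] [IsDomain R]

open scoped Classical in
/-- The polynomial in which every root `c` of `P` of multiplicity `m` is replaced by the roots
`c, c + 2 * t, …, c + 2 * (m - 1) * t`. -/
noncomputable def splitRoots (P : R[X]) (t : R) : R[X] :=
  ∏ c ∈ P.roots.toFinset, ∏ l ∈ Finset.range (P.rootMultiplicity c), (X - C (c + 2 * t * l))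

theorem splitRoots_monic (P : R[X]) (t : R) : (splitRoots P t).Monic :=
  monic_prod_of_monic _ _ fun _ _ ↦ monic_prod_of_monic _ _ fun _ _ ↦ monic_X_sub_C _

theorem natDegree_splitRoots_le (P : R[X]) (t : R) : (splitRoots P t).natDegree ≤ P.natDegree := by
  classical
  calc (splitRoots P t).natDegree
      = ∑ c ∈ P.roots.toFinset, P.roots.count c := by
        rw [splitRoots, natDegree_prod_of_monic _ _
          fun _ _ ↦ monic_prod_of_monic _ _ fun _ _ ↦ monic_X_sub_C _]
        refine Finset.sum_congr rfl fun c _ ↦ ?_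
        rw [natDegree_finsetProd_X_sub_C_eq_card, Finset.card_range, count_roots]
    _ = P.roots.card := Multiset.toFinset_sum_count_eq _
    _ ≤ P.natDegree := P.card_roots'

theorem prod_X_sub_C_dvd_splitRoots {P : R[X]} (hP : P ≠ 0) {c : R} {n : ℕ}
    (h : (X - C c) ^ (n + 1) ∣ P) (t : R) :
    ∏ l ∈ Finset.range (n + 1), (X - C (c + 2 * t * l)) ∣ splitRoots P t := by
  classical
  have hmul : n + 1 ≤ P.rootMultiplicity c := (le_rootMultiplicity_iff hP).2 h
  have hmem : c ∈ P.roots.toFinset := by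
    rw [Multiset.mem_toFinset, ← Multiset.count_pos, count_roots]
    lia
  exact (Finset.prod_dvd_prod_of_subset _ _ _ (Finset.range_subset_range.2 hmul)).trans
    (Finset.dvd_prod_of_mem _ hmem)

theorem eventually_cofinite_add_two_mul_ne [CharZero R] {a b : R} {l m : ℕ}
    (h : a = b → l ≠ m) : ∀ᶠ t in Filter.cofinite, a + 2 * t * l ≠ b + 2 * t * m := by
  refine Filter.eventually_cofinite.2 (Set.Subsingleton.finite fun s hs t ht ↦ ?_)
  simp only [ne_eq, not_not, Set.mem_ofPred_eq] at hs ht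
  have hlm : (l : R) - m ≠ 0 := by
    refine sub_ne_zero.2 fun hlm ↦ h ?_ (Nat.cast_injective hlm)
    rw [hlm] at hs
    exact add_right_cancel hs
  refine mul_right_cancel₀ hlm (mul_left_cancel₀ (two_ne_zero (α := R)) ?_)
  linear_combination hs - ht

theorem eventually_cofinite_squarefree_splitRoots {K : Type*} [Field K] [CharZero K]
    (P : K[X]) :
    ∀ᶠ t in Filter.cofinite, Squarefree (splitRoots P t) := by
  classical
  set s : Finset (Σ _ : K, ℕ) := P.roots.toFinset.sigma fun c ↦ Finset.range (P.rootMultiplicity c)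
  have hne : ∀ᶠ t in Filter.cofinite, ∀ p ∈ s, ∀ q ∈ s,
      p.1 + 2 * t * p.2 = q.1 + 2 * t * q.2 → p = q := by
    refine (Filter.eventually_all_finset s).2 fun p _ ↦ (Filter.eventually_all_finset s).2
      fun q _ ↦ ?_
    by_cases hpq : p = q
    · exact .of_forall fun _ _ ↦ hpq
    · have h : p.1 = q.1 → p.2 ≠ q.2 := fun h₁ h₂ ↦ hpq (Sigma.ext h₁ (heq_of_eq h₂))
      filter_upwards [eventually_cofinite_add_two_mul_ne h] with t ht heq
      exact (ht heq).elim
  filter_upwards [hne] with t ht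
  rw [splitRoots, Finset.prod_sigma']
  exact (separable_prod_X_sub_C_iff'.2 fun p hp q hq ↦ ht p hp q hq).squarefree

end SplitRoots

section FamilyEndomorphisms

theorem lowering_coeff_comm {R : Type*} [CommRing R] (d j l : ℕ) :
    (j * (d + 1 - j) : R) * (if j - 1 + l = d then 1 else 0) =
      (l * (d + 1 - l)) * (if j + (l - 1) = d then 1 else 0) := by
  rcases j with _ | j <;> rcases l with _ | l
  · simp
  · rcases eq_or_ne l d with rfl | hl
    · simp
    · simp [hl]
  · rcases eq_or_ne j d with rfl | hj
    · simp
    · simp [hj]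
  · rw [Nat.add_sub_cancel, Nat.add_sub_cancel, show j + 1 + l = j + (l + 1) by lia]
    split_ifs with hd
    · rw [← hd]
      push_cast
      ring
    · rw [mul_zero, mul_zero]

variable {R V : Type*} [CommRing R] [AddCommGroup V] [Module R V]
  {b : LinearMap.BilinForm R V} {A : End R V}

namespace IsOrthogonalChainFamily

variable {ι : Type*} {c : ι → R} {d : ι → ℕ} {v : ι → ℕ → V}

theorem hom_ext {W : Type*} [AddCommGroup W] [Module R W] (h : IsOrthogonalChainFamily b A c d v)
    {L M : V →ₗ[R] W} (hLM : ∀ i j, L (v i j) = M (v i j)) : L = M := by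
  refine LinearMap.ext_on h.span_eq_top ?_
  rintro _ ⟨p, rfl⟩
  exact hLM p.1 p.2

theorem exists_end_apply_eq [Finite ι] (h : IsOrthogonalChainFamily b A c d v)
    {w : ι → ℕ → V} (hw : ∀ i j, d i < j → w i j = 0) :
    ∃ L : End R V, ∀ i j, L (v i j) = w i j := by
  cases nonempty_fintype ι
  refine ⟨∑ i, ∑ j ∈ Finset.range (d i + 1), (b (v i (d i - j))).smulRight (w i j),
    fun k l ↦ ?_⟩
  simp only [LinearMap.sum_apply, LinearMap.smulRight_apply]
  rw [Fintype.sum_eq_single k fun i hik ↦ Finset.sum_eq_zero fun j _ ↦ by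
    rw [h.orthogonal hik, zero_smul]]
  exact (h.chain k).sum_form_smul_self (hw k) l

theorem exists_isSelfAdjoint_apply_eq [Finite ι] (h : IsOrthogonalChainFamily b A c d v)
    {w : ι → ℕ → V} (hw : ∀ i j, d i < j → w i j = 0)
    (hform : ∀ i j k l, b (w i j) (v k l) = b (v i j) (w k l)) :
    ∃ L : End R V, b.IsSelfAdjoint L ∧ ∀ i j, L (v i j) = w i j := by
  obtain ⟨L, hL⟩ := h.exists_end_apply_eq hw
  refine ⟨L, LinearMap.isAdjointPair_iff_comp_eq_compl₂.2 (h.hom_ext fun i j ↦ h.hom_ext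
    fun k l ↦ ?_), hL⟩
  simp only [LinearMap.comp_apply, LinearMap.compl₂_apply, hL, hform]

theorem exists_isSelfAdjoint_weight [Finite ι] (h : IsOrthogonalChainFamily b A c d v) :
    ∃ E : End R V, b.IsSelfAdjoint E ∧ ∀ i j, E (v i j) = (d i : R) • v i j := by
  refine h.exists_isSelfAdjoint_apply_eq (fun i j hj ↦ ?_) fun i j k l ↦ ?_
  · rw [(h.chain i).eq_zero j hj, smul_zero]
  · rcases eq_or_ne i k with rfl | hik
    · simp
    · simp [h.orthogonal hik]

theorem exists_isSelfAdjoint_lowering [Finite ι] (h : IsOrthogonalChainFamily b A c d v) :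
    ∃ F : End R V, b.IsSelfAdjoint F ∧
      ∀ i j, F (v i j) = (j * (d i + 1 - j) : R) • v i (j - 1) := by
  refine h.exists_isSelfAdjoint_apply_eq (fun i j hj ↦ ?_) fun i j k l ↦ ?_
  · rcases (Nat.succ_le_of_lt hj).eq_or_lt with rfl | hj
    · simp
    · rw [(h.chain i).eq_zero _ (by lia), smul_zero]
  · simp only [map_smul, LinearMap.smul_apply, smul_eq_mul]
    rcases eq_or_ne i k with rfl | hik
    · rw [(h.chain i).form_eq, (h.chain i).form_eq, lowering_coeff_comm]
    · rw [h.orthogonal hik, h.orthogonal hik, mul_zero, mul_zero]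

theorem isKacChain (h : IsOrthogonalChainFamily b A c d v) {E F : End R V}
    (hE : ∀ i j, E (v i j) = (d i : R) • v i j)
    (hF : ∀ i j, F (v i j) = (j * (d i + 1 - j) : R) • v i (j - 1)) (t : R) (i : ι) :
    IsKacChain (A + t • E + t ^ 2 • F) (c i) t (d i) (v i) where
  eq_zero := (h.chain i).eq_zero
  apply_eq j _ := by
    simp only [LinearMap.add_apply, LinearMap.smul_apply, (h.chain i).apply_eq, hE, hF]
    module

end IsOrthogonalChainFamily

end FamilyEndomorphisms

section Perturbation

variable {K V : Type*} [Field K] [AddCommGroup V] [Module K V]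
  {b : LinearMap.BilinForm K V} {A : End K V}

theorem exists_isSelfAdjoint_perturbation [IsAlgClosed K] [CharZero K] [FiniteDimensional K V]
    (hb : b.IsSymm) (hnd : b.Nondegenerate) (hA : b.IsSelfAdjoint A) :
    ∃ E F : End K V, b.IsSelfAdjoint E ∧ b.IsSelfAdjoint F ∧
      ∀ t : K, aeval (A + t • E + t ^ 2 • F) (splitRoots (minpoly K A) t) = 0 := by
  obtain ⟨ι, _, c, d, v, h, hdvd⟩ := exists_isOrthogonalChainFamily hb hnd hA
  obtain ⟨E, hE, hEv⟩ := h.exists_isSelfAdjoint_weight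
  obtain ⟨F, hF, hFv⟩ := h.exists_isSelfAdjoint_lowering
  refine ⟨E, F, hE, hF, fun t ↦ h.hom_ext fun i j ↦ ?_⟩
  have hne : minpoly K A ≠ 0 := minpoly.ne_zero (Algebra.IsIntegral.isIntegral A)
  obtain ⟨q, hq⟩ := prod_X_sub_C_dvd_splitRoots hne (hdvd i) t
  rw [hq, mul_comm, map_mul, End.mul_apply,
    (h.isKacChain hEv hFv t i).aeval_prod_X_sub_C_apply, map_zero, LinearMap.zero_apply]

theorem exists_orthonormal_eigenbasis [IsAlgClosed K] [NeZero (2 : K)] [FiniteDimensional K V]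
    (hb : b.IsSymm) (hnd : b.Nondegenerate) (hA : b.IsSelfAdjoint A)
    (hsq : Squarefree (minpoly K A)) :
    ∃ (ι : Type) (e : Basis ι K V) (c : ι → K),
      (∀ i, A (e i) = c i • e i) ∧ (∀ i, b (e i) (e i) = 1) ∧
      ∀ i k, i ≠ k → b (e i) (e k) = 0 := by
  obtain ⟨ι, _, c, d, v, h, hdvd⟩ := exists_isOrthogonalChainFamily hb hnd hA
  have hd (i : ι) : d i = 0 := by
    by_contra hne
    have hsq_dvd : (X - C (c i)) * (X - C (c i)) ∣ minpoly K A := by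
      rw [← sq]
      exact (pow_dvd_pow _ (by lia)).trans (hdvd i)
    exact not_isUnit_X_sub_C (c i) (hsq _ hsq_dvd)
  have hzero (i : ι) (j : ℕ) (hj : j ≠ 0) : v i j = 0 :=
    (h.chain i).eq_zero j ((hd i).trans_lt (Nat.pos_of_ne_zero hj))
  have hself (i : ι) : b (v i 0) (v i 0) = 1 := by rw [(h.chain i).form_eq, if_pos (hd i).symm]
  have hortho (i k : ι) (hik : i ≠ k) : b (v i 0) (v k 0) = 0 := h.orthogonal hik 0 0
  have hli : LinearIndependent K fun i ↦ v i 0 :=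
    LinearMap.linearIndependent_of_isOrthoᵢ (B := b) hortho fun i hi ↦
      one_ne_zero ((hself i).symm.trans hi)
  have hspan : ⊤ ≤ Submodule.span K (Set.range fun i ↦ v i 0) := by
    rw [← h.span_eq_top, Submodule.span_le]
    rintro _ ⟨⟨i, _ | j⟩, rfl⟩
    · exact Submodule.subset_span ⟨i, rfl⟩
    · simp only [hzero i (j + 1) j.succ_ne_zero, SetLike.mem_coe, zero_mem]
  refine ⟨ι, Basis.mk hli hspan, c, fun i ↦ ?_, fun i ↦ ?_, fun i k hik ↦ ?_⟩ <;>
    simp only [Basis.mk_apply]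
  · rw [(h.chain i).apply_eq, hzero i (0 + 1) one_ne_zero, add_zero]
  · exact hself i
  · exact hortho i k hik

end Perturbation

section Degeneracy

variable {K S : Type*} [Field K] [Ring S] [Algebra K S]

theorem linearIndependent_pow_iff_le_natDegree_minpoly {x : S} (hx : IsIntegral K x) (N : ℕ) :
    LinearIndependent K (fun r : Fin N ↦ x ^ (r : ℕ)) ↔ N ≤ (minpoly K x).natDegree := by
  refine ⟨fun h ↦ ?_, fun h ↦ (linearIndependent_pow x).comp _ (Fin.castLE_injective h)⟩
  by_contra! hN
  have hsum := minpoly.aeval K x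
  rw [aeval_eq_sum_range' hN, Finset.sum_range] at hsum
  have hlead := Fintype.linearIndependent_iff.1 h _ hsum ⟨(minpoly K x).natDegree, hN⟩
  exact minpoly.ne_zero hx (leadingCoeff_eq_zero.1 hlead)

end Degeneracy

section Matrix

variable {R ι : Type*} [CommRing R] [Fintype ι]

theorem dotProductBilin_isSymm :
    LinearMap.BilinForm.IsSymm (dotProductBilin R R : LinearMap.BilinForm R (ι → R)) :=
  ⟨dotProduct_comm⟩

theorem dotProductBilin_nondegenerate :
    (dotProductBilin R R : LinearMap.BilinForm R (ι → R)).Nondegenerate :=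
  ⟨fun _ h ↦ dotProduct_eq_zero _ h,
    fun _ h ↦ dotProduct_eq_zero _ fun y ↦ (dotProduct_comm _ y).trans (h y)⟩

variable [DecidableEq ι]

theorem isSelfAdjoint_toLin'_iff {A : Matrix ι ι R} :
    (dotProductBilin R R : LinearMap.BilinForm R (ι → R)).IsSelfAdjoint (toLin' A) ↔
      A.IsSymm := by
  have hleft (x y : ι → R) : dotProductBilin R R (toLin' A x) y = x ⬝ᵥ Aᵀ *ᵥ y := by
    rw [dotProductBilin_apply_apply, toLin'_apply, dotProduct_mulVec, vecMul_transpose]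
  refine ⟨fun h ↦ ?_, fun h x y ↦ ?_⟩
  · refine ext_iff_mulVec.2 fun y ↦ dotProduct_eq _ _ fun x ↦ ?_
    rw [dotProduct_comm, ← hleft, h, dotProductBilin_apply_apply, toLin'_apply, dotProduct_comm]
  · rw [hleft, h.eq, dotProductBilin_apply_apply, toLin'_apply]

variable {K : Type*} [Field K] {A : Matrix ι ι K}

theorem exists_orthogonal_conj_eq_diagonal [IsAlgClosed K] [NeZero (2 : K)] (hA : A.IsSymm)
    (hsq : Squarefree (minpoly K A)) :
    ∃ Q : Matrix ι ι K, Q * Qᵀ = 1 ∧ ∃ d : ι → K, Q⁻¹ * A * Q = diagonal d := by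
  obtain ⟨κ, e, c, heig, hself, hortho⟩ := exists_orthonormal_eigenbasis
    dotProductBilin_isSymm dotProductBilin_nondegenerate (isSelfAdjoint_toLin'_iff.2 hA)
    (by rwa [minpoly_toLin'])
  let σ : ι ≃ κ := (Pi.basisFun K ι).indexEquiv e
  let Q : Matrix ι ι K := of fun i j ↦ e (σ j) i
  have hQtQ : Qᵀ * Q = 1 := by
    ext i j
    rcases eq_or_ne i j with rfl | hij
    · rw [one_apply_eq]
      exact hself (σ i)
    · rw [one_apply_ne hij]
      exact hortho _ _ (σ.injective.ne hij)
  have hAQ : A * Q = Q * diagonal (c ∘ σ) := by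
    ext i j
    rw [mul_diagonal, mul_comm]
    exact congrFun (heig (σ j)) i
  have hQQt : Q * Qᵀ = 1 := mul_eq_one_comm.1 hQtQ
  refine ⟨Q, hQQt, c ∘ σ, ?_⟩
  rw [inv_eq_right_inv hQQt, Matrix.mul_assoc, hAQ, ← Matrix.mul_assoc, hQtQ, Matrix.one_mul]

theorem exists_isSymm_perturbation [IsAlgClosed K] [CharZero K] (hA : A.IsSymm) :
    ∃ E F : Matrix ι ι K, E.IsSymm ∧ F.IsSymm ∧
      ∀ t : K, minpoly K (A + t • E + t ^ 2 • F) ∣ splitRoots (minpoly K A) t := by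
  obtain ⟨E, F, hE, hF, hann⟩ := exists_isSelfAdjoint_perturbation
    dotProductBilin_isSymm dotProductBilin_nondegenerate (isSelfAdjoint_toLin'_iff.2 hA)
  refine ⟨E.toMatrix', F.toMatrix', isSelfAdjoint_toLin'_iff.1 (by rwa [toLin'_toMatrix']),
    isSelfAdjoint_toLin'_iff.1 (by rwa [toLin'_toMatrix']), fun t ↦ ?_⟩
  rw [← minpoly_toLin']
  refine minpoly.dvd K _ ?_
  simpa only [map_add, map_smul, toLin'_toMatrix', minpoly_toLin'] using hann t

end Matrix

section Curve

theorem eval_curve_eq_zero_of_eventually_cofinite {R σ : Type*} [CommRing R] [IsDomain R]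
    [Infinite R] {f : MvPolynomial σ R} {γ : σ → R[X]}
    (h : ∀ᶠ t in Filter.cofinite, MvPolynomial.eval (fun p ↦ (γ p).eval t) f = 0) (t : R) :
    MvPolynomial.eval (fun p ↦ (γ p).eval t) f = 0 := by
  have heval (s : R) : (MvPolynomial.aeval γ f).eval s =
      MvPolynomial.eval (fun p ↦ (γ p).eval s) f := by
    rw [← coe_aeval_eq_eval, MvPolynomial.comp_aeval_apply, ← MvPolynomial.coe_aeval_eq_eval]
    rfl
  have hzero : MvPolynomial.aeval γ f = 0 :=
    eq_zero_of_infinite_isRoot _ <| Filter.frequently_cofinite_iff_infinite.1 <|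
      h.frequently.mono fun s hs ↦ (heval s).trans hs
  rw [← heval, hzero, eval_zero]

theorem eval_eq_zero_of_eventually_eval_quadratic_eq_zero {R m n : Type*} [CommRing R] [IsDomain R]
    [Infinite R] {f : MvPolynomial (m × n) R} {A E F : Matrix m n R}
    (h : ∀ᶠ t : R in Filter.cofinite,
      MvPolynomial.eval (fun p ↦ (A + t • E + t ^ 2 • F) p.1 p.2) f = 0) :
    MvPolynomial.eval (fun p ↦ A p.1 p.2) f = 0 := by
  let γ (p : m × n) : R[X] := C (A p.1 p.2) + X * C (E p.1 p.2) + X ^ 2 * C (F p.1 p.2)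
  have hγ (t : R) : (fun p ↦ (γ p).eval t) = fun p ↦ (A + t • E + t ^ 2 • F) p.1 p.2 := by
    funext p
    simp only [γ, eval_add, eval_mul, eval_pow, eval_C, eval_X, Matrix.add_apply,
      Matrix.smul_apply, smul_eq_mul]
  have hzero := eval_curve_eq_zero_of_eventually_cofinite (f := f) (γ := γ)
    (by simpa only [hγ] using h) 0
  simpa only [hγ, zero_smul, zero_pow two_ne_zero, add_zero] using hzero

end Curve

theorem stmt_1_general {K ι : Type*} [Field K] [IsAlgClosed K] [CharZero K] [Fintype ι]
    [DecidableEq ι] (N : ℕ) (f : MvPolynomial (ι × ι) K)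
    (hvan : ∀ A : Matrix ι ι K, Aᵀ = A →
      (∃ Q : Matrix ι ι K, Q * Qᵀ = 1 ∧ ∃ d : ι → K, Q⁻¹ * A * Q = diagonal d) →
      ¬ LinearIndependent K (fun r : Fin N ↦ A ^ (r : ℕ)) →
      MvPolynomial.eval (fun p ↦ A p.1 p.2) f = 0)
    (A : Matrix ι ι K) (hA : Aᵀ = A)
    (hdeg : ¬ LinearIndependent K (fun r : Fin N ↦ A ^ (r : ℕ))) :
    MvPolynomial.eval (fun p ↦ A p.1 p.2) f = 0 := by
  obtain ⟨E, F, hE, hF, hdvd⟩ := exists_isSymm_perturbation hA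
  refine eval_eq_zero_of_eventually_eval_quadratic_eq_zero (E := E) (F := F) ?_
  filter_upwards [eventually_cofinite_squarefree_splitRoots (minpoly K A)] with t hsq
  have hsymm : (A + t • E + t ^ 2 • F).IsSymm :=
    (IsSymm.add hA (hE.smul t)).add (hF.smul (t ^ 2))
  refine hvan _ hsymm (exists_orthogonal_conj_eq_diagonal hsymm (hsq.squarefree_of_dvd (hdvd t))) ?_
  rw [linearIndependent_pow_iff_le_natDegree_minpoly (Algebra.IsIntegral.isIntegral _), not_le]
    at hdeg ⊢
  calc (minpoly K (A + t • E + t ^ 2 • F)).natDegree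
      ≤ (splitRoots (minpoly K A) t).natDegree :=
        natDegree_le_of_dvd (hdvd t) (splitRoots_monic _ t).ne_zero
    _ ≤ (minpoly K A).natDegree := natDegree_splitRoots_le _ t
    _ < N := hdeg

end

/-- The orthogonally diagonalizable matrices form a Zariski dense subset of the
variety of `k`-degenerate complex symmetric `n × n` matrices. -/
theorem stmt_1 (n k : ℕ) (hn : 2 ≤ n) (hk : k ≤ n - 1)
    (f : MvPolynomial (Fin n × Fin n) ℂ)
    (hvan : ∀ A : Matrix (Fin n) (Fin n) ℂ, Aᵀ = A →
      (∃ Q : Matrix (Fin n) (Fin n) ℂ, Q * Qᵀ = 1 ∧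
        ∃ d : Fin n → ℂ, Q⁻¹ * A * Q = Matrix.diagonal d) →
      ¬ LinearIndependent ℂ (fun r : Fin (n - k + 1) => A ^ (r : ℕ)) →
      MvPolynomial.eval (fun p => A p.1 p.2) f = 0) :
    ∀ A : Matrix (Fin n) (Fin n) ℂ, Aᵀ = A →
      ¬ LinearIndependent ℂ (fun r : Fin (n - k + 1) => A ^ (r : ℕ)) →
      MvPolynomial.eval (fun p => A p.1 p.2) f = 0 :=
  stmt_1_general _ f hvan
end

section
/- Let n ≥ 2 and 0 ≤ k ≤ n−1. For every polynomial f ∈ MvPolynomial (Fin n × Fin n) ℂ, if f vanishes at every Hermitian matrix A ∈ Matrix (Fin n) (Fin n) ℂ that is k-degenerate, then f vanishes at every k-degenerate matrix A ∈ Matrix (Fin n) (Fin n) ℂ. (I.e., the Zariski closure in ℂ^{n×n} of the set of k-degenerate Hermitian matrices is the set of all k-degenerate complex matrices.) -/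
/-!
A matrix is `k`-degenerate iff its minimal polynomial has degree at most `m = n - k`.

Matrices of this kind with squarefree minimal polynomial are dense among all of them: if
`∏_{j < m} (A - a_j) = 0`, the kernels of the partial products form a flag on which `A` acts
triangularly with diagonal `a_j`. Adding `s B`, where `B` acts triangularly on the same flag with
distinct diagonal entries `b_j`, gives `∏_{j < m} (A + s B - (a_j + s b_j)) = 0`, and the roots
`a_j + s b_j` are distinct for all but finitely many `s`.

A diagonalizable matrix `P D P⁻¹` is, after rescaling `P`, a Cayley conjugate of `D`:
`P ∼ (1 + M)(1 - M)⁻¹`. If `M` is skew-Hermitian and `D` is real, then this `P` is unitary and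
`P D P⁻¹` is Hermitian. Replacing inverses by adjugates makes the conjugate polynomial in `M` and
`D`, up to a scalar that `D` absorbs. Finally `M` and `D` are joined to skew-Hermitian and to real
diagonal matrices by lines that take such values at every real time and pass through `M` and `D`
at time `I`; a polynomial that vanishes at all real times vanishes at time `I`.
-/

open Matrix Polynomial

open scoped ComplexStarModule

section ZariskiClosure

variable {ι κ R : Type*} [CommRing R]

/-- The Zariski closure of a set of matrices, as the set of common zeros of all polynomials in the
entries that vanish on it. -/
def zariskiClosure (S : Set (Matrix ι κ R)) : Set (Matrix ι κ R) :=
  {A | ∀ f : MvPolynomial (ι × κ) R,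
    (∀ B ∈ S, MvPolynomial.eval (fun p => B p.1 p.2) f = 0) →
      MvPolynomial.eval (fun p => A p.1 p.2) f = 0}

lemma subset_zariskiClosure (S : Set (Matrix ι κ R)) : S ⊆ zariskiClosure S :=
  fun A hA _ hf => hf A hA

lemma zariskiClosure_subset_zariskiClosure {S S' : Set (Matrix ι κ R)}
    (h : S ⊆ zariskiClosure S') : zariskiClosure S ⊆ zariskiClosure S' :=
  fun _ hA f hf => hA f fun _ hB => h hB f hf

lemma eval_aeval_entries (F : Matrix ι κ R[X]) (f : MvPolynomial (ι × κ) R) (t : R) :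
    (MvPolynomial.aeval (fun p => F p.1 p.2) f).eval t =
      MvPolynomial.eval (fun p => (F.map (evalRingHom t)) p.1 p.2) f := by
  induction f using MvPolynomial.induction_on with
  | C c => simp
  | add f g hf hg => simp [hf, hg]
  | mul_X f p hf => simp [hf]

lemma map_eval_mem_zariskiClosure [IsDomain R] {S : Set (Matrix ι κ R)} (F : Matrix ι κ R[X])
    {T : Set R} (hT : T.Infinite) (hF : ∀ t ∈ T, F.map (evalRingHom t) ∈ S) (a : R) :
    F.map (evalRingHom a) ∈ zariskiClosure S := by
  intro f hf
  have vanishes : MvPolynomial.aeval (fun p => F p.1 p.2) f = 0 :=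
    eq_zero_of_infinite_isRoot _ <| hT.mono fun t ht =>
      (eval_aeval_entries F f t).trans (hf _ (hF t ht))
  rw [← eval_aeval_entries, vanishes, eval_zero]

end ZariskiClosure

section Algebra

variable {K A : Type*} [Field K] [Ring A] [Algebra K A]

lemma not_linearIndependent_pow_iff_natDegree_minpoly_le {x : A} (hx : IsIntegral K x) {m : ℕ} :
    ¬ LinearIndependent K (fun r : Fin (m + 1) => x ^ (r : ℕ)) ↔ (minpoly K x).natDegree ≤ m := by
  constructor
  · contrapose!
    exact fun h => (linearIndependent_pow x).comp (Fin.castLE h) (Fin.castLE_injective h)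
  · intro h
    rw [Fintype.not_linearIndependent_iff]
    refine ⟨fun r => (minpoly K x).coeff r, ?_, ⟨(minpoly K x).natDegree, by omega⟩, ?_⟩
    · rw [← Finset.sum_range (fun r => (minpoly K x).coeff r • x ^ r),
        ← aeval_eq_sum_range' (by omega), minpoly.aeval]
    · simpa using minpoly.ne_zero hx

lemma semiconjBy_aeval {u x y : A} (h : SemiconjBy u x y) (p : K[X]) :
    SemiconjBy u (aeval x p) (aeval y p) := by
  induction p using Polynomial.induction_on' with
  | add p q hp hq => simpa only [map_add] using hp.add_right hq
  | monomial n a =>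
    simpa only [aeval_monomial] using
      (Algebra.commute_algebraMap_right a u).semiconjBy.mul_right (h.pow_right n)

lemma exists_aeval_prod_X_sub_C_eq_zero [IsAlgClosed K] {x : A} (hx : IsIntegral K x) {m : ℕ}
    (hm : (minpoly K x).natDegree ≤ m) :
    ∃ a : ℕ → K, aeval x (∏ i ∈ Finset.range m, (X - C (a i))) = 0 := by
  let l := (minpoly K x).roots.toList
  have length_l : l.length = (minpoly K x).natDegree := by
    rw [Multiset.length_toList, (IsAlgClosed.splits _).natDegree_eq_card_roots]
  refine ⟨fun i => l.getD i 0, aeval_eq_zero_of_dvd_aeval_eq_zero ?_ (minpoly.aeval K x)⟩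
  calc minpoly K x = ((minpoly K x).roots.map (X - C ·)).prod :=
        (IsAlgClosed.splits _).eq_prod_roots_of_monic (minpoly.monic hx)
    _ = (l.map (X - C ·)).prod := by
        rw [← Multiset.prod_coe, ← Multiset.map_coe, Multiset.coe_toList]
    _ = ∏ i ∈ Finset.range l.length, (X - C (l.getD i 0)) := by
        rw [← Fin.prod_univ_fun_getElem, Finset.prod_range]
        simp
    _ ∣ ∏ i ∈ Finset.range m, (X - C (l.getD i 0)) :=
        Finset.prod_dvd_prod_of_subset _ _ _ (Finset.range_mono (length_l.trans_le hm))

end Algebra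

lemma card_image_comp_le {α β γ : Type*} [DecidableEq β] [DecidableEq γ] (s : Finset α)
    (f : α → β) (g : β → γ) : (s.image (g ∘ f)).card ≤ (s.image f).card := by
  rw [← Finset.image_image]
  exact Finset.card_image_le

section Diagonalization

variable {ι K : Type*} [Fintype ι] [DecidableEq ι] [Field K]

lemma aeval_diagonal (d : ι → K) (p : K[X]) :
    aeval (diagonal d) p = diagonal fun i => p.eval (d i) := by
  have := aeval_algHom_apply (diagonalAlgHom (n := ι) K (α := K)) d p
  simpa [aeval_pi_apply] using this

lemma aeval_eq_zero_iff_of_semiconjBy_diagonal {A P : Matrix ι ι K} {d : ι → K} (hP : IsUnit P)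
    (h : SemiconjBy P (diagonal d) A) (p : K[X]) :
    aeval A p = 0 ↔ ∀ i, p.eval (d i) = 0 := by
  have hp := semiconjBy_aeval h p
  rw [← hP.mul_left_eq_zero, ← hp.eq, hP.mul_right_eq_zero, aeval_diagonal, diagonal_eq_zero,
    funext_iff]
  rfl

lemma natDegree_minpoly_eq_card_image {A P : Matrix ι ι K} {d : ι → K} [DecidableEq K]
    (hP : IsUnit P) (h : SemiconjBy P (diagonal d) A) :
    (minpoly K A).natDegree = (Finset.univ.image d).card := by
  apply le_antisymm
  · have monic_prod : (∏ z ∈ Finset.univ.image d, (X - C z)).Monic :=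
      monic_prod_of_monic _ _ fun z _ => monic_X_sub_C z
    rw [← natDegree_finsetProd_X_sub_C_eq_card (R := K)]
    refine natDegree_le_natDegree (minpoly.min K A monic_prod ?_)
    rw [aeval_eq_zero_iff_of_semiconjBy_diagonal hP h]
    intro i
    rw [eval_prod]
    exact Finset.prod_eq_zero (Finset.mem_image_of_mem d (Finset.mem_univ i)) (by simp)
  · refine card_le_degree_of_subset_roots fun z hz => ?_
    obtain ⟨i, -, rfl⟩ := Finset.mem_image.mp hz
    rw [mem_roots (minpoly.ne_zero (Matrix.isIntegral A))]
    exact (aeval_eq_zero_iff_of_semiconjBy_diagonal hP h _).mp (minpoly.aeval K A) i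

lemma exists_semiconjBy_diagonal_of_squarefree_minpoly [IsAlgClosed K] {A : Matrix ι ι K}
    (hA : Squarefree (minpoly K A)) :
    ∃ (P : Matrix ι ι K) (d : ι → K), IsUnit P ∧ SemiconjBy P (diagonal d) A := by
  classical
  let T : Module.End K (ι → K) := toLin' A
  have semisimple : T.IsSemisimple :=
    Module.End.isSemisimple_of_squarefree_aeval_eq_zero (by rwa [minpoly_toLin'])
      (minpoly.aeval K T)
  have internal := DirectSum.isInternal_submodule_of_iSupIndep_of_iSup_eq_top
    T.eigenspaces_iSupIndep semisimple.iSup_eigenspace_eq_top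
  let v := internal.collectedBasis fun μ => Module.finBasis K (T.eigenspace μ)
  let e := v.indexEquiv (Pi.basisFun K ι)
  let b := v.reindex e
  have hb (j : ι) : A *ᵥ b j = (e.symm j).1 • b j := by
    rw [← toLin'_apply, Module.Basis.reindex_apply]
    exact Module.End.mem_eigenspace_iff.mp (internal.collectedBasis_mem _ (e.symm j))
  refine ⟨of fun i j => b j i, fun j => (e.symm j).1,
    linearIndependent_cols_iff_isUnit.mp b.linearIndependent, ?_⟩
  ext i j
  rw [mul_diagonal, mul_comm]
  exact (congrFun (hb j) i).symm

end Diagonalization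

section FlagPerturbation

variable {K V : Type*} [Field K] [AddCommGroup V] [Module K V]

/-- `T` acts triangularly on the first `m` steps of the flag `W`, with diagonal entries `a`: it
preserves each `W (j + 1)`, and acts on `W (j + 1) / W j` as the scalar `a j`. -/
def IsTriangularOn (W : ℕ → Submodule K V) (m : ℕ) (T : Module.End K V) (a : ℕ → K) : Prop :=
  ∀ j < m, ∀ v ∈ W (j + 1), T v - a j • v ∈ W j

namespace IsTriangularOn

variable {W : ℕ → Submodule K V} {m : ℕ} {T B : Module.End K V} {a b : ℕ → K}

lemma add_smul (hT : IsTriangularOn W m T a) (hB : IsTriangularOn W m B b) (s : K) :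
    IsTriangularOn W m (T + s • B) (fun j => a j + s * b j) := by
  intro j hj v hv
  convert (W j).add_mem (hT j hj v hv) ((W j).smul_mem s (hB j hj v hv)) using 1
  simp only [LinearMap.add_apply, LinearMap.smul_apply]
  module

lemma aeval_prod_apply_eq_zero (hW : W 0 = ⊥) (hT : IsTriangularOn W m T a) :
    ∀ v ∈ W m, aeval T (∏ i ∈ Finset.range m, (X - C (a i))) v = 0 := by
  induction m with
  | zero => simp [hW]
  | succ m ih =>
    intro v hv
    rw [Finset.prod_range_succ, map_mul, Module.End.mul_apply]
    refine ih (fun j hj => hT j (hj.trans m.lt_succ_self)) _ ?_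
    simpa [Algebra.algebraMap_eq_smul_one] using hT m m.lt_succ_self v hv

end IsTriangularOn

lemma exists_isTriangularOn {W : ℕ → Submodule K V} (hW : Monotone W) (m : ℕ) (b : ℕ → K) :
    ∃ B : Module.End K V, IsTriangularOn W m B b := by
  choose W' hW' using fun j => (W j).exists_isCompl
  let E (j : ℕ) : Module.End K V := (W j).projection (W' j) (hW' j)
  have E_mem (j : ℕ) (v : V) : E j v ∈ W j := Submodule.projection_apply_mem _ v
  have E_eq_self {j : ℕ} {v : V} (hv : v ∈ W j) : E j v = v :=
    Submodule.projection_apply_of_mem_left _ hv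
  refine ⟨∑ i ∈ Finset.range m, b i • (E (i + 1) - E i), fun j hj v hv => ?_⟩
  have term_mem (i : ℕ) : b i • (E (i + 1) v - E i v) - (if i = j then b j • v else 0) ∈ W j := by
    rcases lt_trichotomy i j with hij | rfl | hij
    · rw [if_neg hij.ne, sub_zero]
      exact (W j).smul_mem _ ((W j).sub_mem (hW hij (E_mem _ v)) (hW hij.le (E_mem _ v)))
    · rw [if_pos rfl, E_eq_self hv, ← smul_sub, sub_sub_cancel_left]
      exact (W i).smul_mem _ ((W i).neg_mem (E_mem i v))
    · rw [if_neg hij.ne', E_eq_self (hW (hij.trans i.lt_succ_self) hv), E_eq_self (hW hij hv)]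
      simp
  have sum_mem := (W j).sum_mem fun i (_ : i ∈ Finset.range m) => term_mem i
  simpa [LinearMap.sum_apply, Finset.sum_sub_distrib, hj] using sum_mem

lemma exists_perturbation {T : Module.End K V} {m : ℕ} {a : ℕ → K}
    (hT : aeval T (∏ i ∈ Finset.range m, (X - C (a i))) = 0) (b : ℕ → K) :
    ∃ B : Module.End K V, ∀ s : K,
      aeval (T + s • B) (∏ i ∈ Finset.range m, (X - C (a i + s * b i))) = 0 := by
  let W (j : ℕ) : Submodule K V := LinearMap.ker (aeval T (∏ i ∈ Finset.range j, (X - C (a i))))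
  have W_zero : W 0 = ⊥ := by simp [W, Module.End.one_eq_id]
  have W_top : W m = ⊤ := by rw [LinearMap.ker_eq_top, hT]
  have W_mono : Monotone W := by
    refine monotone_nat_of_le_succ fun j v hv => ?_
    rw [LinearMap.mem_ker] at hv ⊢
    rw [Finset.prod_range_succ, mul_comm, map_mul, Module.End.mul_apply, hv, map_zero]
  have T_triangular : IsTriangularOn W m T a := by
    intro j _ v hv
    rw [LinearMap.mem_ker, Finset.prod_range_succ, map_mul, Module.End.mul_apply] at hv
    simpa [W, Algebra.algebraMap_eq_smul_one] using hv
  obtain ⟨B, B_triangular⟩ := exists_isTriangularOn W_mono m b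
  refine ⟨B, fun s => LinearMap.ext fun v => ?_⟩
  exact (T_triangular.add_smul B_triangular s).aeval_prod_apply_eq_zero W_zero v (by simp [W_top])

lemma finite_setOf_not_injOn_add_mul (a : ℕ → K) {b : ℕ → K} (hb : Function.Injective b) (m : ℕ) :
    {s : K | ¬ Set.InjOn (fun i => a i + s * b i) (Finset.range m)}.Finite := by
  classical
  refine ((Finset.range m ×ˢ Finset.range m).image
    fun p => (a p.1 - a p.2) / (b p.2 - b p.1)).finite_toSet.subset fun s hs => ?_
  obtain ⟨i, hi, j, hj, heq, hij⟩ : ∃ i ∈ Finset.range m, ∃ j ∈ Finset.range m,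
      a i + s * b i = a j + s * b j ∧ i ≠ j := by
    simpa [Set.InjOn] using hs
  refine Finset.mem_image.mpr ⟨(i, j), Finset.mk_mem_product hi hj, ?_⟩
  rw [div_eq_iff (sub_ne_zero.mpr (hb.ne hij.symm))]
  linear_combination heq

variable {ι : Type*} [Fintype ι] [DecidableEq ι]

theorem mem_zariskiClosure_squarefree_minpoly [IsAlgClosed K] {m : ℕ} {A : Matrix ι ι K}
    (hA : (minpoly K A).natDegree ≤ m) :
    A ∈ zariskiClosure {B : Matrix ι ι K |
      Squarefree (minpoly K B) ∧ (minpoly K B).natDegree ≤ m} := by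
  have : Infinite K := IsAlgClosed.instInfinite
  rw [← minpoly_toLin'] at hA
  obtain ⟨a, ha⟩ := exists_aeval_prod_X_sub_C_eq_zero (Algebra.IsIntegral.isIntegral _) hA
  let b := Infinite.natEmbedding K
  obtain ⟨B, hB⟩ := exists_perturbation ha b
  let F : Matrix ι ι K[X] := A.map C + (X : K[X]) • (LinearMap.toMatrix' B).map C
  have map_F (s : K) : F.map (evalRingHom s) = A + s • LinearMap.toMatrix' B := by
    ext i j
    simp only [F, Matrix.map_apply, Matrix.add_apply, Matrix.smul_apply, smul_eq_mul,
      coe_evalRingHom, eval_add, eval_mul, eval_C, eval_X]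
  have map_F_mem (s : K) (hs : Set.InjOn (fun i => a i + s * b i) (Finset.range m)) :
      F.map (evalRingHom s) ∈
        {B : Matrix ι ι K | Squarefree (minpoly K B) ∧ (minpoly K B).natDegree ≤ m} := by
    let p := ∏ i ∈ Finset.range m, (X - C (a i + s * b i))
    have p_separable : p.Separable := separable_prod_X_sub_C_iff'.mpr hs
    have minpoly_dvd : minpoly K (A + s • LinearMap.toMatrix' B) ∣ p := by
      rw [← minpoly_toLin', map_add, map_smul, toLin'_toMatrix']
      exact minpoly.dvd K _ (hB s)
    rw [map_F]
    refine ⟨p_separable.squarefree.squarefree_of_dvd minpoly_dvd, ?_⟩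
    calc (minpoly K (A + s • LinearMap.toMatrix' B)).natDegree ≤ p.natDegree :=
          natDegree_le_of_dvd minpoly_dvd p_separable.ne_zero
      _ = m := by rw [natDegree_finsetProd_X_sub_C_eq_card, Finset.card_range]
  have infinite_injOn := (finite_setOf_not_injOn_add_mul a b.injective m).infinite_compl
  have mem_closure := map_eval_mem_zariskiClosure F infinite_injOn
    (fun s hs => map_F_mem s (not_not.mp hs)) 0
  rwa [map_F, zero_smul, add_zero] at mem_closure

end FlagPerturbation

section SkewHermitianLine

variable {ι : Type*}

/-- The line through `M` at time `I` whose values at real times are skew-Hermitian. -/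
noncomputable def skewHermitianLine (M : Matrix ι ι ℂ) : Matrix ι ι ℂ[X] :=
  (Complex.I • (ℑ M : Matrix ι ι ℂ)).map C - (X : ℂ[X]) • (Complex.I • (ℜ M : Matrix ι ι ℂ)).map C

lemma map_eval_skewHermitianLine (M : Matrix ι ι ℂ) (t : ℂ) :
    (skewHermitianLine M).map (evalRingHom t) =
      Complex.I • (ℑ M : Matrix ι ι ℂ) - t • Complex.I • (ℜ M : Matrix ι ι ℂ) := by
  ext i j
  simp [skewHermitianLine]

lemma map_eval_I_skewHermitianLine (M : Matrix ι ι ℂ) :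
    (skewHermitianLine M).map (evalRingHom Complex.I) = M := by
  rw [map_eval_skewHermitianLine, smul_smul, Complex.I_mul_I, neg_one_smul, sub_neg_eq_add,
    add_comm, realPart_add_I_smul_imaginaryPart]

lemma conjTranspose_map_eval_ofReal_skewHermitianLine (M : Matrix ι ι ℂ) (t : ℝ) :
    ((skewHermitianLine M).map (evalRingHom (t : ℂ)))ᴴ =
      -(skewHermitianLine M).map (evalRingHom (t : ℂ)) := by
  have star_re : (ℜ M : Matrix ι ι ℂ)ᴴ = ℜ M := (ℜ M).2
  have star_im : (ℑ M : Matrix ι ι ℂ)ᴴ = ℑ M := (ℑ M).2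
  rw [map_eval_skewHermitianLine, conjTranspose_sub, conjTranspose_smul, conjTranspose_smul,
    conjTranspose_smul, star_re, star_im]
  simp only [Complex.star_def, Complex.conj_I, Complex.conj_ofReal]
  module

end SkewHermitianLine

section Cayley

variable {ι : Type*} [Fintype ι] [DecidableEq ι]

section CommRing

variable {R : Type*} [CommRing R]

/-- The conjugate of `D` by the Cayley transform `(1 + M)(1 - M)⁻¹` of `M`, with the inverses
replaced by adjugates so that its entries are polynomials in those of `M` and `D`. For invertible
`1 ± M` it is the true conjugate multiplied by `det (1 + M) * det (1 - M)`. -/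
def cayleyConj (M D : Matrix ι ι R) : Matrix ι ι R :=
  (1 + M) * (1 - M).adjugate * D * ((1 + M).adjugate * (1 - M))

lemma map_cayleyConj {S : Type*} [CommRing S] (φ : R →+* S) (M D : Matrix ι ι R) :
    (cayleyConj M D).map φ = cayleyConj (M.map φ) (D.map φ) := by
  simp only [cayleyConj, ← RingHom.mapMatrix_apply, map_mul, map_add, map_sub, map_one,
    RingHom.map_adjugate]

lemma semiconjBy_cayleyConj (M D : Matrix ι ι R) :
    SemiconjBy ((1 + M) * (1 - M).adjugate) (((1 + M).det * (1 - M).det) • D)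
      (cayleyConj M D) := by
  have comm : (1 - M) * (1 + M) = (1 + M) * (1 - M) := by noncomm_ring
  have cancel : (1 + M).adjugate * (1 - M) * ((1 + M) * (1 - M).adjugate) =
      ((1 + M).det * (1 - M).det) • 1 := by
    calc _ = (1 + M).adjugate * ((1 - M) * (1 + M)) * (1 - M).adjugate := by
          simp only [mul_assoc]
      _ = ((1 + M).adjugate * (1 + M)) * ((1 - M) * (1 - M).adjugate) := by
          rw [comm]; simp only [mul_assoc]
      _ = _ := by rw [adjugate_mul, mul_adjugate, smul_mul_smul_comm, mul_one]
  rw [SemiconjBy, cayleyConj, mul_assoc _ _ (_ * adjugate _), cancel]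
  simp only [mul_smul_comm, mul_one]

lemma isHermitian_cayleyConj [StarRing R] {M D : Matrix ι ι R} (hM : Mᴴ = -M)
    (hD : D.IsHermitian) : (cayleyConj M D).IsHermitian := by
  simp only [cayleyConj, IsHermitian, conjTranspose_mul, adjugate_conjTranspose, conjTranspose_add,
    conjTranspose_sub, conjTranspose_one, hM, hD.eq, sub_neg_eq_add, ← sub_eq_add_neg, mul_assoc]

end CommRing

open scoped ComplexOrder in
lemma isUnit_one_add_of_conjTranspose_eq_neg {𝕜 : Type*} [RCLike 𝕜] {M : Matrix ι ι 𝕜}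
    (hM : Mᴴ = -M) : IsUnit (1 + M) := by
  have gram : (1 + M)ᴴ * (1 + M) = 1 + Mᴴ * M := by
    rw [conjTranspose_add, conjTranspose_one, hM]
    noncomm_ring
  have posDef : ((1 + M)ᴴ * (1 + M)).PosDef :=
    gram ▸ PosDef.one.add_posSemidef (posSemidef_conjTranspose_mul_self M)
  exact isUnit_of_mul_isUnit_right posDef.isUnit

lemma exists_cayley_eq_smul {K : Type*} [Field K] [Infinite K] [NeZero (2 : K)] {P : Matrix ι ι K}
    (hP : IsUnit P) :
    ∃ (M : Matrix ι ι K) (c : K), c ≠ 0 ∧ IsUnit (1 + M) ∧ IsUnit (1 - M) ∧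
      (1 + M) * (1 - M).adjugate = c • P := by
  obtain ⟨μ, hμ⟩ := ((Matrix.finite_spectrum P).insert 0).infinite_compl.nonempty
  obtain ⟨μ_ne_zero, unit_sub⟩ : μ ≠ 0 ∧ IsUnit (algebraMap K _ μ - P) := by
    simpa [spectrum.notMem_iff] using hμ
  obtain ⟨R, hR⟩ := unit_sub.exists_right_inv
  have unit_R : IsUnit R := IsUnit.of_mul_eq_one_right _ hR
  have two_mu_ne_zero : 2 * μ ≠ 0 := mul_ne_zero two_ne_zero μ_ne_zero
  let M := 1 - (2 * μ) • R
  have one_sub : 1 - M = (2 * μ) • R := sub_sub_cancel _ _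
  -- `M = (P - μ)⁻¹ (P + μ)`, so that the Cayley transform of `M` is a multiple of `P`.
  have one_add : 1 + M = (-μ⁻¹) • (P * (1 - M)) := by
    have hPR : P * R = μ • R - 1 := by
      rw [← hR, sub_mul, Algebra.algebraMap_eq_smul_one, smul_mul_assoc, one_mul, sub_sub_cancel]
    rw [one_sub, mul_smul_comm, hPR, smul_smul, show -μ⁻¹ * (2 * μ) = -2 by field_simp]
    module
  have unit_one_sub : IsUnit (1 - M) := one_sub ▸ unit_R.smul (Units.mk0 _ two_mu_ne_zero)
  have inv_ne_zero : -μ⁻¹ ≠ 0 := neg_ne_zero.mpr (inv_ne_zero μ_ne_zero)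
  refine ⟨M, -μ⁻¹ * (1 - M).det, ?_, ?_, unit_one_sub, ?_⟩
  · exact mul_ne_zero inv_ne_zero ((isUnit_iff_isUnit_det _).mp unit_one_sub).ne_zero
  · exact one_add ▸ (hP.mul unit_one_sub).smul (Units.mk0 _ inv_ne_zero)
  · rw [one_add, smul_mul_assoc, mul_assoc, mul_adjugate, mul_smul_comm, mul_one, smul_smul]

lemma natDegree_minpoly_cayleyConj_diagonal_le {K : Type*} [Field K] [DecidableEq K]
    {M : Matrix ι ι K} (h_add : IsUnit (1 + M)) (h_sub : IsUnit (1 - M)) (d : ι → K) :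
    (minpoly K (cayleyConj M (diagonal d))).natDegree ≤ (Finset.univ.image d).card := by
  have h := semiconjBy_cayleyConj M (diagonal d)
  have unit_adjugate : IsUnit (1 - M).adjugate := by
    rw [isUnit_iff_isUnit_det, det_adjugate]
    exact ((isUnit_iff_isUnit_det _).mp h_sub).pow _
  rw [← diagonal_smul] at h
  rw [natDegree_minpoly_eq_card_image (h_add.mul unit_adjugate) h]
  exact card_image_comp_le _ d _

theorem cayleyConj_diagonal_mem_zariskiClosure (M : Matrix ι ι ℂ) (d : ι → ℂ) :
    cayleyConj M (diagonal d) ∈ zariskiClosure {B : Matrix ι ι ℂ |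
      B.IsHermitian ∧ (minpoly ℂ B).natDegree ≤ (Finset.univ.image d).card} := by
  let N := skewHermitianLine M
  let D : Matrix ι ι ℂ[X] := diagonal fun i => C ((d i).re : ℂ) + C ((d i).im : ℂ) * X
  have map_D (t : ℂ) : D.map (evalRingHom t) =
      diagonal ((fun z : ℂ => (z.re + z.im * t : ℂ)) ∘ d) := by
    rw [diagonal_map (map_zero _)]
    simp [Function.comp_def]
  have map_cayleyConj_I : (cayleyConj N D).map (evalRingHom Complex.I) =
      cayleyConj M (diagonal d) := by
    rw [map_cayleyConj, map_eval_I_skewHermitianLine, map_D]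
    simp [Function.comp_def, Complex.re_add_im]
  rw [← map_cayleyConj_I]
  refine map_eval_mem_zariskiClosure _
    (Set.infinite_range_of_injective Complex.ofReal_injective) ?_ _
  rintro _ ⟨t, rfl⟩
  have skew := conjTranspose_map_eval_ofReal_skewHermitianLine M t
  have skew_neg : (-N.map (evalRingHom (t : ℂ)))ᴴ = - -N.map (evalRingHom (t : ℂ)) := by
    rw [conjTranspose_neg, skew]
  rw [map_cayleyConj, map_D]
  refine ⟨isHermitian_cayleyConj skew ?_, ?_⟩
  · simp [IsHermitian, diagonal_conjTranspose]
  · refine (natDegree_minpoly_cayleyConj_diagonal_le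
      (isUnit_one_add_of_conjTranspose_eq_neg skew) ?_ _).trans
      (card_image_comp_le _ d _)
    exact sub_eq_add_neg (1 : Matrix ι ι ℂ) _ ▸ isUnit_one_add_of_conjTranspose_eq_neg skew_neg

theorem mem_zariskiClosure_isHermitian_of_squarefree_minpoly {m : ℕ} {A : Matrix ι ι ℂ}
    (hA : Squarefree (minpoly ℂ A)) (hm : (minpoly ℂ A).natDegree ≤ m) :
    A ∈ zariskiClosure {B : Matrix ι ι ℂ | B.IsHermitian ∧ (minpoly ℂ B).natDegree ≤ m} := by
  obtain ⟨P, d, hP, hd⟩ := exists_semiconjBy_diagonal_of_squarefree_minpoly hA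
  obtain ⟨M, c, hc, h_add, h_sub, hMP⟩ := exists_cayley_eq_smul hP
  let δ := (1 + M).det * (1 - M).det
  have δ_ne_zero : δ ≠ 0 := mul_ne_zero ((isUnit_iff_isUnit_det _).mp h_add).ne_zero
    ((isUnit_iff_isUnit_det _).mp h_sub).ne_zero
  have A_eq : A = cayleyConj M (diagonal (δ⁻¹ • d)) := by
    have h := semiconjBy_cayleyConj M (diagonal (δ⁻¹ • d))
    rw [hMP, ← diagonal_smul, smul_inv_smul₀ δ_ne_zero, SemiconjBy, smul_mul_assoc,
      mul_smul_comm, smul_right_inj hc, hd.eq] at h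
    exact hP.mul_left_injective h
  rw [A_eq]
  rw [natDegree_minpoly_eq_card_image hP hd] at hm
  refine zariskiClosure_subset_zariskiClosure (fun B hB => ?_)
    (cayleyConj_diagonal_mem_zariskiClosure M _)
  exact subset_zariskiClosure _
    ⟨hB.1, hB.2.trans ((card_image_comp_le _ d (δ⁻¹ * ·)).trans hm)⟩

theorem setOf_natDegree_minpoly_le_subset_zariskiClosure (m : ℕ) :
    {A : Matrix ι ι ℂ | (minpoly ℂ A).natDegree ≤ m} ⊆
      zariskiClosure {A : Matrix ι ι ℂ | A.IsHermitian ∧ (minpoly ℂ A).natDegree ≤ m} :=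
  fun _ hA => zariskiClosure_subset_zariskiClosure
    (fun _ hB => mem_zariskiClosure_isHermitian_of_squarefree_minpoly hB.1 hB.2)
    (mem_zariskiClosure_squarefree_minpoly hA)

end Cayley

/-- The Zariski closure in `ℂ^{n×n}` of the set of `k`-degenerate Hermitian matrices
is the set of all `k`-degenerate complex matrices: any polynomial vanishing on all
`k`-degenerate Hermitian matrices vanishes on all `k`-degenerate complex matrices. -/
theorem stmt_2 (n k : ℕ) (hn : 2 ≤ n) (hk : k ≤ n - 1)
    (f : MvPolynomial (Fin n × Fin n) ℂ)
    (hvan : ∀ A : Matrix (Fin n) (Fin n) ℂ, A.IsHermitian →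
      ¬ LinearIndependent ℂ (fun r : Fin (n - k + 1) => A ^ (r : ℕ)) →
      MvPolynomial.eval (fun p => A p.1 p.2) f = 0) :
    ∀ A : Matrix (Fin n) (Fin n) ℂ,
      ¬ LinearIndependent ℂ (fun r : Fin (n - k + 1) => A ^ (r : ℕ)) →
      MvPolynomial.eval (fun p => A p.1 p.2) f = 0 := by
  intro A hA
  have degenerate_iff (B : Matrix (Fin n) (Fin n) ℂ) :=
    not_linearIndependent_pow_iff_natDegree_minpoly_le (m := n - k) (Matrix.isIntegral B)
  exact setOf_natDegree_minpoly_le_subset_zariskiClosure (n - k) ((degenerate_iff A).mp hA) f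
    fun B hB => hvan B hB.1 ((degenerate_iff B).mpr hB.2)
end

section
/- Let n ≥ 2 and 0 ≤ k ≤ n−1. For every polynomial f ∈ MvPolynomial (Fin n × Fin n) ℂ, if f vanishes at the complexification of every k-degenerate real symmetric matrix B ∈ Matrix (Fin n) (Fin n) ℝ (i.e., at the complex matrix with entries (algebraMap ℝ ℂ) (B i j)), then f vanishes at every k-degenerate complex symmetric matrix A ∈ Matrix (Fin n) (Fin n) ℂ. (I.e., the Zariski closure in Sym(n,ℂ) of the set of k-degenerate real symmetric matrices is the set of all k-degenerate complex symmetric matrices.) -/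
open Matrix

/-!
Let `A` be a complex symmetric matrix killed by a nonzero polynomial of degree `d`.

*Making `A` diagonalizable.* Let `l` be a root of that polynomial, with cofactor `q`, and factor
`A - l = C Cᵀ` with `C` injective. Then `Cᵀ C + l` is symmetric and is killed by `q`, because
`(C E + l - l) q(C E + l) = C q(E C + l) E`. By induction `Cᵀ C + l` is a limit of symmetric
matrices killed by separable polynomials of degree at most `d - 1`; a generic shift makes these
polynomials nonzero at `l`. Since `X ↦ Xᵀ X` is open at `C` onto symmetric matrices, the
approximants are of the form `Xᵀ X + l` with `X` close to `C`, and `X Xᵀ + l` is the required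
approximation of `A`.

*Passing to real matrices.* A symmetric matrix killed by a separable polynomial of degree at most
`d` is `Q diag(μ ∘ c) Qᵀ` with `Q` complex orthogonal and `μ` a tuple of at most `d` complex
numbers. Real orthogonal matrices are Zariski dense in the complex ones, through the rational
parametrization by skew-symmetric matrices, and real tuples are Zariski dense in the complex ones.
For real `Q` and `μ` the matrix is real symmetric and is killed by `∏ (X - μ i)`.
-/

namespace DegenerateSymm

open Polynomial Filter Topology

section MatrixPolynomials

theorem not_linearIndependent_pow_iff {R A : Type*} [CommRing R] [Ring A] [Algebra R A]
    (a : A) (d : ℕ) :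
    ¬ LinearIndependent R (fun r : Fin d => a ^ (r : ℕ)) ↔
      ∃ p : R[X], p ≠ 0 ∧ p.degree < d ∧ aeval a p = 0 := by
  have linearCombination_eq : Fintype.linearCombination R (fun r : Fin d => a ^ (r : ℕ)) =
      ((aeval a).toLinearMap ∘ₗ (degreeLT R d).subtype) ∘ₗ (degreeLTEquiv R d).symm :=
    LinearMap.ext fun g => by
      simp [degreeLTEquiv, Fintype.linearCombination_apply, aeval_monomial, Algebra.smul_def]
  rw [linearIndependent_iff_injective_fintypeLinearCombination, linearCombination_eq,
    LinearMap.coe_comp, LinearEquiv.coe_coe, EquivLike.injective_comp,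
    injective_iff_map_eq_zero]
  simp only [LinearMap.coe_comp, AlgHom.toLinearMap, Subtype.forall, mem_degreeLT]
  simp [and_left_comm, and_comm]

variable {ι κ : Type*} [Fintype ι] [DecidableEq ι] [Fintype κ] [DecidableEq κ]

theorem mul_aeval_eq_aeval_mul {R : Type*} [CommRing R] {A : Matrix ι ι R} {B : Matrix κ κ R}
    {C : Matrix ι κ R} (h : C * B = A * C) (p : R[X]) : C * aeval B p = aeval A p * C := by
  induction p using Polynomial.induction_on with
  | C a => simp [Algebra.algebraMap_eq_smul_one]
  | add p q hp hq => simp only [map_add, Matrix.mul_add, Matrix.add_mul, hp, hq]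
  | monomial n a ih =>
    simp only [pow_succ, ← mul_assoc, map_mul _ _ X, aeval_X]
    rw [← Matrix.mul_assoc, ih, Matrix.mul_assoc, h, Matrix.mul_assoc]

theorem isSymm_aeval {R : Type*} [CommRing R] {A : Matrix ι ι R} (hA : A.IsSymm) (p : R[X]) :
    (aeval A p).IsSymm := by
  induction p using Polynomial.induction_on' with
  | add p q hp hq => rw [map_add]; exact hp.add hq
  | monomial n a =>
    rw [aeval_monomial, ← Algebra.smul_def]
    exact (hA.pow n).smul a

theorem aeval_diagonal {R : Type*} [CommRing R] (v : ι → R) (p : R[X]) :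
    aeval (diagonal v) p = diagonal fun i => p.eval (v i) := by
  have h := aeval_algHom_apply (diagonalAlgHom R (n := ι) (α := R)) v p
  simpa [aeval_pi_apply, coe_aeval_eq_eval] using h

theorem aeval_mul_add_smul_one {R : Type*} [CommRing R] (C : Matrix ι κ R) (E : Matrix κ ι R)
    (l : R) (q : R[X]) :
    aeval (C * E + l • 1) ((X - Polynomial.C l) * q) = C * aeval (E * C + l • 1) q * E := by
  have intertwine : C * (E * C + l • 1) = (C * E + l • 1) * C := by
    simp [Matrix.mul_add, Matrix.add_mul, Matrix.mul_assoc]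
  rw [mul_aeval_eq_aeval_mul intertwine, mul_comm, map_mul, Matrix.mul_assoc]
  simp [Algebra.algebraMap_eq_smul_one]

end MatrixPolynomials

section Factorization

variable {ι F : Type*} [Fintype ι] [DecidableEq ι] [Field F] [NeZero (2 : F)]

theorem exists_eq_mul_diagonal_mul_transpose {A : Matrix ι ι F} (hA : A.IsSymm) :
    ∃ (R : Matrix ι ι F) (w : ι → F), IsUnit R ∧ A = R * diagonal w * Rᵀ := by
  have : Invertible (2 : F) := invertibleOfNonzero two_ne_zero
  obtain ⟨v, hv⟩ := LinearMap.BilinForm.exists_orthogonal_basis (B := toBilin' A)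
    (LinearMap.BilinForm.isSymm_iff.1 (isSymm_toBilin'_iff_isSymm.2 hA))
  let e := (finCongr (Module.finrank_fintype_fun_eq_card F)).trans (Fintype.equivFin ι).symm
  let b := v.reindex e
  let M : Matrix ι ι F := of b
  have isUnit_M : IsUnit M := linearIndependent_rows_iff_isUnit.1 b.linearIndependent
  have isUnit_det : IsUnit M.det := (isUnit_iff_isUnit_det M).1 isUnit_M
  have diag : M * A * Mᵀ = diagonal fun i => (M * A * Mᵀ) i i := by
    ext i j
    obtain rfl | hij := eq_or_ne i j
    · rw [diagonal_apply_eq]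
    · rw [diagonal_apply_ne _ hij, Matrix.mul_assoc]
      have orthogonal : toBilin' A (b i) (b j) = 0 := by
        simpa [b] using hv (e.symm.injective.ne hij)
      rwa [toBilin'_apply'] at orthogonal
  refine ⟨M⁻¹, fun i => (M * A * Mᵀ) i i, isUnit_nonsing_inv_iff.2 isUnit_M, ?_⟩
  rw [← diag, transpose_nonsing_inv, Matrix.mul_assoc M,
    Matrix.nonsing_inv_mul_cancel_left _ _ isUnit_det,
    Matrix.mul_nonsing_inv_cancel_right _ _ (by rwa [det_transpose])]

theorem exists_eq_mul_transpose [IsAlgClosed F] {A : Matrix ι ι F} (hA : A.IsSymm) :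
    ∃ (s : Finset ι) (C : Matrix ι s F) (L : Matrix s ι F), L * C = 1 ∧ A = C * Cᵀ := by
  classical
  obtain ⟨R, w, hR, rfl⟩ := exists_eq_mul_diagonal_mul_transpose hA
  have hRdet := (isUnit_iff_isUnit_det R).1 hR
  choose r hr using fun i => IsAlgClosed.exists_eq_mul_self (w i)
  let s := Finset.univ.filter fun i => r i ≠ 0
  let C : Matrix ι s F := (R * diagonal r).submatrix id (↑)
  refine ⟨s, C, (diagonal r⁻¹ * R⁻¹).submatrix (↑) id, ?_, ?_⟩
  · rw [← submatrix_mul _ _ _ _ _ Function.bijective_id, Matrix.mul_assoc,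
      nonsing_inv_mul_cancel_left _ _ hRdet, diagonal_mul_diagonal,
      submatrix_diagonal _ _ Subtype.val_injective, diagonal_eq_one]
    ext i
    exact inv_mul_cancel₀ (Finset.mem_filter.1 i.2).2
  · have omitted_columns (i j : ι) (x : ι) (hx : x ∉ s) :
        (R * diagonal r) i x * (R * diagonal r) j x = 0 := by
      have : r x = 0 := by simpa [s] using hx
      simp [this]
    ext i j
    calc (R * diagonal w * Rᵀ) i j
        = ((R * diagonal r) * (R * diagonal r)ᵀ) i j := by
          simp only [transpose_mul, diagonal_transpose, Matrix.mul_assoc, ← Matrix.mul_assoc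
            (diagonal r) (diagonal r), diagonal_mul_diagonal, ← hr]
      _ = ∑ x, (R * diagonal r) i x * (R * diagonal r) j x := rfl
      _ = ∑ x ∈ s, (R * diagonal r) i x * (R * diagonal r) j x :=
          (Finset.sum_subset s.subset_univ fun x _ => omitted_columns i j x).symm
      _ = (C * Cᵀ) i j := (Finset.sum_coe_sort s _).symm

end Factorization

section Density

-- `x ↦ B x x` alone has derivative `B c x + B x c`, which need not be surjective; the commutator
-- completes it to `2 • B c x`.
theorem nhds_le_map_bilinear_self_add_commutator {𝕜 E G : Type*} [NontriviallyNormedField 𝕜]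
    [CompleteSpace 𝕜] [NeZero (2 : 𝕜)] [NormedAddCommGroup E] [NormedSpace 𝕜 E]
    [FiniteDimensional 𝕜 E] [NormedAddCommGroup G] [NormedSpace 𝕜 G] [FiniteDimensional 𝕜 G]
    (B : E →L[𝕜] E →L[𝕜] G) {c : E} (surjective : Function.Surjective (B c)) :
    𝓝 (B c c) ≤ map (fun x => B x x + (B c x - B x c)) (𝓝 c) := by
  have : CompleteSpace E := FiniteDimensional.complete 𝕜 E
  have : CompleteSpace G := FiniteDimensional.complete 𝕜 G
  have strict : HasStrictFDerivAt (fun x => B x x + (B c x - B x c)) ((2 : 𝕜) • B c) c := by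
    refine ((B.hasStrictFDerivAt_of_bilinear (hasStrictFDerivAt_id c)
      (hasStrictFDerivAt_id c)).add ((B c).hasStrictFDerivAt.sub
        (B.flip c).hasStrictFDerivAt)).congr_fderiv ?_
    ext x
    simp [two_smul]
  have range_eq_top : ((2 : 𝕜) • B c).range = ⊤ := by
    rw [LinearMap.range_eq_top]
    intro y
    obtain ⟨x, rfl⟩ := surjective y
    exact ⟨(2 : 𝕜)⁻¹ • x, by simp [smul_smul, inv_mul_cancel₀ (two_ne_zero (α := 𝕜))]⟩
  simpa using (strict.map_nhds_eq_of_surj range_eq_top).ge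

theorem eq_zero_of_isSymm_of_transpose_eq_neg {κ 𝕜 : Type*} [Field 𝕜] [NeZero (2 : 𝕜)]
    {M : Matrix κ κ 𝕜} (symm : M.IsSymm) (skew : Mᵀ = -M) : M = 0 := by
  have two_smul_eq_zero : (2 : 𝕜) • M = 0 := by
    rw [two_smul]
    nth_rw 1 [← symm.eq]
    rw [skew, neg_add_cancel]
  exact (smul_eq_zero.1 two_smul_eq_zero).resolve_left two_ne_zero

theorem nhdsWithin_isSymm_le_map_transpose_mul_self {ι κ 𝕜 : Type*} [Fintype ι] [Finite κ]
    [DecidableEq κ] [NontriviallyNormedField 𝕜] [CompleteSpace 𝕜] [NeZero (2 : 𝕜)]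
    {C : Matrix ι κ 𝕜} {L : Matrix κ ι 𝕜} (hLC : L * C = 1) :
    𝓝[{S | S.IsSymm}] (Cᵀ * C) ≤ map (fun X : Matrix ι κ 𝕜 => Xᵀ * X) (𝓝 C) := by
  cases nonempty_fintype κ
  let : NormedAddCommGroup (Matrix ι κ 𝕜) := Matrix.normedAddCommGroup
  let : NormedAddCommGroup (Matrix κ κ 𝕜) := Matrix.normedAddCommGroup
  let : NormedSpace 𝕜 (Matrix ι κ 𝕜) := Matrix.normedSpace
  let : NormedSpace 𝕜 (Matrix κ κ 𝕜) := Matrix.normedSpace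
  let B : Matrix ι κ 𝕜 →L[𝕜] Matrix ι κ 𝕜 →L[𝕜] Matrix κ κ 𝕜 :=
    LinearMap.toContinuousBilinearMap
      (mulLinearMap 𝕜 ∘ₗ (transposeLinearEquiv ι κ 𝕜 𝕜).toLinearMap)
  have surjective : Function.Surjective (B C) := fun Y =>
    ⟨Lᵀ * Y, by
      change Cᵀ * (Lᵀ * Y) = Y
      rw [← Matrix.mul_assoc, ← transpose_mul, hLC, transpose_one, Matrix.one_mul]⟩
  intro U hU
  have image_mem :=
    nhds_le_map_bilinear_self_add_commutator B surjective (image_mem_map (mem_map.1 hU))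
  filter_upwards [mem_nhdsWithin_of_mem_nhds image_mem, self_mem_nhdsWithin]
  rintro _ ⟨X, hX, rfl⟩ hS
  replace hS : (Xᵀ * X + (Cᵀ * X - Xᵀ * C)).IsSymm := hS
  have commutator_eq_zero : Cᵀ * X - Xᵀ * C = 0 := by
    have gram_symm : (Xᵀ * X).IsSymm := by simp [IsSymm]
    exact eq_zero_of_isSymm_of_transpose_eq_neg (by simpa using hS.sub gram_symm) (by simp)
  change Xᵀ * X + (Cᵀ * X - Xᵀ * C) ∈ U
  rw [commutator_eq_zero, add_zero]
  exact hX

/-- The symmetric matrices annihilated by a polynomial with at most `d` roots, all of them in `𝕜`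
and simple: the dense part of the `d`-degenerate locus on which the spectral theorem is available.
The polynomial is encoded by its set of roots `s`, as `Lagrange.nodal s id = ∏ μ ∈ s, (X - C μ)`. -/
def symmSemisimple (ι 𝕜 : Type*) [Fintype ι] [DecidableEq ι] [Field 𝕜] (d : ℕ) :
    Set (Matrix ι ι 𝕜) :=
  {S | S.IsSymm ∧ ∃ s : Finset 𝕜, s.card ≤ d ∧ aeval S (Lagrange.nodal s id) = 0}

variable {ι κ 𝕜 : Type*} [Fintype ι] [DecidableEq ι] [Fintype κ] [DecidableEq κ]

theorem symmSemisimple_mono [Field 𝕜] : Monotone (symmSemisimple ι 𝕜) :=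
  fun _ _ h _ ⟨hS, s, hs, hSs⟩ => ⟨hS, s, hs.trans h, hSs⟩

theorem aeval_add_smul_one_nodal_map [Field 𝕜] (S : Matrix κ κ 𝕜) (z : 𝕜) (s : Finset 𝕜) :
    aeval (S + z • 1) (Lagrange.nodal (s.map (addRightEmbedding z)) id) =
      aeval S (Lagrange.nodal s id) := by
  have nodal_map : Lagrange.nodal (s.map (addRightEmbedding z)) id =
      (Lagrange.nodal s id).comp (X - Polynomial.C z) := by
    simp [Lagrange.nodal, prod_comp, sub_sub, add_comm]
  rw [nodal_map, aeval_comp]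
  simp [Algebra.algebraMap_eq_smul_one]

theorem symmSemisimple_subset_closure_notMem [NontriviallyNormedField 𝕜] (d : ℕ) (l : 𝕜) :
    symmSemisimple κ 𝕜 d ⊆ closure {S | S.IsSymm ∧
      ∃ s : Finset 𝕜, l ∉ s ∧ s.card ≤ d ∧ aeval S (Lagrange.nodal s id) = 0} := by
  classical
  rintro S ⟨hS, s, hs, hSs⟩
  have dense_shifts : Dense {z : 𝕜 | l ∉ s.map (addRightEmbedding z)} :=
    (dense_univ.sdiff_finset (s.image (l - ·))).mono fun z hz hl => by
      obtain ⟨x, hx, rfl⟩ := Finset.mem_map.1 hl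
      exact hz.2 (by simpa using ⟨x, hx, by simp⟩)
  have limit : S + (0 : 𝕜) • (1 : Matrix κ κ 𝕜) = S := by simp
  rw [← limit]
  exact map_mem_closure (f := fun z : 𝕜 => S + z • (1 : Matrix κ κ 𝕜)) (by fun_prop)
    (dense_shifts 0) fun z hz =>
      ⟨hS.add (isSymm_one.smul z), _, hz, (s.card_map _).trans_le hs,
        (aeval_add_smul_one_nodal_map S z s).trans hSs⟩

theorem add_smul_one_mem_symmSemisimple [Field 𝕜] {X : Matrix ι κ 𝕜} {l : 𝕜} {s : Finset 𝕜}
    (hl : l ∉ s) (h : aeval (Xᵀ * X + l • 1) (Lagrange.nodal s id) = 0) :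
    X * Xᵀ + l • 1 ∈ symmSemisimple ι 𝕜 (s.card + 1) := by
  classical
  refine ⟨by simp [IsSymm], insert l s, s.card_insert_le l, ?_⟩
  rw [Lagrange.nodal_insert_eq_nodal hl, id, aeval_mul_add_smul_one, h, Matrix.mul_zero,
    Matrix.zero_mul]

variable [NontriviallyNormedField 𝕜] [CompleteSpace 𝕜] [NeZero (2 : 𝕜)]

theorem add_smul_one_mem_closure_symmSemisimple
    {C : Matrix ι κ 𝕜} {L : Matrix κ ι 𝕜} (hLC : L * C = 1) {l : 𝕜} {d : ℕ}
    (h : Cᵀ * C + l • 1 ∈ closure (symmSemisimple κ 𝕜 d)) :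
    C * Cᵀ + l • 1 ∈ closure (symmSemisimple ι 𝕜 (d + 1)) := by
  let Generic (S : Matrix κ κ 𝕜) : Prop :=
    ∃ s : Finset 𝕜, l ∉ s ∧ s.card ≤ d ∧ aeval S (Lagrange.nodal s id) = 0
  have frequently_shift : ∃ᶠ S in 𝓝 (Cᵀ * C + l • 1), S.IsSymm ∧ Generic S :=
    mem_closure_iff_frequently.1
      (closure_minimal (symmSemisimple_subset_closure_notMem d l) isClosed_closure h)
  rw [← map_add_right_nhds, frequently_map] at frequently_shift
  have frequently_gram : ∃ᶠ S in 𝓝[{S | S.IsSymm}] (Cᵀ * C), Generic (S + l • 1) :=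
    frequently_nhdsWithin_iff.2 <| frequently_shift.mono fun S ⟨hS, hgen⟩ =>
      ⟨hgen, by simpa using hS.sub (isSymm_one.smul l)⟩
  have frequently_factor : ∃ᶠ X in 𝓝 C, Generic (Xᵀ * X + l • 1) :=
    frequently_map.1
      (frequently_gram.filter_mono (nhdsWithin_isSymm_le_map_transpose_mul_self hLC))
  have continuous_add : Continuous fun X : Matrix ι κ 𝕜 => X * Xᵀ + l • 1 := by fun_prop
  refine mem_closure_iff_frequently.2 (continuous_add.continuousAt.tendsto.frequently
    (frequently_factor.mono ?_))
  rintro X ⟨s, hl, hs, hX⟩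
  exact symmSemisimple_mono (Nat.succ_le_succ hs) (add_smul_one_mem_symmSemisimple hl hX)

theorem mem_closure_symmSemisimple_of_prod [IsAlgClosed 𝕜]
    {A : Matrix ι ι 𝕜} (hA : A.IsSymm) {t : Multiset 𝕜}
    (h : aeval A (t.map fun l => X - Polynomial.C l).prod = 0) :
    A ∈ closure (symmSemisimple ι 𝕜 t.card) := by
  induction t using Multiset.induction_on generalizing ι with
  | empty => exact subset_closure ⟨hA, ∅, by simp, by simpa using h⟩
  | cons l t ih =>
    obtain ⟨s, C, L, hLC, hC⟩ := exists_eq_mul_transpose (hA.sub (isSymm_one.smul l))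
    obtain rfl : A = C * Cᵀ + l • 1 := sub_eq_iff_eq_add.1 hC
    rw [Multiset.map_cons, Multiset.prod_cons, aeval_mul_add_smul_one] at h
    set q := (t.map fun l => X - Polynomial.C l).prod
    rw [Multiset.card_cons]
    refine add_smul_one_mem_closure_symmSemisimple hLC (ih (by simp [IsSymm]) ?_)
    calc aeval (Cᵀ * C + l • 1) q
        = (L * C) * aeval (Cᵀ * C + l • 1) q * (L * C)ᵀ := by simp [hLC]
      _ = L * (C * aeval (Cᵀ * C + l • 1) q * Cᵀ) * Lᵀ := by
        simp only [transpose_mul, Matrix.mul_assoc]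
      _ = 0 := by simp [h]

theorem mem_closure_symmSemisimple [IsAlgClosed 𝕜] {A : Matrix ι ι 𝕜} (hA : A.IsSymm)
    {p : 𝕜[X]} (hp : p ≠ 0) (h : aeval A p = 0) :
    A ∈ closure (symmSemisimple ι 𝕜 p.natDegree) := by
  rw [(IsAlgClosed.splits p).eq_prod_roots, map_mul, aeval_C, ← Algebra.smul_def,
    smul_eq_zero, or_iff_right (leadingCoeff_ne_zero.2 hp)] at h
  exact closure_mono (symmSemisimple_mono p.card_roots') (mem_closure_symmSemisimple_of_prod hA h)

end Density

section Spectral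

variable {ι F : Type*} [Fintype ι] [DecidableEq ι] [Field F]

theorem aeval_eq_of_forall_eval_eq {A : Type*} [Ring A] [Algebra F A] {a : A} {s : Finset F}
    (ha : aeval a (Lagrange.nodal s id) = 0) {p q : F[X]} (h : ∀ μ ∈ s, p.eval μ = q.eval μ) :
    aeval a p = aeval a q := by
  have nodal_dvd : Lagrange.nodal s id ∣ p - q :=
    Finset.prod_dvd_of_coprime
      (fun μ _ ν _ hne => pairwise_coprime_X_sub_C Function.injective_id hne)
      fun μ hμ => dvd_iff_isRoot.2 (by simp [h μ hμ])
  rw [← sub_eq_zero, ← map_sub]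
  exact aeval_eq_zero_of_dvd_aeval_eq_zero nodal_dvd ha

theorem eval_basis_id [DecidableEq F] {s : Finset F} (μ ν : s) :
    (Lagrange.basis s id (μ : F)).eval (ν : F) = if ν = μ then 1 else 0 := by
  split_ifs with h
  · rw [h]
    exact Lagrange.eval_basis_self Function.injective_id.injOn μ.2
  · exact Lagrange.eval_basis_of_ne (v := id) (fun hμν => h (Subtype.ext hμν.symm)) ν.2

theorem completeOrthogonalIdempotents_aeval_basis [DecidableEq F] {A : Type*} [Ring A]
    [Algebra F A] {a : A} {s : Finset F} (ha : aeval a (Lagrange.nodal s id) = 0) :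
    CompleteOrthogonalIdempotents fun μ : s => aeval a (Lagrange.basis s id (μ : F)) := by
  rw [CompleteOrthogonalIdempotents.iff_ortho_complete]
  refine ⟨fun μ ν hne => ?_, ?_⟩
  · simp only [← map_mul]
    rw [← map_zero (aeval (R := F) a)]
    refine aeval_eq_of_forall_eval_eq ha fun ξ hξ => ?_
    lift ξ to s using hξ
    rw [eval_mul, eval_basis_id, eval_basis_id]
    simpa using fun hν hμ => hne (hμ.symm.trans hν)
  · rw [← map_sum, ← map_one (aeval (R := F) a)]
    refine aeval_eq_of_forall_eval_eq ha fun ξ hξ => ?_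
    lift ξ to s using hξ
    simp [eval_finsetSum, eval_basis_id]

variable [IsAlgClosed F] [NeZero (2 : F)]

theorem exists_eq_mul_transpose_of_isIdempotentElem {P : Matrix ι ι F} (hP : P.IsSymm)
    (idem : IsIdempotentElem P) :
    ∃ (s : Finset ι) (C : Matrix ι s F), Cᵀ * C = 1 ∧ P = C * Cᵀ := by
  obtain ⟨s, C, L, hLC, rfl⟩ := exists_eq_mul_transpose hP
  refine ⟨s, C, ?_, rfl⟩
  calc Cᵀ * C = (L * C) * (Cᵀ * C) * (L * C)ᵀ := by simp [hLC]
    _ = L * ((C * Cᵀ) * (C * Cᵀ)) * Lᵀ := by simp only [transpose_mul, Matrix.mul_assoc]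
    _ = L * (C * Cᵀ) * Lᵀ := by rw [idem]
    _ = (L * C) * (L * C)ᵀ := by simp only [transpose_mul, Matrix.mul_assoc]
    _ = 1 := by simp [hLC]

theorem exists_orthogonal_forall_mul_eq {σ : Type*} [Fintype σ] [DecidableEq σ]
    {P : σ → Matrix ι ι F} (hP : CompleteOrthogonalIdempotents P) (symm : ∀ μ, (P μ).IsSymm) :
    ∃ (Q : Matrix ι ι F) (c : ι → σ), Qᵀ * Q = 1 ∧
      ∀ μ, P μ * Q = Q * diagonal fun i => if c i = μ then 1 else 0 := by
  choose t C hC hPC using fun μ => exists_eq_mul_transpose_of_isIdempotentElem (symm μ) (hP.idem μ)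
  have mul_eq_ite (μ ν : σ) : P μ * C ν = if ν = μ then C ν else 0 := by
    have : C ν = P ν * C ν := by rw [hPC, Matrix.mul_assoc, hC, Matrix.mul_one]
    split_ifs with h
    · rw [← h, ← this]
    · rw [this, ← Matrix.mul_assoc, hP.ortho (Ne.symm h), Matrix.zero_mul]
  have transpose_mul_eq_zero {μ ν : σ} (h : μ ≠ ν) : (C μ)ᵀ * C ν = 0 := by
    calc (C μ)ᵀ * C ν = ((C μ)ᵀ * C μ) * ((C μ)ᵀ * C ν) := by rw [hC, Matrix.one_mul]
      _ = (C μ)ᵀ * (P μ * C ν) := by simp only [hPC, Matrix.mul_assoc]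
      _ = 0 := by rw [mul_eq_ite, if_neg h.symm, Matrix.mul_zero]
  let Q : Matrix ι (Σ μ, t μ) F := of fun i x => C x.1 i x.2
  have transpose_mul_self : Qᵀ * Q = 1 := by
    ext ⟨μ, x⟩ ⟨ν, y⟩
    change ((C μ)ᵀ * C ν) x y = _
    obtain rfl | h := eq_or_ne μ ν
    · simp [hC, Matrix.one_apply]
    · simp [transpose_mul_eq_zero h, h]
  have mul_transpose_self : Q * Qᵀ = 1 := by
    rw [← hP.complete]
    ext i j
    simp only [Matrix.sum_apply, hPC, Matrix.mul_apply, Fintype.sum_sigma]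
    rfl
  let e : ι ≃ Σ μ, t μ :=
    Fintype.equivOfCardEq (square_of_invertible Q Qᵀ mul_transpose_self transpose_mul_self)
  refine ⟨Q.submatrix id e, fun i => (e i).1, ?_, fun μ => ?_⟩
  · rw [transpose_submatrix, ← submatrix_mul _ _ _ _ _ Function.bijective_id, transpose_mul_self,
      submatrix_one_equiv]
  · ext i j
    rw [mul_diagonal]
    calc (P μ * C (e j).1) i (e j).2
        = (if (e j).1 = μ then C (e j).1 else 0) i (e j).2 := by rw [mul_eq_ite]
      _ = C (e j).1 i (e j).2 * if (e j).1 = μ then 1 else 0 := by split_ifs <;> simp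

theorem exists_orthogonal_eq_mul_diagonal_mul_transpose {S : Matrix ι ι F} (hS : S.IsSymm)
    {s : Finset F} (h : aeval S (Lagrange.nodal s id) = 0) :
    ∃ (Q : Matrix ι ι F) (c : ι → s), Qᵀ * Q = 1 ∧
      S = Q * diagonal (fun i => (c i : F)) * Qᵀ := by
  classical
  obtain ⟨Q, c, hQ, hPQ⟩ := exists_orthogonal_forall_mul_eq
    (completeOrthogonalIdempotents_aeval_basis h) fun μ => isSymm_aeval hS _
  have spectral : S = ∑ μ : s, (μ : F) • aeval S (Lagrange.basis s id (μ : F)) := by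
    simp only [← map_smul, ← map_sum]
    nth_rw 1 [← aeval_X (R := F) S]
    refine aeval_eq_of_forall_eval_eq h fun ν hν => ?_
    lift ν to s using hν
    simp only [eval_X, eval_finsetSum, eval_smul, eval_basis_id, smul_eq_mul, mul_ite, mul_one,
      mul_zero, Finset.sum_ite_eq, Finset.mem_univ, if_true]
  have mul_eq : S * Q = Q * diagonal fun i => (c i : F) := by
    nth_rw 1 [spectral]
    simp only [Matrix.sum_mul, Matrix.smul_mul, hPQ]
    ext i j
    simp [Matrix.sum_apply, mul_diagonal, mul_comm]
  refine ⟨Q, c, hQ, ?_⟩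
  rw [← mul_eq, Matrix.mul_assoc, mul_eq_one_comm.1 hQ, Matrix.mul_one]

end Spectral

section Cayley

variable {ι R : Type*} [Fintype ι] [DecidableEq ι]

theorem exists_det_updateRow_add_smul_ne_zero [CommRing R] [IsDomain R] [NeZero (2 : R)]
    {N : Matrix ι ι R} (hN : N.det ≠ 0) (i : ι) (u : ι → R) :
    ∃ ε : ℤˣ, (N.updateRow i (u + ((ε : ℤ) : R) • N i)).det ≠ 0 := by
  by_contra! h
  have sum_eq_zero := h 1
  have diff_eq_zero := h (-1)
  rw [det_updateRow_add, det_updateRow_smul, updateRow_eq_self] at sum_eq_zero diff_eq_zero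
  push_cast at sum_eq_zero diff_eq_zero
  have : 2 * N.det = 0 := by linear_combination sum_eq_zero - diff_eq_zero
  exact hN ((mul_eq_zero.1 this).resolve_left two_ne_zero)

theorem exists_det_add_diagonal_units_ne_zero [CommRing R] [IsDomain R] [NeZero (2 : R)]
    (M : Matrix ι ι R) : ∃ e : ι → ℤˣ, (M + diagonal fun i => ((e i : ℤ) : R)).det ≠ 0 := by
  let partialSum (s : Finset ι) (e : ι → ℤˣ) : Matrix ι ι R :=
    of fun i => if i ∈ s then M i + ((e i : ℤ) : R) • Pi.single i 1 else Pi.single i 1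
  have partialSum_univ (e : ι → ℤˣ) :
      partialSum Finset.univ e = M + diagonal fun i => ((e i : ℤ) : R) := by
    ext i j
    simp [partialSum, diagonal_apply, Pi.single_apply, eq_comm]
  suffices ∀ s : Finset ι, ∃ e : ι → ℤˣ, (partialSum s e).det ≠ 0 by
    simpa only [partialSum_univ] using this Finset.univ
  intro s
  induction s using Finset.induction_on with
  | empty =>
    have partialSum_empty : partialSum ∅ 1 = 1 := by
      ext i j
      simp [partialSum, Matrix.one_apply, Pi.single_apply, eq_comm]
    exact ⟨1, by simp [partialSum_empty]⟩
  | insert i s hi ih =>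
    obtain ⟨e, he⟩ := ih
    obtain ⟨ε, hε⟩ := exists_det_updateRow_add_smul_ne_zero he i (M i)
    have partialSum_insert : partialSum (insert i s) (Function.update e i ε) =
        (partialSum s e).updateRow i (M i + ((ε : ℤ) : R) • partialSum s e i) := by
      ext j k
      obtain rfl | hj := eq_or_ne j i
      · simp [partialSum, hi]
      · simp [partialSum, hj]
    exact ⟨Function.update e i ε, by rwa [partialSum_insert]⟩

variable [CommRing R]

/-- The Cayley transform `(1 - K) (1 + K)⁻¹`, which exchanges skew-symmetric and orthogonal
matrices. It is meaningful only when `1 + K` is invertible. -/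
noncomputable def cayley (K : Matrix ι ι R) : Matrix ι ι R := (1 - K) * (1 + K)⁻¹

variable {K Q : Matrix ι ι R}

theorem cayley_mul_one_add (hK : IsUnit (1 + K).det) : cayley K * (1 + K) = 1 - K :=
  nonsing_inv_mul_cancel_right _ _ hK

theorem cayley_eq_of_mul_one_add (hK : IsUnit (1 + K).det) (h : Q * (1 + K) = 1 - K) :
    cayley K = Q := by
  rw [cayley, ← h, mul_nonsing_inv_cancel_right _ _ hK]

theorem cayley_map {S : Type*} [CommRing S] (φ : R →+* S) (hK : IsUnit (1 + K).det) :
    cayley (K.map φ) = (cayley K).map φ := by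
  have map_one_add : 1 + K.map φ = φ.mapMatrix (1 + K) := by
    rw [map_add, map_one, RingHom.mapMatrix_apply]
  have map_one_sub : 1 - K.map φ = φ.mapMatrix (1 - K) := by
    rw [map_sub, map_one, RingHom.mapMatrix_apply]
  refine cayley_eq_of_mul_one_add ?_ ?_
  · rw [map_one_add, ← RingHom.map_det]
    exact hK.map φ
  · rw [map_one_add, map_one_sub, ← cayley_mul_one_add hK, map_mul, ← RingHom.mapMatrix_apply]

theorem one_add_cayley (hK : IsUnit (1 + K).det) : (1 + cayley K) * (1 + K) = (2 : R) • 1 := by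
  rw [add_mul, cayley_mul_one_add hK, one_mul, two_smul]
  abel

theorem isUnit_det_one_add_cayley (h2 : IsUnit (2 : R)) (hK : IsUnit (1 + K).det) :
    IsUnit (1 + cayley K).det := by
  refine isUnit_of_mul_isUnit_left (y := (1 + K).det) ?_
  rw [← det_mul, one_add_cayley hK, det_smul, det_one, mul_one]
  exact h2.pow _

theorem cayley_cayley (h2 : IsUnit (2 : R)) (hK : IsUnit (1 + K).det) : cayley (cayley K) = K := by
  refine cayley_eq_of_mul_one_add (isUnit_det_one_add_cayley h2 hK) ?_
  have isUnit_one_add : IsUnit (1 + K) := (isUnit_iff_isUnit_det _).2 hK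
  refine isUnit_one_add.mul_left_injective ?_
  calc K * (1 + cayley K) * (1 + K) = (2 : R) • K := by
        rw [Matrix.mul_assoc, one_add_cayley hK, Matrix.mul_smul, Matrix.mul_one]
    _ = (1 + K) - cayley K * (1 + K) := by
        rw [cayley_mul_one_add hK, two_smul]
        abel
    _ = (1 - cayley K) * (1 + K) := by rw [Matrix.sub_mul, Matrix.one_mul]

theorem eq_zero_of_transpose_mul_mul_eq_zero {M N : Matrix ι ι R} (hM : IsUnit M.det)
    (h : Mᵀ * N * M = 0) : N = 0 := by
  have isUnit_M : IsUnit M := (isUnit_iff_isUnit_det M).2 hM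
  have isUnit_transpose : IsUnit Mᵀ := by rwa [isUnit_iff_isUnit_det, det_transpose]
  rwa [isUnit_M.mul_left_eq_zero, isUnit_transpose.mul_right_eq_zero] at h

theorem transpose_cayley_mul_cayley (hK : IsUnit (1 + K).det) (skew : Kᵀ = -K) :
    (cayley K)ᵀ * cayley K = 1 := by
  refine sub_eq_zero.1 (eq_zero_of_transpose_mul_mul_eq_zero hK ?_)
  calc (1 + K)ᵀ * ((cayley K)ᵀ * cayley K - 1) * (1 + K)
      = (cayley K * (1 + K))ᵀ * (cayley K * (1 + K)) - (1 + K)ᵀ * (1 + K) := by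
        rw [transpose_mul]; noncomm_ring
    _ = (1 - K)ᵀ * (1 - K) - (1 + K)ᵀ * (1 + K) := by rw [cayley_mul_one_add hK]
    _ = 0 := by
      rw [transpose_sub, transpose_add, transpose_one, skew]
      noncomm_ring

theorem transpose_cayley_eq_neg (hQ : IsUnit (1 + Q).det) (orthogonal : Qᵀ * Q = 1) :
    (cayley Q)ᵀ = -cayley Q := by
  refine eq_neg_of_add_eq_zero_left (eq_zero_of_transpose_mul_mul_eq_zero hQ ?_)
  calc (1 + Q)ᵀ * ((cayley Q)ᵀ + cayley Q) * (1 + Q)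
      = (cayley Q * (1 + Q))ᵀ * (1 + Q) + (1 + Q)ᵀ * (cayley Q * (1 + Q)) := by
        rw [transpose_mul]; noncomm_ring
    _ = (1 - Q)ᵀ * (1 + Q) + (1 + Q)ᵀ * (1 - Q) := by rw [cayley_mul_one_add hQ]
    _ = (2 : R) • (1 - Qᵀ * Q) := by
      rw [transpose_sub, transpose_add, transpose_one, two_smul]
      noncomm_ring
    _ = 0 := by rw [orthogonal, sub_self, smul_zero]

theorem det_one_add_ne_zero_of_skew {F : Type*} [Field F] [LinearOrder F] [IsStrictOrderedRing F]
    {K : Matrix ι ι F} (skew : Kᵀ = -K) : (1 + K).det ≠ 0 := by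
  rw [Ne, ← exists_mulVec_eq_zero_iff]
  rintro ⟨v, v_ne_zero, hv⟩
  have quadratic_eq_zero : v ⬝ᵥ (K *ᵥ v) = 0 := by
    have : v ⬝ᵥ (K *ᵥ v) = -(v ⬝ᵥ (K *ᵥ v)) := by
      calc v ⬝ᵥ (K *ᵥ v) = v ⬝ᵥ (Kᵀ *ᵥ v) := by
            rw [mulVec_transpose, dotProduct_mulVec, dotProduct_comm]
        _ = -(v ⬝ᵥ (K *ᵥ v)) := by rw [skew, neg_mulVec, dotProduct_neg]
    exact self_eq_neg.1 this
  refine v_ne_zero (dotProduct_self_eq_zero.1 ?_)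
  calc v ⬝ᵥ v = v ⬝ᵥ ((1 + K) *ᵥ v) := by
        rw [add_mulVec, one_mulVec, dotProduct_add, quadratic_eq_zero, add_zero]
    _ = 0 := by rw [hv, dotProduct_zero]

end Cayley

section RationalSubstitution

variable {σ 𝕜 : Type*} [Field 𝕜]

theorem exists_eval_eq_pow_mul_eval_div (f : MvPolynomial σ 𝕜) (a : σ → 𝕜[X]) (D : 𝕜[X]) :
    ∃ (P : 𝕜[X]) (N : ℕ), ∀ z, D.eval z ≠ 0 →
      P.eval z = D.eval z ^ N * MvPolynomial.eval (fun i => (a i).eval z / D.eval z) f := by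
  induction f using MvPolynomial.induction_on with
  | C r => exact ⟨Polynomial.C r, 0, by simp⟩
  | add f g hf hg =>
    obtain ⟨P, N, hP⟩ := hf
    obtain ⟨P', N', hP'⟩ := hg
    refine ⟨D ^ N' * P + D ^ N * P', N + N', fun z hz => ?_⟩
    simp only [eval_add, eval_mul, eval_pow, hP z hz, hP' z hz, map_add]
    ring
  | mul_X f i hf =>
    obtain ⟨P, N, hP⟩ := hf
    refine ⟨P * a i, N + 1, fun z hz => ?_⟩
    simp only [eval_mul, hP z hz, map_mul, MvPolynomial.eval_X]
    field_simp
    ring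

theorem eval_div_eq_zero_of_infinite {f : MvPolynomial σ 𝕜} {a : σ → 𝕜[X]} {D : 𝕜[X]} {S : Set 𝕜}
    (hS : S.Infinite) (h : ∀ x ∈ S, D.eval x ≠ 0 →
      MvPolynomial.eval (fun i => (a i).eval x / D.eval x) f = 0) {z : 𝕜} (hz : D.eval z ≠ 0) :
    MvPolynomial.eval (fun i => (a i).eval z / D.eval z) f = 0 := by
  obtain ⟨P, N, hP⟩ := exists_eval_eq_pow_mul_eval_div f a D
  have mul_eq_zero_poly : P * D = 0 := by
    refine eq_zero_of_infinite_isRoot _ (hS.mono fun x hx => ?_)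
    obtain hD | hD := eq_or_ne (D.eval x) 0
    · simp [IsRoot, hD]
    · simp [IsRoot, hP x hD, h x hx hD]
  have D_ne_zero : D ≠ 0 := by
    rintro rfl
    exact hz eval_zero
  have eval_P := hP z hz
  rw [(mul_eq_zero.1 mul_eq_zero_poly).resolve_right D_ne_zero, eval_zero] at eval_P
  exact (mul_eq_zero.1 eval_P.symm).resolve_left (pow_ne_zero N hz)

theorem eval_cayley_add_smul_eq_zero_of_infinite {ι : Type*} [Fintype ι] [DecidableEq ι]
    {f : MvPolynomial (ι × ι) 𝕜} {K L : Matrix ι ι 𝕜} {S : Set 𝕜} (hS : S.Infinite)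
    (h : ∀ x ∈ S, (1 + (K + x • L)).det ≠ 0 →
      MvPolynomial.eval (fun p => cayley (K + x • L) p.1 p.2) f = 0)
    {z : 𝕜} (hz : (1 + (K + z • L)).det ≠ 0) :
    MvPolynomial.eval (fun p => cayley (K + z • L) p.1 p.2) f = 0 := by
  let pencil : Matrix ι ι 𝕜[X] := K.map Polynomial.C + (X : 𝕜[X]) • L.map Polynomial.C
  have map_pencil (x : 𝕜) : (evalRingHom x).mapMatrix pencil = K + x • L := by
    ext i j
    simp [pencil, mul_comm x]
  have eval_det (x : 𝕜) : (1 + pencil).det.eval x = (1 + (K + x • L)).det := by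
    rw [← coe_evalRingHom, RingHom.map_det, map_add, map_one, map_pencil]
  have eval_cayley (x : 𝕜) (p : ι × ι) : cayley (K + x • L) p.1 p.2 =
      (((1 - pencil) * (1 + pencil).adjugate) p.1 p.2).eval x / (1 + pencil).det.eval x := by
    have eval_entry (M : Matrix ι ι 𝕜[X]) :
        (M p.1 p.2).eval x = (evalRingHom x).mapMatrix M p.1 p.2 := rfl
    rw [eval_entry, map_mul, RingHom.map_adjugate, map_add, map_sub, map_one, map_pencil,
      eval_det, cayley, Matrix.inv_def, Ring.inverse_eq_inv', Matrix.mul_smul, Matrix.smul_apply,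
      smul_eq_mul, div_eq_inv_mul]
  simp only [eval_cayley, ← eval_det] at h hz ⊢
  exact eval_div_eq_zero_of_infinite hS h hz

end RationalSubstitution

section RealOrthogonal

variable {ι : Type*}

theorem exists_eq_map_ofReal_add_I_smul {K : Matrix ι ι ℂ} (skew : Kᵀ = -K) :
    ∃ K₀ K₁ : Matrix ι ι ℝ, K₀ᵀ = -K₀ ∧ K₁ᵀ = -K₁ ∧
      K = K₀.map Complex.ofRealHom + Complex.I • K₁.map Complex.ofRealHom := by
  have skew_apply (i j : ι) : K j i = -K i j := congrFun₂ skew i j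
  refine ⟨K.map Complex.re, K.map Complex.im, ?_, ?_, ?_⟩
  · ext i j
    exact congrArg Complex.re (skew_apply i j)
  · ext i j
    exact congrArg Complex.im (skew_apply i j)
  · ext i j
    simp [mul_comm Complex.I, Complex.re_add_im]

variable [Fintype ι] [DecidableEq ι] {f : MvPolynomial (ι × ι) ℂ}

theorem eval_eq_zero_of_orthogonal_of_det_one_add_ne_zero
    (h : ∀ Q : Matrix ι ι ℝ, Qᵀ * Q = 1 →
      MvPolynomial.eval (fun p => Q.map Complex.ofRealHom p.1 p.2) f = 0)
    {Q : Matrix ι ι ℂ} (hQ : Qᵀ * Q = 1) (hdet : (1 + Q).det ≠ 0) :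
    MvPolynomial.eval (fun p => Q p.1 p.2) f = 0 := by
  have isUnit_two : IsUnit (2 : ℂ) := isUnit_iff_ne_zero.2 two_ne_zero
  obtain ⟨K₀, K₁, skew₀, skew₁, hK⟩ :=
    exists_eq_map_ofReal_add_I_smul (transpose_cayley_eq_neg hdet.isUnit hQ)
  have cayley_K := cayley_cayley isUnit_two hdet.isUnit
  have det_K := (isUnit_det_one_add_cayley isUnit_two hdet.isUnit).ne_zero
  rw [hK] at cayley_K det_K
  rw [← cayley_K]
  refine eval_cayley_add_smul_eq_zero_of_infinite
    (Set.infinite_range_of_injective Complex.ofReal_injective) ?_ det_K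
  rintro _ ⟨x, rfl⟩ -
  have skew : (K₀ + x • K₁)ᵀ = -(K₀ + x • K₁) := by
    rw [transpose_add, transpose_smul, skew₀, skew₁, smul_neg, neg_add]
  have det_isUnit := (det_one_add_ne_zero_of_skew skew).isUnit
  have map_line : K₀.map Complex.ofRealHom + (x : ℂ) • K₁.map Complex.ofRealHom =
      (K₀ + x • K₁).map Complex.ofRealHom := by
    ext i j
    simp
  rw [map_line, cayley_map _ det_isUnit]
  exact h _ (transpose_cayley_mul_cayley det_isUnit skew)

theorem transpose_mul_self_mul_diagonal_units {R : Type*} [CommRing R] {Q : Matrix ι ι R}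
    (hQ : Qᵀ * Q = 1) (e : ι → ℤˣ) :
    (Q * diagonal fun i => ((e i : ℤ) : R))ᵀ * (Q * diagonal fun i => ((e i : ℤ) : R)) = 1 := by
  rw [transpose_mul, Matrix.mul_assoc, ← Matrix.mul_assoc Qᵀ, hQ, Matrix.one_mul,
    diagonal_transpose, diagonal_mul_diagonal, diagonal_eq_one]
  ext i
  simp [← Int.cast_mul]

theorem eval_bind₁_matrix {σ R : Type*} [CommSemiring R] (Φ : Matrix ι ι (MvPolynomial σ R))
    (f : MvPolynomial (ι × ι) R) (y : σ → R) :
    MvPolynomial.eval y (MvPolynomial.bind₁ (fun p => Φ p.1 p.2) f) =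
      MvPolynomial.eval (fun p => (MvPolynomial.eval y).mapMatrix Φ p.1 p.2) f :=
  MvPolynomial.eval₂Hom_bind₁ _ _ _ _

theorem eval_eq_zero_of_orthogonal
    (h : ∀ Q : Matrix ι ι ℝ, Qᵀ * Q = 1 →
      MvPolynomial.eval (fun p => Q.map Complex.ofRealHom p.1 p.2) f = 0)
    {Q : Matrix ι ι ℂ} (hQ : Qᵀ * Q = 1) :
    MvPolynomial.eval (fun p => Q p.1 p.2) f = 0 := by
  obtain ⟨e, he⟩ := exists_det_add_diagonal_units_ne_zero Q
  let D : Matrix ι ι ℂ := diagonal fun i => ((e i : ℤ) : ℂ)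
  have D_mul_self : D * D = 1 := by
    have := transpose_mul_self_mul_diagonal_units (R := ℂ) (Q := 1) (by simp) e
    simpa [D] using this
  have det_ne_zero : (1 + Q * D).det ≠ 0 := by
    have factor : 1 + Q * D = (Q + D) * D := by rw [Matrix.add_mul, D_mul_self, add_comm]
    rw [factor, det_mul]
    exact mul_ne_zero he (isUnit_det_of_left_inverse D_mul_self).ne_zero
  let Φ : Matrix ι ι (MvPolynomial (ι × ι) ℂ) := mvPolynomialX ι ι ℂ * D.map MvPolynomial.C
  have eval_Φ (Y : Matrix ι ι ℂ) :
      (MvPolynomial.eval fun p => Y p.1 p.2).mapMatrix Φ = Y * D := by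
    rw [map_mul, mvPolynomialX_mapMatrix_eval, RingHom.mapMatrix_apply, Matrix.map_map]
    simp [Function.comp_def]
  have eval_mul_D := eval_eq_zero_of_orthogonal_of_det_one_add_ne_zero
    (f := MvPolynomial.bind₁ (fun p => Φ p.1 p.2) f) (fun O hO => ?_)
    (transpose_mul_self_mul_diagonal_units hQ e) det_ne_zero
  · rwa [eval_bind₁_matrix, eval_Φ, Matrix.mul_assoc, D_mul_self, Matrix.mul_one] at eval_mul_D
  · rw [eval_bind₁_matrix, eval_Φ]
    have map_D : D = (diagonal fun i => ((e i : ℤ) : ℝ)).map Complex.ofRealHom := by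
      simp [D, diagonal_map]
    rw [map_D, ← Matrix.map_mul]
    exact h _ (transpose_mul_self_mul_diagonal_units hO e)

theorem eval_mul_mul_transpose_eq_zero {S : Matrix ι ι ℂ}
    (h : ∀ Q : Matrix ι ι ℝ, Qᵀ * Q = 1 → MvPolynomial.eval
      (fun p => (Q.map Complex.ofRealHom * S * (Q.map Complex.ofRealHom)ᵀ) p.1 p.2) f = 0)
    {Q : Matrix ι ι ℂ} (hQ : Qᵀ * Q = 1) :
    MvPolynomial.eval (fun p => (Q * S * Qᵀ) p.1 p.2) f = 0 := by
  let Φ : Matrix ι ι (MvPolynomial (ι × ι) ℂ) :=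
    mvPolynomialX ι ι ℂ * S.map MvPolynomial.C * (mvPolynomialX ι ι ℂ)ᵀ
  have eval_Φ (Y : Matrix ι ι ℂ) :
      (MvPolynomial.eval fun p => Y p.1 p.2).mapMatrix Φ = Y * S * Yᵀ := by
    have eval_X := mvPolynomialX_mapMatrix_eval Y
    rw [RingHom.mapMatrix_apply] at eval_X ⊢
    rw [Matrix.map_mul, Matrix.map_mul, transpose_map, eval_X, Matrix.map_map]
    simp [Function.comp_def]
  rw [← eval_Φ, ← eval_bind₁_matrix]
  refine eval_eq_zero_of_orthogonal (fun O hO => ?_) hQ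
  rw [eval_bind₁_matrix, eval_Φ]
  exact h O hO

theorem eval_mul_diagonal_mul_transpose_eq_zero {κ : Type*} {c : ι → κ}
    (h : ∀ (Q : Matrix ι ι ℝ) (μ : κ → ℝ), Qᵀ * Q = 1 →
      MvPolynomial.eval (fun p => (Q * diagonal (μ ∘ c) * Qᵀ).map Complex.ofRealHom p.1 p.2) f = 0)
    {Q : Matrix ι ι ℂ} (hQ : Qᵀ * Q = 1) (μ : κ → ℂ) :
    MvPolynomial.eval (fun p => (Q * diagonal (μ ∘ c) * Qᵀ) p.1 p.2) f = 0 := by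
  let Φ : Matrix ι ι (MvPolynomial κ ℂ) := Q.map MvPolynomial.C *
    diagonal (MvPolynomial.X ∘ c) * Qᵀ.map MvPolynomial.C
  have eval_Φ (ν : κ → ℂ) :
      (MvPolynomial.eval ν).mapMatrix Φ = Q * diagonal (ν ∘ c) * Qᵀ := by
    rw [map_mul, map_mul]
    simp [Function.comp_def]
  have bind₁_eq_zero : MvPolynomial.bind₁ (fun p => Φ p.1 p.2) f = 0 := by
    refine MvPolynomial.funext_set (fun _ => Set.range Complex.ofReal)
      (fun _ => Set.infinite_range_of_injective Complex.ofReal_injective) fun ν hν => ?_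
    choose r hr using fun k => hν k trivial
    obtain rfl : Complex.ofReal ∘ r = ν := funext hr
    rw [eval_bind₁_matrix, eval_Φ, map_zero]
    refine eval_mul_mul_transpose_eq_zero (fun O hO => ?_) hQ
    have map_diagonal : diagonal ((Complex.ofReal ∘ r) ∘ c) =
        (diagonal (r ∘ c)).map Complex.ofRealHom := by
      simp [diagonal_map, Function.comp_def]
    rw [map_diagonal, ← transpose_map, ← Matrix.map_mul, ← Matrix.map_mul]
    exact h O r hO
  rw [← eval_Φ, ← eval_bind₁_matrix, bind₁_eq_zero, map_zero]

theorem aeval_mul_diagonal_mul_transpose_nodal {R κ : Type*} [CommRing R] [Fintype κ]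
    {Q : Matrix ι ι R} (hQ : Qᵀ * Q = 1) (c : ι → κ) (μ : κ → R) :
    aeval (Q * diagonal (μ ∘ c) * Qᵀ) (Lagrange.nodal Finset.univ μ) = 0 := by
  have intertwine : Q * diagonal (μ ∘ c) = Q * diagonal (μ ∘ c) * Qᵀ * Q := by
    rw [Matrix.mul_assoc _ Qᵀ, hQ, Matrix.mul_one]
  have mul_eq_zero := mul_aeval_eq_aeval_mul intertwine (Lagrange.nodal Finset.univ μ)
  have eval_eq_zero (i : ι) : (Lagrange.nodal Finset.univ μ).eval ((μ ∘ c) i) = 0 :=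
    Lagrange.eval_nodal_at_node (Finset.mem_univ (c i))
  simp only [aeval_diagonal, eval_eq_zero, diagonal_zero, Matrix.mul_zero] at mul_eq_zero
  have isUnit_Q : IsUnit Q := .of_mul_eq_one _ (mul_eq_one_comm.1 hQ)
  exact isUnit_Q.mul_left_eq_zero.1 mul_eq_zero.symm

end RealOrthogonal

section ZariskiClosure

variable {ι : Type*} [Fintype ι] [DecidableEq ι] {f : MvPolynomial (ι × ι) ℂ}

theorem eval_eq_zero_of_mem_symmSemisimple {d : ℕ}
    (h : ∀ (B : Matrix ι ι ℝ) (p : ℝ[X]), B.IsSymm → p.Monic → p.natDegree ≤ d → aeval B p = 0 →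
      MvPolynomial.eval (fun q => B.map Complex.ofRealHom q.1 q.2) f = 0)
    {S : Matrix ι ι ℂ} (hS : S ∈ symmSemisimple ι ℂ d) :
    MvPolynomial.eval (fun q => S q.1 q.2) f = 0 := by
  obtain ⟨symm, s, card_le, aeval_eq_zero⟩ := hS
  obtain ⟨Q, c, hQ, rfl⟩ := exists_orthogonal_eq_mul_diagonal_mul_transpose symm aeval_eq_zero
  refine eval_mul_diagonal_mul_transpose_eq_zero (fun O μ hO => ?_) hQ (fun i : s => (i : ℂ))
  exact h _ _ (by simp [IsSymm, Matrix.mul_assoc]) Lagrange.nodal_monic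
    (by simpa [Lagrange.natDegree_nodal] using card_le)
    (aeval_mul_diagonal_mul_transpose_nodal hO c μ)

theorem isClosed_setOf_eval_eq_zero {R : Type*} [CommSemiring R] [TopologicalSpace R]
    [IsTopologicalSemiring R] [T1Space R] {κ : Type*} (f : MvPolynomial (κ × κ) R) :
    IsClosed {M : Matrix κ κ R | MvPolynomial.eval (fun q => M q.1 q.2) f = 0} :=
  isClosed_singleton.preimage ((MvPolynomial.continuous_eval f).comp (by fun_prop))

end ZariskiClosure

end DegenerateSymm

/-- The Zariski closure in `Sym(n,ℂ)` of the set of `k`-degenerate real symmetric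
matrices is the set of all `k`-degenerate complex symmetric matrices. -/
theorem stmt_3 (n k : ℕ) (hn : 2 ≤ n) (hk : k ≤ n - 1)
    (f : MvPolynomial (Fin n × Fin n) ℂ)
    (hvan : ∀ B : Matrix (Fin n) (Fin n) ℝ, Bᵀ = B →
      ¬ LinearIndependent ℝ (fun r : Fin (n - k + 1) => B ^ (r : ℕ)) →
      MvPolynomial.eval (fun p => algebraMap ℝ ℂ (B p.1 p.2)) f = 0) :
    ∀ A : Matrix (Fin n) (Fin n) ℂ, Aᵀ = A →
      ¬ LinearIndependent ℂ (fun r : Fin (n - k + 1) => A ^ (r : ℕ)) →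
      MvPolynomial.eval (fun p => A p.1 p.2) f = 0 := by
  intro A symm degenerate
  obtain ⟨p, p_ne_zero, degree_lt, aeval_eq_zero⟩ :=
    (DegenerateSymm.not_linearIndependent_pow_iff A _).1 degenerate
  have natDegree_le : p.natDegree ≤ n - k :=
    Nat.lt_succ_iff.1 ((Polynomial.natDegree_lt_iff_degree_lt p_ne_zero).2 degree_lt)
  have mem_closure : A ∈ closure (DegenerateSymm.symmSemisimple (Fin n) ℂ (n - k)) :=
    closure_mono (DegenerateSymm.symmSemisimple_mono natDegree_le)
      (DegenerateSymm.mem_closure_symmSemisimple symm p_ne_zero aeval_eq_zero)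
  refine closure_minimal (fun S hS => ?_) (DegenerateSymm.isClosed_setOf_eval_eq_zero f) mem_closure
  refine DegenerateSymm.eval_eq_zero_of_mem_symmSemisimple
    (fun B q hB q_monic hq hBq => hvan B hB ?_) hS
  exact (DegenerateSymm.not_linearIndependent_pow_iff B _).2 ⟨q, q_monic.ne_zero,
    (Polynomial.natDegree_lt_iff_degree_lt q_monic.ne_zero).1 (Nat.lt_succ_of_le hq), hBq⟩
end

section
/- Let V = {A ∈ Matrix (Fin 3) (Fin 3) ℂ : (I₃, A, A²) is linearly dependent over ℂ} (the 3×3 complex matrices with minimal polynomial of degree at most 2), let I(V) ⊂ R = MvPolynomial (Fin 3 × Fin 3) ℂ be its vanishing ideal, and let S ⊂ R be the set of 3×3 minors of the 3×9 matrix over R whose three rows list the 9 entries of I₃, of the generic matrix X, and of X². Then: (i) I(V) equals the ideal of R generated by S (in particular I(V) is generated by its degree-3 homogeneous component); (ii) the ℂ-linear span of S equals the degree-3 homogeneous component of I(V), i.e. the space of homogeneous polynomials of degree 3 in R vanishing on V; and (iii) this space has dimension 20 over ℂ. -/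
/-!
Clearing the row of `I₃` with a diagonal column turns the `3 × 3` minors into the `2 × 2` minors of
the pair `X, X ^ 2` modulo scalar matrices. Let `f` vanish on all `u vᵀ + c`, which suffices
since these matrices have minimal polynomial of degree at most two.

Adjoin to `R[X]` a root `ω` of the monic quadratic `adj (X - m) o o` in `m`. The entries of
`adj (X - ω)` are then linear in `ω`, with `X` and `X ^ 2` modulo scalars as coefficients, and their
`R[X]`-span is already an ideal `K`, because `(X - ω) adj (X - ω)` is scalar. Modulo `K` the matrix
`X - ω` satisfies the Segre relations, so `f ∈ K`. Comparing coefficients of `1` and `ω` writes `f`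
as a combination of the entries of `X ^ 2` modulo scalars whose coefficients are a syzygy of the
entries of `X` modulo scalars. Those entries are independent linear forms, so the syzygy is Koszul
and `f` is a combination of `2 × 2` minors.

The `28` minors satisfy the linear relations expressing that `X` commutes with `X ^ 2`; these leave
`20` of them, which are independent.
-/

namespace DegreeTwoMinpoly

open MvPolynomial Matrix

section Syzygies

variable {A σ : Type*} [CommRing A]

/-- The family `x` stays regular in every order: no `x a` is a zero divisor modulo finitely many
other members. This is the form of regularity that makes the linear syzygies of `x` Koszul. -/
def IsPermutableRegular (x : σ → A) : Prop :=
  ∀ (s : Finset σ) (a : σ), a ∉ s → ∀ g : A,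
    g * x a ∈ Ideal.span (x '' s) → g ∈ Ideal.span (x '' s)

theorem isPermutableRegular_X : IsPermutableRegular (X : σ → MvPolynomial σ A) := by
  intro s a ha g hg
  rw [mem_ideal_span_X_image] at hg ⊢
  intro m hm
  have hmem : m + Finsupp.single a 1 ∈ (g * X a).support := by
    rwa [mem_support_iff, coeff_mul_X, ← mem_support_iff]
  obtain ⟨b, hb, hne⟩ := hg _ hmem
  have hab : a ≠ b := fun h => ha (h ▸ hb)
  exact ⟨b, hb, by simpa [hab] using hne⟩

theorem IsPermutableRegular.map {B : Type*} [CommRing B] {x : σ → A}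
    (hx : IsPermutableRegular x) (e : A ≃+* B) : IsPermutableRegular (e ∘ x) := by
  intro s a ha g hg
  rw [Set.image_comp, ← Ideal.map_span, Ideal.mem_map_of_equiv] at hg ⊢
  obtain ⟨y, hy, hyg⟩ := hg
  refine ⟨e.symm g, hx s a ha _ ?_, e.apply_symm_apply g⟩
  rwa [← e.injective (a₁ := y) (a₂ := e.symm g * x a) (by simp [hyg])]

/-- By regularity, one coefficient of a syzygy lies in the ideal of the other `x b`; subtracting
Koszul relations therefore leaves a shorter syzygy. -/
theorem IsPermutableRegular.sum_mul_mem {x : σ → A} (hx : IsPermutableRegular x) {J : Ideal A}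
    {y : σ → A} (s : Finset σ) (hJ : ∀ a ∈ s, ∀ b ∈ s, x a * y b - x b * y a ∈ J) {h : σ → A}
    (hh : ∑ b ∈ s, h b * x b = 0) : ∑ b ∈ s, h b * y b ∈ J := by
  classical
  induction s using Finset.induction_on generalizing h with
  | empty => simp
  | insert a s ha ih =>
    rw [Finset.sum_insert ha] at hh ⊢
    have hmem : h a ∈ Ideal.span (x '' s) := hx s a ha _ <| by
      rw [eq_neg_of_add_eq_zero_left hh]
      exact neg_mem (sum_mem fun b hb => Ideal.mul_mem_left _ _ (Ideal.subset_span ⟨b, hb, rfl⟩))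
    obtain ⟨g, hg⟩ := (Submodule.mem_span_image_finset_iff_exists_fun' A).1 hmem
    simp only [smul_eq_mul] at hg
    have hrest : ∑ b ∈ s, (h b + g b * x a) * y b ∈ J := by
      refine ih (fun b hb c hc => hJ b (by simp [hb]) c (by simp [hc])) ?_
      rw [← hh, ← hg, Finset.sum_mul, ← Finset.sum_add_distrib]
      exact Finset.sum_congr rfl fun b _ => by ring
    have hkoszul : ∑ b ∈ s, g b * (x a * y b - x b * y a) ∈ J :=
      sum_mem fun b hb => J.mul_mem_left _ (hJ a (by simp) b (by simp [hb]))
    convert sub_mem hrest hkoszul using 1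
    rw [← hg, Finset.sum_mul, ← Finset.sum_add_distrib, ← Finset.sum_sub_distrib]
    exact Finset.sum_congr rfl fun b _ => by ring

end Syzygies

section Segre

variable {ι κ R A : Type*}

theorem prod_map_eq_of_map_fst_eq_of_map_snd_eq [CommMonoid A] {w : ι × κ → A}
    (hw : ∀ i j k l, w (i, j) * w (k, l) = w (i, l) * w (k, j)) {s t : Multiset (ι × κ)}
    (hfst : s.map Prod.fst = t.map Prod.fst) (hsnd : s.map Prod.snd = t.map Prod.snd) :
    (s.map w).prod = (t.map w).prod := by
  classical
  induction s using Multiset.induction generalizing t with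
  | empty => simp_all [eq_comm]
  | cons p s ih =>
    obtain ⟨i, j⟩ := p
    rw [Multiset.map_cons] at hfst hsnd
    obtain ⟨⟨i', l⟩, hil, rfl⟩ : ∃ q ∈ t, q.1 = i :=
      Multiset.mem_map.1 (hfst ▸ Multiset.mem_cons_self i _)
    obtain ⟨t, rfl⟩ := Multiset.exists_cons_of_mem hil
    simp only [Multiset.map_cons, Multiset.cons_inj_right] at hfst hsnd
    by_cases hjl : j = l
    · subst hjl
      simp [ih hfst ((Multiset.cons_inj_right _).1 hsnd)]
    obtain ⟨⟨k, j'⟩, hkj, rfl⟩ : ∃ q ∈ t, q.2 = j := by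
      have : j ∈ l ::ₘ t.map Prod.snd := hsnd ▸ Multiset.mem_cons_self j _
      exact Multiset.mem_map.1 ((Multiset.mem_cons.1 this).resolve_left hjl)
    obtain ⟨t, rfl⟩ := Multiset.exists_cons_of_mem hkj
    have hswap : s.map Prod.snd = ((k, l) ::ₘ t).map Prod.snd := by
      rw [Multiset.map_cons, Multiset.cons_swap] at hsnd
      simpa using hsnd
    have hrec := ih (t := (k, l) ::ₘ t) (by simpa using hfst) hswap
    simp only [Multiset.map_cons, Multiset.prod_cons] at hrec ⊢
    rw [hrec, ← mul_assoc, ← mul_assoc, hw]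

theorem finsupp_prod_eq_of_mapDomain_eq [CommMonoid A] {w : ι × κ → A}
    (hw : ∀ i j k l, w (i, j) * w (k, l) = w (i, l) * w (k, j)) {α β : ι × κ →₀ ℕ}
    (hfst : α.mapDomain Prod.fst = β.mapDomain Prod.fst)
    (hsnd : α.mapDomain Prod.snd = β.mapDomain Prod.snd) :
    (α.prod fun p k => w p ^ k) = β.prod fun p k => w p ^ k := by
  have hprod (γ : ι × κ →₀ ℕ) : (γ.prod fun p k => w p ^ k) = (γ.toMultiset.map w).prod := by
    rw [Finsupp.toMultiset_map, Finsupp.prod_toMultiset,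
      Finsupp.prod_mapDomain_index (fun _ => pow_zero _) fun _ _ _ => pow_add _ _ _]
  rw [hprod, hprod]
  exact prod_map_eq_of_map_fst_eq_of_map_snd_eq hw
    (by rw [Finsupp.toMultiset_map, hfst, Finsupp.toMultiset_map])
    (by rw [Finsupp.toMultiset_map, hsnd, Finsupp.toMultiset_map])

/-- The coordinate ring map of the Segre parametrisation `(u, v) ↦ u vᵀ` of the matrices of rank at
most one. -/
noncomputable def segreHom (ι κ R : Type*) [CommSemiring R] :
    MvPolynomial (ι × κ) R →ₐ[R] MvPolynomial (ι ⊕ κ) R :=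
  aeval fun p => X (Sum.inl p.1) * X (Sum.inr p.2)

theorem segreHom_monomial [CommSemiring R] (α : ι × κ →₀ ℕ) (r : R) :
    segreHom ι κ R (monomial α r) =
      monomial (Finsupp.sumElim (α.mapDomain Prod.fst) (α.mapDomain Prod.snd)) r := by
  rw [segreHom, aeval_monomial, algebraMap_eq, monomial_eq, Finsupp.prod_sumElim,
    Finsupp.prod_mapDomain_index (by simp) (by simp [pow_add]),
    Finsupp.prod_mapDomain_index (by simp) (by simp [pow_add]), ← Finsupp.prod_mul]
  simp only [mul_pow, Function.comp_apply]

theorem aeval_eq_zero_of_segreHom_eq_zero [CommSemiring R] [CommSemiring A] [Algebra R A]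
    {w : ι × κ → A} (hw : ∀ i j k l, w (i, j) * w (k, l) = w (i, l) * w (k, j))
    {F : MvPolynomial (ι × κ) R} (hF : segreHom ι κ R F = 0) : aeval w F = 0 := by
  let bidegree (α : ι × κ →₀ ℕ) : ι ⊕ κ →₀ ℕ :=
    Finsupp.sumElim (α.mapDomain Prod.fst) (α.mapDomain Prod.snd)
  let value (α : ι × κ →₀ ℕ) : A := α.prod fun p k => w p ^ k
  have hvalue : value.FactorsThrough bidegree := fun α β h =>
    finsupp_prod_eq_of_mapDomain_eq hw
      (Finsupp.ext fun i => DFunLike.congr_fun h (Sum.inl i))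
      (Finsupp.ext fun j => DFunLike.congr_fun h (Sum.inr j))
  let L : MvPolynomial (ι ⊕ κ) R →ₗ[R] A :=
    (basisMonomials (ι ⊕ κ) R).constr R (Function.extend bidegree value 0)
  have hL : L ∘ₗ (segreHom ι κ R).toLinearMap = (aeval w).toLinearMap := by
    refine (basisMonomials (ι × κ) R).ext fun α => ?_
    have : L (monomial (bidegree α) 1) = value α := by
      simpa [hvalue.extend_apply] using
        (basisMonomials (ι ⊕ κ) R).constr_basis R (Function.extend bidegree value 0) (bidegree α)
    simpa [segreHom_monomial, aeval_monomial] using this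
  simpa [hF] using (LinearMap.congr_fun hL F).symm

theorem segreHom_eq_zero [CommRing R] [IsDomain R] [Infinite R] {F : MvPolynomial (ι × κ) R}
    (hF : ∀ (u : ι → R) (v : κ → R), eval (fun p => u p.1 * v p.2) F = 0) :
    segreHom ι κ R F = 0 := by
  refine MvPolynomial.funext fun x => ?_
  rw [map_zero, ← hF (x ∘ Sum.inl) (x ∘ Sum.inr), segreHom, ← aeval_eq_eval, ← aeval_eq_eval,
    ← AlgHom.comp_apply, comp_aeval]
  simp only [map_mul, aeval_X, Function.comp_apply]

/-- Adding the generic scalar matrix: the substitution `A ↦ A + T • 1`, where `T` is the polynomial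
variable adjoined to the coefficients. -/
noncomputable def addScalarHom (n R : Type*) [DecidableEq n] [CommSemiring R] :
    MvPolynomial (n × n) R →ₐ[R] MvPolynomial (n × n) (Polynomial R) :=
  aeval fun p => X p + C (if p.1 = p.2 then Polynomial.X else 0)

theorem aeval_addScalarHom {n : Type*} [DecidableEq n] [CommSemiring R] [CommSemiring A]
    [Algebra R A] [Algebra (Polynomial R) A] [IsScalarTower R (Polynomial R) A]
    (W : Matrix n n A) (f : MvPolynomial (n × n) R) :
    aeval (fun p => W p.1 p.2) (addScalarHom n R f) =
      aeval (fun p => (W + algebraMap (Polynomial R) A Polynomial.X • 1) p.1 p.2) f := by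
  suffices h : ((aeval fun p : n × n => W p.1 p.2).restrictScalars R).comp (addScalarHom n R) =
      aeval fun p => (W + algebraMap (Polynomial R) A Polynomial.X • 1) p.1 p.2 from
    DFunLike.congr_fun h f
  ext ⟨i, j⟩
  by_cases hij : i = j <;> simp [addScalarHom, hij, Algebra.smul_def]

/-- Over a ring with zero divisors the Segre relations `hW` need not come from a factorisation
`W = u vᵀ`. -/
theorem aeval_add_smul_one_eq_zero {n : Type*} [DecidableEq n] [CommRing R] [IsDomain R]
    [Infinite R] [CommRing A] [Algebra R A] {f : MvPolynomial (n × n) R}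
    (hf : ∀ (u v : n → R) (c : R), eval (fun p => (vecMulVec u v + c • 1) p.1 p.2) f = 0)
    {W : Matrix n n A} (hW : ∀ i j k l, W i j * W k l = W i l * W k j) (ω : A) :
    aeval (fun p => (W + ω • 1) p.1 p.2) f = 0 := by
  have hF : segreHom n n (Polynomial R) (addScalarHom n R f) = 0 := by
    refine segreHom_eq_zero fun u v => Polynomial.funext fun t => ?_
    rw [Polynomial.eval_zero, ← hf (fun i => (u i).eval t) (fun j => (v j).eval t) t]
    refine (congrArg (Polynomial.aeval t) (aeval_addScalarHom (vecMulVec u v) f)).trans <|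
      (comp_aeval_apply _ (Polynomial.aeval t) f).trans ?_
    rw [aeval_eq_eval]
    congr 2
    ext ⟨i, j⟩
    by_cases hij : i = j <;> simp [hij, vecMulVec_apply]
  let : Algebra (Polynomial R) A := (Polynomial.aeval ω).toAlgebra
  have : IsScalarTower R (Polynomial R) A :=
    IsScalarTower.of_algebraMap_eq fun r => by simp [RingHom.algebraMap_toAlgebra]
  have hω : algebraMap (Polynomial R) A Polynomial.X = ω := Polynomial.aeval_X ω
  rw [← hω, ← aeval_addScalarHom]
  exact aeval_eq_zero_of_segreHom_eq_zero (fun i j k l => hW i j k l) hF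

end Segre

section ModScalar

variable {n A B : Type*} [DecidableEq n] [CommRing A] [CommRing B]

/-- The representative of `M` modulo scalar matrices whose `(o, o)` entry is `0`. -/
def modScalar (o : n) : Matrix n n A →ₗ[A] Matrix n n A :=
  LinearMap.id - (entryLinearMap A A o o).smulRight 1

theorem modScalar_apply (o : n) (M : Matrix n n A) : modScalar o M = M - M o o • 1 := rfl

theorem modScalar_self_self (o : n) (M : Matrix n n A) : modScalar o M o o = 0 := by
  simp [modScalar_apply]

theorem modScalar_one (o : n) : modScalar o (1 : Matrix n n A) = 0 := by
  simp [modScalar_apply]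

theorem modScalar_map (φ : A →+* B) (o : n) (M : Matrix n n A) :
    modScalar o (M.map φ) = (modScalar o M).map φ := by
  ext i j
  by_cases h : i = j <;> simp [modScalar_apply, h]

end ModScalar

section PowMinors

variable {n A B : Type*} [Fintype n] [DecidableEq n] [CommRing A] [CommRing B]

/-- The determinant of the columns `c 0`, `c 1`, `c 2` of the matrix with rows the entries of
`1`, `M`, `M ^ 2`. -/
def powDet (M : Matrix n n A) (c : Fin 3 → n × n) : A :=
  det (of fun r s : Fin 3 => (M ^ (r : ℕ)) (c s).1 (c s).2)

/-- The `2 × 2` minors of the two-row matrix listing the entries of `M` and `M ^ 2` modulo scalars;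
clearing the row of `1` with the column `(o, o)` turns `powDet` into these. -/
def powMinor (o : n) (M : Matrix n n A) (p q : n × n) : A :=
  modScalar o M p.1 p.2 * modScalar o (M ^ 2) q.1 q.2 -
    modScalar o M q.1 q.2 * modScalar o (M ^ 2) p.1 p.2

theorem powDet_map (φ : A →+* B) (M : Matrix n n A) (c : Fin 3 → n × n) :
    powDet (φ.mapMatrix M) c = φ (powDet M c) := by
  rw [powDet, powDet, RingHom.map_det]
  congr 1
  ext r s
  rw [of_apply, ← map_pow]
  rfl

theorem powMinor_swap (o : n) (M : Matrix n n A) (p q : n × n) :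
    powMinor o M q p = -powMinor o M p q := by
  simp only [powMinor]; ring

theorem powMinor_self (o : n) (M : Matrix n n A) (p : n × n) : powMinor o M p p = 0 :=
  sub_self _

theorem powMinor_base_right (o : n) (M : Matrix n n A) (p : n × n) :
    powMinor o M p (o, o) = 0 := by
  simp [powMinor, modScalar_self_self]

theorem sum_powMinor_mul_eq_zero (o : n) (M : Matrix n n A) (i j : n) :
    ∑ k, powMinor o M (i, k) (k, j) = 0 := by
  have hcomm : modScalar o M * modScalar o (M ^ 2) = modScalar o (M ^ 2) * modScalar o M := by
    simp only [modScalar_apply, sub_mul, mul_sub, smul_mul_assoc, mul_smul_comm, one_mul, mul_one,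
      pow_two, mul_assoc]
    module
  have hentry := congrFun₂ hcomm i j
  simp only [Matrix.mul_apply] at hentry
  simp only [powMinor, Finset.sum_sub_distrib, hentry, mul_comm, sub_self]

theorem powDet_eq_powMinor (o : n) (M : Matrix n n A) (c : Fin 3 → n × n) :
    powDet M c = (1 : Matrix n n A) (c 0).1 (c 0).2 * powMinor o M (c 1) (c 2) -
      (1 : Matrix n n A) (c 1).1 (c 1).2 * powMinor o M (c 0) (c 2) +
      (1 : Matrix n n A) (c 2).1 (c 2).2 * powMinor o M (c 0) (c 1) := by
  simp only [powDet, powMinor, modScalar_apply, det_fin_three, of_apply, Matrix.sub_apply,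
    Matrix.smul_apply, smul_eq_mul, Fin.val_zero, Fin.val_one, Fin.val_two, pow_zero, pow_one]
  ring

theorem powMinor_eq_powDet (o : n) (M : Matrix n n A) (p q : n × n) :
    powMinor o M p q = powDet M ![p, q, (o, o)] := by
  simp [powDet_eq_powMinor o, powMinor_base_right, Matrix.one_apply]

theorem powMinor_map (φ : A →+* B) (o : n) (M : Matrix n n A) (p q : n × n) :
    powMinor o (φ.mapMatrix M) p q = φ (powMinor o M p q) := by
  rw [powMinor_eq_powDet, powMinor_eq_powDet, powDet_map]

theorem powDet_eq_zero_of_not_injective (M : Matrix n n A) {c : Fin 3 → n × n}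
    (hc : ¬ Function.Injective c) : powDet M c = 0 := by
  simp only [Function.Injective, not_forall] at hc
  obtain ⟨s, t, hst, hne⟩ := hc
  exact det_zero_of_column_eq hne fun r => by simp [hst]

theorem span_powDet_eq_span_powMinor {R : Type*} [CommRing R] [Algebra R A] (o : n)
    (M : Matrix n n A) :
    Submodule.span R {d | ∃ c : Fin 3 → n × n, Function.Injective c ∧ d = powDet M c} =
      Submodule.span R (Set.range (Function.uncurry (powMinor o M))) := by
  apply le_antisymm <;> rw [Submodule.span_le]
  · rintro _ ⟨c, -, rfl⟩
    have hmem (p q r : n × n) : (1 : Matrix n n A) r.1 r.2 * powMinor o M p q ∈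
        Submodule.span R (Set.range (Function.uncurry (powMinor o M))) := by
      by_cases h : r.1 = r.2
      · rw [Matrix.one_apply, if_pos h, one_mul]
        exact Submodule.subset_span ⟨(p, q), rfl⟩
      · simp [h]
    rw [powDet_eq_powMinor o]
    exact add_mem (sub_mem (hmem _ _ _) (hmem _ _ _)) (hmem _ _ _)
  · rintro _ ⟨⟨p, q⟩, rfl⟩
    rw [Function.uncurry_apply_pair, powMinor_eq_powDet]
    by_cases hc : Function.Injective ![p, q, (o, o)]
    · exact Submodule.subset_span ⟨_, hc, rfl⟩
    · rw [powDet_eq_zero_of_not_injective M hc]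
      exact zero_mem _

theorem vecMulVec_add_smul_one_not_linearIndependent [Nontrivial A] (u v : n → A) (c : A) :
    ¬ LinearIndependent A fun r : Fin 3 => (vecMulVec u v + c • 1) ^ (r : ℕ) := by
  intro h
  set d := v ⬝ᵥ u
  have hrel : ∑ r, ![c * (c + d), -(2 * c + d), 1] r • (vecMulVec u v + c • 1) ^ (r : ℕ) = 0 := by
    simp only [Fin.sum_univ_three, Fin.val_zero, Fin.val_one, Fin.val_two, pow_zero, pow_one,
      pow_two (vecMulVec u v + c • 1), mul_add, add_mul, vecMulVec_mul_vecMulVec, smul_mul_assoc,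
      mul_smul_comm, one_mul, mul_one, vecMulVec_smul, cons_val_zero, cons_val_one, cons_val]
    module
  simpa using Fintype.linearIndependent_iff.1 h _ hrel 2

theorem powDet_eq_zero [IsDomain A] {M : Matrix n n A}
    (hM : ¬ LinearIndependent A fun r : Fin 3 => M ^ (r : ℕ)) (c : Fin 3 → n × n) :
    powDet M c = 0 := by
  contrapose! hM
  let columns : Matrix n n A →ₗ[A] Fin 3 → A :=
    LinearMap.pi fun s => entryLinearMap A A (c s).1 (c s).2
  exact LinearIndependent.of_comp columns (linearIndependent_rows_of_det_ne_zero hM)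

end PowMinors

section Adjugate

variable {A : Type*} [CommRing A] (o : Fin 3) (M : Matrix (Fin 3) (Fin 3) A)

theorem adjugate_eq_sq_sub_trace_smul :
    adjugate M = M ^ 2 - trace M • M + trace (adjugate M) • 1 := by
  ext i j
  fin_cases i <;> fin_cases j <;>
    simp [adjugate_fin_three, trace_fin_three, pow_two, Matrix.mul_apply, Fin.sum_univ_three] <;>
    ring

theorem modScalar_adjugate_sub_smul_one (m : A) :
    modScalar o (adjugate (M - m • 1)) =
      modScalar o (M ^ 2) - (trace M - m) • modScalar o M := by
  have hpoly : (M - m • 1) ^ 2 - trace (M - m • 1) • (M - m • 1) =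
      M ^ 2 - (trace M - m) • M + (m * (trace M - 2 * m)) • 1 := by
    simp only [pow_two, mul_sub, sub_mul, mul_smul_comm, smul_mul_assoc, mul_one, one_mul,
      trace_sub, trace_smul, trace_one, Fintype.card_fin, smul_eq_mul]
    push_cast
    module
  rw [adjugate_eq_sq_sub_trace_smul, hpoly]
  simp only [map_add, map_sub, map_smul, modScalar_one, smul_zero, add_zero]

theorem adjugate_sub_smul_one_apply_self (m : A) :
    adjugate (M - m • 1) o o = m ^ 2 - (trace M - M o o) * m + adjugate M o o := by
  fin_cases o <;> simp [adjugate_fin_three, trace_fin_three] <;> ring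

theorem adjugate_apply_cyclic (i j : Fin 3) :
    adjugate M j i =
      M (i + 1) (j + 1) * M (i + 2) (j + 2) - M (i + 1) (j + 2) * M (i + 2) (j + 1) := by
  fin_cases i <;> fin_cases j <;> simp [adjugate_fin_three] <;> ring

variable {M} in
theorem mul_apply_comm_of_adjugate_eq_zero (hM : adjugate M = 0) (i j k l : Fin 3) :
    M i j * M k l = M i l * M k j := by
  have hminor (r s : Fin 3) : M (r + 1) (s + 1) * M (r + 2) (s + 2) =
      M (r + 1) (s + 2) * M (r + 2) (s + 1) := by
    rw [← sub_eq_zero, ← adjugate_apply_cyclic, hM, Matrix.zero_apply]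
  have hcyclic : ∀ i k : Fin 3, i = k ∨ ∃ r, (i = r + 1 ∧ k = r + 2) ∨ (i = r + 2 ∧ k = r + 1) := by
    decide
  obtain rfl | ⟨r, ⟨rfl, rfl⟩ | ⟨rfl, rfl⟩⟩ := hcyclic i k
  · ring
  all_goals
    obtain rfl | ⟨s, ⟨rfl, rfl⟩ | ⟨rfl, rfl⟩⟩ := hcyclic j l <;> grind

/-- The quadratic extension generated by a root `m` of `adjugate (M - m • 1) o o`. -/
abbrev CofactorExtension : Type _ :=
  QuadraticAlgebra A (-adjugate M o o) (trace M - M o o)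

/-- The adjoined root of `CofactorExtension o M`. -/
abbrev cofactorRoot : CofactorExtension o M := QuadraticAlgebra.omega

/-- `M` minus the adjoined root of `adjugate (M - m • 1) o o`. -/
def shiftedMatrix : Matrix (Fin 3) (Fin 3) (CofactorExtension o M) :=
  M.map (algebraMap A (CofactorExtension o M)) - cofactorRoot o M • 1

theorem modScalar_adjugate_shiftedMatrix :
    modScalar o (adjugate (shiftedMatrix o M)) = adjugate (shiftedMatrix o M) := by
  have : adjugate (shiftedMatrix o M) o o = 0 := by
    rw [shiftedMatrix, adjugate_sub_smul_one_apply_self, ← AddMonoidHom.map_trace, pow_two,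
      QuadraticAlgebra.omega_mul_omega_eq_algebraMap, ← RingHom.mapMatrix_apply,
      ← RingHom.map_adjugate]
    simp
  rw [modScalar_apply, this, zero_smul, sub_zero]

theorem adjugate_shiftedMatrix_apply (i j : Fin 3) :
    adjugate (shiftedMatrix o M) i j =
      ⟨modScalar o (M ^ 2) i j - trace M * modScalar o M i j, modScalar o M i j⟩ := by
  rw [← modScalar_adjugate_shiftedMatrix, shiftedMatrix, modScalar_adjugate_sub_smul_one,
    ← AddMonoidHom.map_trace, ← RingHom.mapMatrix_apply, ← map_pow]
  simp only [RingHom.mapMatrix_apply, modScalar_map]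
  ext <;> simp

theorem omega_smul_adjugate_shiftedMatrix :
    cofactorRoot o M • adjugate (shiftedMatrix o M) =
      modScalar o
        (adjugate (shiftedMatrix o M) * M.map (algebraMap A (CofactorExtension o M))) := by
  have hM : M.map (algebraMap A (CofactorExtension o M)) =
      shiftedMatrix o M + cofactorRoot o M • 1 := (sub_add_cancel _ _).symm
  rw [hM, mul_add, adjugate_mul, mul_smul_comm, mul_one, map_add, map_smul, map_smul,
    modScalar_one, smul_zero, zero_add, modScalar_adjugate_shiftedMatrix]

theorem mem_span_adjugate_shiftedMatrix {x : CofactorExtension o M}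
    (hx : x ∈ Ideal.span
      (Set.range fun p : Fin 3 × Fin 3 => adjugate (shiftedMatrix o M) p.1 p.2)) :
    x ∈ Submodule.span A
      (Set.range fun p : Fin 3 × Fin 3 => adjugate (shiftedMatrix o M) p.1 p.2) := by
  set P := Submodule.span A
    (Set.range fun p : Fin 3 × Fin 3 => adjugate (shiftedMatrix o M) p.1 p.2)
  have hentry (i j : Fin 3) : adjugate (shiftedMatrix o M) i j ∈ P :=
    Submodule.subset_span ⟨(i, j), rfl⟩
  have hmul (i j : Fin 3) :
      (adjugate (shiftedMatrix o M) * M.map (algebraMap A (CofactorExtension o M))) i j ∈ P := by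
    rw [Matrix.mul_apply]
    refine sum_mem fun k _ => ?_
    rw [map_apply, mul_comm, ← Algebra.smul_def]
    exact P.smul_mem _ (hentry i k)
  have homega : P ≤ P.comap (LinearMap.mulLeft A (cofactorRoot o M)) := by
    rw [Submodule.span_le]
    rintro _ ⟨⟨i, j⟩, rfl⟩
    change (cofactorRoot o M • adjugate (shiftedMatrix o M)) i j ∈ P
    rw [omega_smul_adjugate_shiftedMatrix, modScalar_apply]
    by_cases hij : i = j
    · simpa [hij] using sub_mem (hmul j j) (hmul o o)
    · simpa [hij] using hmul i j
  induction hx using Submodule.span_induction with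
  | mem x hx => exact Submodule.subset_span hx
  | zero => exact zero_mem _
  | add x y _ _ hx hy => exact add_mem hx hy
  | smul c x _ hx =>
    have hc : c • x = c.re • x + c.im • (cofactorRoot o M * x) := by
      ext <;> simp <;> ring
    rw [hc]
    exact add_mem (P.smul_mem _ hx) (P.smul_mem _ (homega hx))

variable {o M} in
theorem exists_syzygy_of_algebraMap_mem {a : A}
    (ha : algebraMap A (CofactorExtension o M) a ∈
      Ideal.span (Set.range fun p : Fin 3 × Fin 3 => adjugate (shiftedMatrix o M) p.1 p.2)) :
    ∃ h : Fin 3 × Fin 3 → A, ∑ p, h p * modScalar o M p.1 p.2 = 0 ∧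
      ∑ p, h p * modScalar o (M ^ 2) p.1 p.2 = a := by
  obtain ⟨h, hsum⟩ := (Submodule.mem_span_range_iff_exists_fun A).1
    (mem_span_adjugate_shiftedMatrix o M ha)
  have him := congrArg (QuadraticAlgebra.imₗ _ _) hsum
  have hre := congrArg (QuadraticAlgebra.reₗ _ _) hsum
  simp only [map_sum, map_smul, adjugate_shiftedMatrix_apply, QuadraticAlgebra.imₗ_apply,
    QuadraticAlgebra.reₗ_apply, QuadraticAlgebra.algebraMap_im, QuadraticAlgebra.algebraMap_re,
    smul_eq_mul] at him hre
  refine ⟨h, him, ?_⟩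
  rw [← hre, ← sub_eq_zero, ← mul_zero (trace M), ← him, Finset.mul_sum, ← Finset.sum_sub_distrib]
  exact Finset.sum_congr rfl fun p _ => by ring

end Adjugate

section Shear

variable {σ R : Type*} [CommRing R]

/-- The linear change of variables `X p ↦ X p + c p • X q`; for `c q = 0` it has inverse
`shearHom q (-c)`. -/
noncomputable def shearHom (q : σ) (c : σ → R) : MvPolynomial σ R →ₐ[R] MvPolynomial σ R :=
  aeval fun p => X p + C (c p) * X q

theorem shearHom_comp_shearHom_neg {q : σ} {c : σ → R} (hc : c q = 0) :
    (shearHom q c).comp (shearHom q (-c)) = AlgHom.id R _ := by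
  ext1 p
  simp [shearHom, hc]

/-- `shearHom` as an automorphism. -/
noncomputable def shearEquiv (q : σ) (c : σ → R) (hc : c q = 0) :
    MvPolynomial σ R ≃ₐ[R] MvPolynomial σ R :=
  AlgEquiv.ofAlgHom (shearHom q c) (shearHom q (-c)) (shearHom_comp_shearHom_neg hc) <| by
    simpa using shearHom_comp_shearHom_neg (c := -c) (q := q) (by simp [hc])

end Shear

section GenericMatrix

variable {n R : Type*} [Fintype n] [DecidableEq n] [CommRing R]

theorem sum_mul_modScalar_sq_mem (o : n) {h : n × n → MvPolynomial (n × n) R}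
    (hh : ∑ p, h p * modScalar o (mvPolynomialX n n R) p.1 p.2 = 0) :
    ∑ p, h p * modScalar o (mvPolynomialX n n R ^ 2) p.1 p.2 ∈
      Ideal.span (Set.range (Function.uncurry (powMinor o (mvPolynomialX n n R)))) := by
  let c (p : n × n) : R := if p.1 = p.2 ∧ p ≠ (o, o) then -1 else 0
  let e := shearEquiv (o, o) c (by simp [c])
  have he {p : n × n} (hp : p ≠ (o, o)) :
      e (X p) = modScalar o (mvPolynomialX n n R) p.1 p.2 := by
    obtain ⟨i, j⟩ := p
    obtain rfl | hij := eq_or_ne i j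
    · have hi : i ≠ o := by simpa using hp
      simp [e, shearEquiv, shearHom, c, modScalar_apply, hi, sub_eq_add_neg]
    · simp [e, shearEquiv, shearHom, c, modScalar_apply, hij]
  have hreg : IsPermutableRegular (e.toRingEquiv ∘ X) := isPermutableRegular_X.map _
  have hdrop {M : Matrix n n (MvPolynomial (n × n) R)} :
      ∑ p ∈ Finset.univ.erase (o, o), h p * modScalar o M p.1 p.2 =
        ∑ p, h p * modScalar o M p.1 p.2 :=
    Finset.sum_erase _ (by rw [modScalar_self_self, mul_zero])
  rw [← hdrop] at hh ⊢
  refine hreg.sum_mul_mem _ (fun a ha b hb => ?_) ?_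
  · exact Ideal.subset_span ⟨(a, b), by
      simp [powMinor, he (Finset.ne_of_mem_erase ha), he (Finset.ne_of_mem_erase hb)]⟩
  · rw [← hh]
    exact Finset.sum_congr rfl fun p hp => by
      simp [he (Finset.ne_of_mem_erase hp)]

theorem isHomogeneous_powMinor (o : n) (p q : n × n) :
    (powMinor o (mvPolynomialX n n R) p q).IsHomogeneous 3 := by
  have hone (c : MvPolynomial (n × n) R) {d : ℕ} (hc : c.IsHomogeneous d) (p : n × n) :
      ((c • 1 : Matrix n n (MvPolynomial (n × n) R)) p.1 p.2).IsHomogeneous d := by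
    by_cases h : p.1 = p.2
    · simpa [h] using hc
    · simpa [h] using isHomogeneous_zero _ _ _
  have hX (p : n × n) : (mvPolynomialX n n R p.1 p.2).IsHomogeneous 1 := isHomogeneous_X R p
  have hsq (p : n × n) : ((mvPolynomialX n n R ^ 2) p.1 p.2).IsHomogeneous 2 := by
    rw [pow_two, Matrix.mul_apply]
    exact IsHomogeneous.sum _ _ _ fun k _ => (hX (p.1, k)).mul (hX (k, p.2))
  have hlin (p : n × n) : (modScalar o (mvPolynomialX n n R) p.1 p.2).IsHomogeneous 1 :=
    (hX p).sub (hone _ (hX (o, o)) p)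
  have hquad (p : n × n) : (modScalar o (mvPolynomialX n n R ^ 2) p.1 p.2).IsHomogeneous 2 :=
    (hsq p).sub (hone _ (hsq (o, o)) p)
  exact ((hlin p).mul (hquad q)).sub ((hlin q).mul (hquad p))

end GenericMatrix

section Homogeneous

variable {σ R : Type*} [CommSemiring R]

theorem homogeneousComponent_mul_of_isHomogeneous {d : ℕ} (g : MvPolynomial σ R)
    {s : MvPolynomial σ R} (hs : s.IsHomogeneous d) :
    homogeneousComponent d (g * s) = coeff 0 g • s := by
  conv_lhs => rw [← sum_homogeneousComponent g, Finset.sum_mul, map_sum]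
  rw [Finset.sum_eq_single_of_mem 0 (by simp)]
  · rw [homogeneousComponent_zero, homogeneousComponent_C_mul, homogeneousComponent_eq_self hs,
      smul_eq_C_mul]
  · intro k _ hk
    rw [homogeneousComponent_of_mem ((homogeneousComponent_isHomogeneous k g).mul hs),
      if_neg (by omega)]

theorem mem_span_iff_isHomogeneous_and_mem_ideal_span {d : ℕ} {S : Set (MvPolynomial σ R)}
    (hS : ∀ s ∈ S, s.IsHomogeneous d) {f : MvPolynomial σ R} :
    f ∈ Submodule.span R S ↔ f.IsHomogeneous d ∧ f ∈ Ideal.span S := by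
  constructor
  · intro hf
    exact ⟨(Submodule.span_le (p := homogeneousSubmodule σ R d)).2 hS hf,
      Submodule.span_le_restrictScalars R _ S hf⟩
  · rintro ⟨hf, hmem⟩
    rw [← homogeneousComponent_eq_self hf]
    obtain ⟨n, g, s, rfl⟩ := Submodule.mem_span_set'.1 hmem
    rw [map_sum]
    refine sum_mem fun i _ => ?_
    rw [smul_eq_mul, homogeneousComponent_mul_of_isHomogeneous _ (hS _ (s i).2)]
    exact Submodule.smul_mem _ _ (Submodule.subset_span (s i).2)

end Homogeneous

theorem exists_syzygy_of_vanishing {R A : Type*} [CommRing R] [IsDomain R] [Infinite R] [CommRing A]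
    [Algebra R A] (o : Fin 3) (M : Matrix (Fin 3) (Fin 3) A) {f : MvPolynomial (Fin 3 × Fin 3) R}
    (hf : ∀ (u v : Fin 3 → R) (c : R), eval (fun p => (vecMulVec u v + c • 1) p.1 p.2) f = 0) :
    ∃ h : Fin 3 × Fin 3 → A, ∑ p, h p * modScalar o M p.1 p.2 = 0 ∧
      ∑ p, h p * modScalar o (M ^ 2) p.1 p.2 = aeval (fun p => M p.1 p.2) f := by
  apply exists_syzygy_of_algebraMap_mem
  set K := Ideal.span (Set.range fun p : Fin 3 × Fin 3 => adjugate (shiftedMatrix o M) p.1 p.2)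
  let π := Ideal.Quotient.mkₐ R K
  let φ := π.comp (IsScalarTower.toAlgHom R A (CofactorExtension o M))
  have hadj : adjugate (π.mapMatrix (shiftedMatrix o M)) = 0 := by
    rw [← AlgHom.map_adjugate]
    ext i j : 2
    exact Ideal.Quotient.eq_zero_iff_mem.2 (Ideal.subset_span ⟨(i, j), rfl⟩)
  have hM : π.mapMatrix (shiftedMatrix o M) + π (cofactorRoot o M) • 1 = φ.mapMatrix M := by
    ext i j
    by_cases hij : i = j <;> simp [shiftedMatrix, φ, hij]
  have hvanish : φ (aeval (fun p => M p.1 p.2) f) = 0 := by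
    rw [comp_aeval_apply, ← aeval_add_smul_one_eq_zero hf
      (mul_apply_comm_of_adjugate_eq_zero hadj) (π (cofactorRoot o M)), hM]
    rfl
  exact Ideal.Quotient.eq_zero_iff_mem.1 hvanish

theorem mem_span_powMinor_of_vanishing {R : Type*} [CommRing R] [IsDomain R] [Infinite R]
    (o : Fin 3) {f : MvPolynomial (Fin 3 × Fin 3) R}
    (hf : ∀ (u v : Fin 3 → R) (c : R), eval (fun p => (vecMulVec u v + c • 1) p.1 p.2) f = 0) :
    f ∈ Ideal.span (Set.range (Function.uncurry
      (powMinor o (mvPolynomialX (Fin 3) (Fin 3) R)))) := by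
  obtain ⟨h, hlin, hquad⟩ := exists_syzygy_of_vanishing o (mvPolynomialX (Fin 3) (Fin 3) R) hf
  have hgeneric : aeval (fun p => mvPolynomialX (Fin 3) (Fin 3) R p.1 p.2) f = f :=
    aeval_X_left_apply f
  rw [← hgeneric, ← hquad]
  exact sum_mul_modScalar_sq_mem o hlin

section Dimension

variable {R A : Type*} [CommRing R] [CommRing A] [Algebra R A]

/-- The column pairs indexing a basis of the span of the `powMinor 2`, signed and ordered so that
evaluating at `testMatrix` is lower unitriangular. -/
def basisPair : Fin 20 → (Fin 3 × Fin 3) × (Fin 3 × Fin 3) :=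
  ![((2, 1), (0, 0)), ((0, 0), (1, 2)), ((2, 0), (1, 1)), ((1, 1), (0, 2)),
    ((1, 1), (0, 0)), ((2, 0), (2, 1)), ((1, 0), (2, 0)), ((1, 2), (1, 0)),
    ((0, 2), (1, 2)), ((0, 1), (2, 1)), ((0, 2), (0, 1)), ((0, 0), (2, 0)),
    ((1, 1), (1, 0)), ((0, 0), (1, 0)), ((1, 1), (2, 1)), ((0, 0), (0, 2)),
    ((1, 1), (1, 2)), ((1, 1), (0, 1)), ((0, 0), (0, 1)), ((1, 0), (0, 1))]

/-- Integer points separating the minors indexed by `basisPair`. -/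
def testMatrix : Fin 20 → Matrix (Fin 3) (Fin 3) ℤ :=
  ![!![1, 0, 0; 0, 0, 0; 0, 1, 0], !![0, 0, 0; 0, 0, 1; 0, 1, 0], !![0, 0, 0; 0, 1, 0; 1, 0, 0],
    !![0, 0, 1; 0, 0, 0; 1, 0, 0], !![0, 0, 0; 0, 0, 1; 0, 1, 1], !![0, 0, 0; 0, 1, 0; 1, 1, 0],
    !![0, 0, 0; 1, 0, 0; 0, 1, 0], !![0, 0, 0; 0, 0, 1; 1, 0, 0], !![0, 0, 1; 1, 0, 0; 0, 0, 0],
    !![0, 1, 0; 0, 0, 0; 1, 0, 0], !![0, 0, 1; 0, 0, 0; 0, 1, 0], !![0, 0, 0; 0, 0, 1; 1, 1, 0],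
    !![0, 0, 0; 0, 1, 1; 1, 0, 0], !![0, 0, 0; 1, 0, 0; 0, 0, 1], !![0, 0, 1; 0, 0, 0; 1, 1, 0],
    !![0, 0, 1; 0, 0, 1; 0, 1, 0], !![0, 0, 1; 0, 0, 1; 1, 0, 0], !![0, 0, 1; 0, 1, 0; 0, 1, 0],
    !![0, 1, 0; 0, 0, 0; 0, 0, 1], !![0, 0, 1; 1, 0, 0; 0, 1, 0]]

theorem powMinor_testMatrix_isLowerTriangular :
    (of fun a b =>
      powMinor 2 (testMatrix a) (basisPair b).1 (basisPair b).2).IsLowerTriangular := by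
  have h : ∀ a b, a < b → powMinor 2 (testMatrix a) (basisPair b).1 (basisPair b).2 = 0 := by
    decide +kernel
  exact fun a b hab => h a b hab

theorem powMinor_testMatrix_self (a : Fin 20) :
    powMinor 2 (testMatrix a) (basisPair a).1 (basisPair a).2 = 1 := by
  revert a
  decide +kernel

theorem linearIndependent_of_isUnit_det_eval {σ κ : Type*} [Fintype κ] [DecidableEq κ]
    (x : κ → σ → R) (f : κ → MvPolynomial σ R)
    (h : IsUnit (det (of fun a b => eval (x a) (f b)))) : LinearIndependent R f := by
  let evalAll : MvPolynomial σ R →ₗ[R] κ → R := LinearMap.pi fun a => (aeval (x a)).toLinearMap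
  refine LinearIndependent.of_comp evalAll ?_
  rw [← det_transpose, ← isUnit_iff_isUnit_det] at h
  exact linearIndependent_rows_of_isUnit h

theorem linearIndependent_powMinor_basisPair : LinearIndependent R fun k =>
    powMinor 2 (mvPolynomialX (Fin 3) (Fin 3) R) (basisPair k).1 (basisPair k).2 := by
  let point (k : Fin 20) : Matrix (Fin 3) (Fin 3) R := (Int.castRingHom R).mapMatrix (testMatrix k)
  refine linearIndependent_of_isUnit_det_eval (fun k p => point k p.1 p.2) _ ?_
  have heval (a b) : eval (fun p => point a p.1 p.2)
      (powMinor 2 (mvPolynomialX (Fin 3) (Fin 3) R) (basisPair b).1 (basisPair b).2) =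
        Int.castRingHom R (powMinor 2 (testMatrix a) (basisPair b).1 (basisPair b).2) := by
    rw [← powMinor_map, ← powMinor_map, mvPolynomialX_mapMatrix_eval]
  have hdet := det_of_isLowerTriangular _ powMinor_testMatrix_isLowerTriangular
  simp only [of_apply, powMinor_testMatrix_self, Finset.prod_const_one] at hdet
  simp only [heval]
  convert isUnit_one (M := R)
  rw [← map_one (Int.castRingHom R), ← hdet, RingHom.map_det]
  rfl

/-- The pairs for which `powMinor 2` vanishes or is, up to sign, in the family `basisPair`. -/
def IsBasicPair (p q : Fin 3 × Fin 3) : Prop :=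
  p = q ∨ p = (2, 2) ∨ q = (2, 2) ∨ ∃ k, basisPair k = (p, q) ∨ basisPair k = (q, p)

instance (p q : Fin 3 × Fin 3) : Decidable (IsBasicPair p q) := by
  unfold IsBasicPair; infer_instance

theorem exists_isBasicPair_of_not_isBasicPair : ∀ p q : Fin 3 × Fin 3, ¬ IsBasicPair p q →
    ∃ i j k, ((p, q) = ((i, k), (k, j)) ∨ (q, p) = ((i, k), (k, j))) ∧
      ∀ l ≠ k, IsBasicPair (i, l) (l, j) := by
  decide +kernel

variable (R) in
theorem powMinor_mem_span_basisPair (M : Matrix (Fin 3) (Fin 3) A) (p q : Fin 3 × Fin 3) :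
    powMinor 2 M p q ∈ Submodule.span R
      (Set.range fun k => powMinor 2 M (basisPair k).1 (basisPair k).2) := by
  set P := Submodule.span R (Set.range fun k => powMinor 2 M (basisPair k).1 (basisPair k).2)
  have hswap {p q} (h : powMinor 2 M q p ∈ P) : powMinor 2 M p q ∈ P := by
    rw [powMinor_swap]
    exact neg_mem h
  have hbasis {p q} (k) (hk : basisPair k = (p, q)) : powMinor 2 M p q ∈ P :=
    Submodule.subset_span ⟨k, by simp only [hk]⟩
  have hbasic {p q} (h : IsBasicPair p q) : powMinor 2 M p q ∈ P := by
    obtain rfl | rfl | rfl | ⟨k, hk | hk⟩ := h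
    · simp [powMinor_self]
    · exact hswap (by simp [powMinor_base_right])
    · simp [powMinor_base_right]
    · exact hbasis k hk
    · exact hswap (hbasis k hk)
  by_cases h : IsBasicPair p q
  · exact hbasic h
  obtain ⟨i, j, k, hpq, hrest⟩ := exists_isBasicPair_of_not_isBasicPair p q h
  have hrel : powMinor 2 M (i, k) (k, j) ∈ P := by
    rw [eq_neg_of_add_eq_zero_left
      ((Finset.add_sum_erase _ _ (Finset.mem_univ k)).trans (sum_powMinor_mul_eq_zero 2 M i j))]
    exact neg_mem (sum_mem fun l hl => hbasic (hrest l (Finset.ne_of_mem_erase hl)))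
  obtain h | h := hpq <;> obtain ⟨rfl, rfl⟩ := Prod.ext_iff.1 h
  · exact hrel
  · exact hswap hrel

theorem finrank_span_powMinor [Nontrivial R] :
    Module.finrank R (Submodule.span R
      (Set.range (Function.uncurry (powMinor 2 (mvPolynomialX (Fin 3) (Fin 3) R))))) = 20 := by
  have hspan : Submodule.span R
        (Set.range (Function.uncurry (powMinor 2 (mvPolynomialX (Fin 3) (Fin 3) R)))) =
      Submodule.span R (Set.range fun k =>
        powMinor 2 (mvPolynomialX (Fin 3) (Fin 3) R) (basisPair k).1 (basisPair k).2) := by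
    refine le_antisymm (Submodule.span_le.2 ?_) (Submodule.span_mono ?_)
    · rintro _ ⟨⟨p, q⟩, rfl⟩
      exact powMinor_mem_span_basisPair R _ p q
    · rintro _ ⟨k, rfl⟩
      exact ⟨basisPair k, rfl⟩
  rw [hspan, finrank_span_eq_card linearIndependent_powMinor_basisPair, Fintype.card_fin]

end Dimension

theorem eval_eq_zero_of_mem_span_powMinor {n R : Type*} [Fintype n] [DecidableEq n] [CommRing R]
    [IsDomain R] (o : n) {f : MvPolynomial (n × n) R}
    (hf : f ∈ Ideal.span (Set.range (Function.uncurry (powMinor o (mvPolynomialX n n R)))))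
    {A : Matrix n n R} (hA : ¬ LinearIndependent R fun r : Fin 3 => A ^ (r : ℕ)) :
    eval (fun p => A p.1 p.2) f = 0 := by
  rw [← RingHom.mem_ker]
  refine Ideal.span_le.2 ?_ hf
  rintro _ ⟨⟨p, q⟩, rfl⟩
  rw [Function.uncurry_apply_pair, SetLike.mem_coe, RingHom.mem_ker, ← powMinor_map,
    mvPolynomialX_mapMatrix_eval, powMinor_eq_powDet, powDet_eq_zero hA]

theorem mem_span_powMinor_iff {R : Type*} [CommRing R] [IsDomain R] [Infinite R] (o : Fin 3)
    {f : MvPolynomial (Fin 3 × Fin 3) R} :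
    f ∈ Ideal.span (Set.range (Function.uncurry (powMinor o (mvPolynomialX (Fin 3) (Fin 3) R)))) ↔
      ∀ A : Matrix (Fin 3) (Fin 3) R, ¬ LinearIndependent R (fun r : Fin 3 => A ^ (r : ℕ)) →
        eval (fun p => A p.1 p.2) f = 0 :=
  ⟨fun hf _ hA => eval_eq_zero_of_mem_span_powMinor o hf hA, fun hf =>
    mem_span_powMinor_of_vanishing o fun u v c =>
      hf _ (vecMulVec_add_smul_one_not_linearIndependent u v c)⟩

end DegreeTwoMinpoly

open DegreeTwoMinpoly MvPolynomial Matrix in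
theorem stmt_8_general {R : Type*} [CommRing R] [IsDomain R] [Infinite R]
    (X : Matrix (Fin 3) (Fin 3) (MvPolynomial (Fin 3 × Fin 3) R))
    (hX : ∀ i j, X i j = MvPolynomial.X (i, j))
    (V : Set (Matrix (Fin 3) (Fin 3) R))
    (hV : V = {A | ¬ LinearIndependent R (fun r : Fin 3 => A ^ (r : ℕ))})
    (S : Set (MvPolynomial (Fin 3 × Fin 3) R))
    (hS : S = { d | ∃ c : Fin 3 → Fin 3 × Fin 3, Function.Injective c ∧
      d = Matrix.det (Matrix.of fun r s : Fin 3 => (X ^ (r : ℕ)) (c s).1 (c s).2) }) :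
    (∀ f : MvPolynomial (Fin 3 × Fin 3) R, f ∈ Ideal.span S ↔
      ∀ A ∈ V, MvPolynomial.eval (fun p => A p.1 p.2) f = 0) ∧
    (∀ f : MvPolynomial (Fin 3 × Fin 3) R, f ∈ Submodule.span R S ↔
      (f.IsHomogeneous 3 ∧ ∀ A ∈ V, MvPolynomial.eval (fun p => A p.1 p.2) f = 0)) ∧
    Module.finrank R (Submodule.span R S) = 20 := by
  obtain rfl : X = mvPolynomialX (Fin 3) (Fin 3) R := Matrix.ext hX
  subst hV
  have hideal : Ideal.span S = Ideal.span (Set.range (Function.uncurry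
      (powMinor 2 (mvPolynomialX (Fin 3) (Fin 3) R)))) := hS ▸ span_powDet_eq_span_powMinor 2 _
  have hspan : Submodule.span R S = Submodule.span R (Set.range (Function.uncurry
      (powMinor 2 (mvPolynomialX (Fin 3) (Fin 3) R)))) := hS ▸ span_powDet_eq_span_powMinor 2 _
  have hvanishing (f : MvPolynomial (Fin 3 × Fin 3) R) : f ∈ Ideal.span S ↔
      ∀ A ∈ {A : Matrix (Fin 3) (Fin 3) R | ¬ LinearIndependent R (fun r : Fin 3 => A ^ (r : ℕ))},
        eval (fun p => A p.1 p.2) f = 0 := by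
    rw [hideal]
    exact mem_span_powMinor_iff 2
  refine ⟨hvanishing, fun f => ?_, hspan ▸ finrank_span_powMinor⟩
  rw [hspan, mem_span_iff_isHomogeneous_and_mem_ideal_span, ← hideal, hvanishing]
  rintro _ ⟨⟨p, q⟩, rfl⟩
  exact isHomogeneous_powMinor 2 p q

/-- For the variety `V` of `3×3` complex matrices with minimal polynomial of degree
at most `2`: the vanishing ideal of `V` is generated by the `3×3` minors of the matrix
with rows `I₃, X, X²`; their ℂ-span is exactly the degree-3 homogeneous component of
the vanishing ideal; and this space has dimension `20`. -/
theorem stmt_8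
    (X : Matrix (Fin 3) (Fin 3) (MvPolynomial (Fin 3 × Fin 3) ℂ))
    (hX : ∀ i j, X i j = MvPolynomial.X (i, j))
    (V : Set (Matrix (Fin 3) (Fin 3) ℂ))
    (hV : V = {A | ¬ LinearIndependent ℂ (fun r : Fin 3 => A ^ (r : ℕ))})
    (S : Set (MvPolynomial (Fin 3 × Fin 3) ℂ))
    (hS : S = { d | ∃ c : Fin 3 → Fin 3 × Fin 3, Function.Injective c ∧
      d = Matrix.det (Matrix.of fun r s : Fin 3 => (X ^ (r : ℕ)) (c s).1 (c s).2) }) :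
    (∀ f : MvPolynomial (Fin 3 × Fin 3) ℂ, f ∈ Ideal.span S ↔
      ∀ A ∈ V, MvPolynomial.eval (fun p => A p.1 p.2) f = 0) ∧
    (∀ f : MvPolynomial (Fin 3 × Fin 3) ℂ, f ∈ Submodule.span ℂ S ↔
      (f.IsHomogeneous 3 ∧ ∀ A ∈ V, MvPolynomial.eval (fun p => A p.1 p.2) f = 0)) ∧
    Module.finrank ℂ (Submodule.span ℂ S) = 20 :=
  stmt_8_general X hX V hV S hS
end
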